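/- arXiv:math/0610942 — 2 statements merged into one kernel-verified Lean document; each statement's English description precedes it below -/
import Mathlib

section
/- Let d ≥ 4 be an integer, let ε > 0, and let C > 0. Then there exist exponents 1 ≤ p ≤ q ≤ r < ∞ with r/p > 1 + √2 − ε and q/p > 1 + (√2)/2 − ε, and a constant A > 0, such that for every nonnegative measurable function f on ℝ^d one has ‖T[f]‖_{L^q(L^r),K} ≤ A ‖f‖_{L^p(ℝ^d)}. -/
open MeasureTheory ENNReal

noncomputable section

/-- `ℝ^n` with the Euclidean structure. We model `ℝ^d` as `Euc (d-1) × ℝ`. -/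
abbrev Euc (n : ℕ) := EuclideanSpace ℝ (Fin n)

/-- The local x-ray transform: `T[f](ξ,x) = ∫_0^1 f (x + t(ξ + e_d)) dt`. -/
def xrayT {n : ℕ} (f : Euc n × ℝ → ℝ≥0∞) (ξ x : Euc n) : ℝ≥0∞ :=
  ∫⁻ t in Set.Ioc (0:ℝ) 1, f (x + t • ξ, t)

/-- The Kakeya-order mixed norm `‖T[f]‖_{L^q(L^r),K}`. -/
def kakeyaMixedNorm {n : ℕ} (q r C : ℝ) (f : Euc n × ℝ → ℝ≥0∞) : ℝ≥0∞ :=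
  (∫⁻ ξ in Metric.ball (0 : Euc n) C, (∫⁻ x, xrayT f ξ x ^ r) ^ (q / r)) ^ (1 / q)

/-- `‖f‖_{L^p}` for a nonnegative (extended-real-valued) function. -/
def lpNorm {α : Type*} [MeasureSpace α] (p : ℝ) (f : α → ℝ≥0∞) : ℝ≥0∞ :=
  (∫⁻ z, f z ^ p) ^ (1 / p)

/-!
Let `Ω` be a family of lines each of which spends time at least `δ` in `E`, with at most a measure
`m` of them in any direction. The estimate `|Ω|^(1-θ) ≲ |E| m^(1-2θ)`, with a loss polynomial in
`δ`, is elementary for `θ = 1/2`, since two points determine a line. It improves itself by a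
sums-differences argument. Cauchy–Schwarz over the points of `E` produces many pairs of lines of `Ω`
meeting at a common time. On such a pair, sample the first line at a varying time `q` and the second
at the time, a function of `q`, for which the line through the two sample points passes through a
point `S` independent of `q`. For fixed `S` the first sample point determines the second, and the
estimate already known applies to the lines of `Ω` and the points of `E` whose partner is again in
`E`. The exponent `θ` is thereby replaced by `(1 + θ) / (3 + θ)`, and this iteration has the fixed
point `√2 - 1`.

Applied to the lines with at least a given density in `E`, whose directions are sorted dyadically by
the number of such lines, the estimate with exponent `θ` yields a mixed-norm bound for indicator
functions with `q / r = β`, for any `β > θ / (1 - θ)`, and the latter tends to `√2 / 2` as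
`θ → √2 - 1`. Large powers `r` absorb the loss in `δ`. An arbitrarily small loss in `p` then leaves
room to sum over the dyadic level sets of a general function.
-/

open scoped NNReal

section Preliminaries

variable {α β : Type*} [MeasurableSpace α] [MeasurableSpace β] {μ : Measure α} {ν : Measure β}

lemma mul_measure_le_lintegral {f : α → ℝ≥0∞} {s : Set α} {c : ℝ≥0∞} (hs : MeasurableSet s)
    (h : ∀ a ∈ s, c ≤ f a) : c * μ s ≤ ∫⁻ a, f a ∂μ :=
  calc c * μ s = ∫⁻ _ in s, c ∂μ := (setLIntegral_const s c).symm
    _ ≤ ∫⁻ a in s, f a ∂μ := setLIntegral_mono' hs h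
    _ ≤ ∫⁻ a, f a ∂μ := setLIntegral_le_lintegral s f

lemma lintegral_le_mul_measure {f : α → ℝ≥0∞} {s : Set α} {c : ℝ≥0∞} (h : ∀ a ∈ s, f a ≤ c)
    (h₀ : ∀ a ∉ s, f a = 0) : ∫⁻ a, f a ∂μ ≤ c * μ s := by
  refine (lintegral_mono fun a => ?_).trans (lintegral_indicator_const_le s c)
  by_cases ha : a ∈ s
  · simpa only [Set.indicator_of_mem ha] using h a ha
  · simp only [h₀ a ha, zero_le]

lemma lintegral_measure_comm [SFinite μ] [SFinite ν] {Q : Set (α × β)} (hQ : MeasurableSet Q) :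
    ∫⁻ a, ν {b | (a, b) ∈ Q} ∂μ = ∫⁻ b, μ {a | (a, b) ∈ Q} ∂ν :=
  (Measure.prod_apply hQ).symm.trans (Measure.prod_apply_symm hQ)

lemma measure_prod_le_mul [SFinite μ] [SFinite ν] {Q : Set (α × β)} (hQ : MeasurableSet Q)
    {t : Set β} {c : ℝ≥0∞} (ht : ∀ z ∈ Q, z.2 ∈ t) (hc : ∀ b, μ {a | (a, b) ∈ Q} ≤ c) :
    (μ.prod ν) Q ≤ c * ν t := by
  rw [Measure.prod_apply_symm hQ]
  refine lintegral_le_mul_measure (fun b _ => hc b) fun b hb => ?_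
  rw [Set.eq_empty_of_forall_notMem (s := (fun a => (a, b)) ⁻¹' Q) fun a ha => hb (ht _ ha),
    measure_empty]

lemma mul_measure_le_mul_measure_of_fibers [SFinite μ] [SFinite ν] {Q : Set (α × β)}
    (hQ : MeasurableSet Q) {s : Set α} (hs : MeasurableSet s) {t : Set β} {l c : ℝ≥0∞}
    (ht : ∀ z ∈ Q, z.2 ∈ t) (hl : ∀ a ∈ s, l ≤ ν {b | (a, b) ∈ Q})
    (hc : ∀ b ∈ t, μ {a | (a, b) ∈ Q} ≤ c) : l * μ s ≤ c * ν t :=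
  calc l * μ s ≤ ∫⁻ a, ν {b | (a, b) ∈ Q} ∂μ := mul_measure_le_lintegral hs hl
    _ = (μ.prod ν) Q := (Measure.prod_apply hQ).symm
    _ ≤ c * ν t := measure_prod_le_mul hQ ht fun b => by
      by_cases hb : b ∈ t
      · exact hc b hb
      · rw [Set.eq_empty_of_forall_notMem (s := {a | (a, b) ∈ Q}) fun a ha => hb (ht _ ha),
          measure_empty]
        exact zero_le

lemma setLIntegral_le_measure_superlevel_add {f : α → ℝ≥0∞} (hf : Measurable f) (hf1 : ∀ a, f a ≤ 1)
    (s : Set α) (l : ℝ≥0∞) : ∫⁻ a in s, f a ∂μ ≤ μ (s ∩ {a | l ≤ f a}) + l * μ s := by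
  have hm : MeasurableSet {a | l ≤ f a} := measurableSet_le measurable_const hf
  calc ∫⁻ a in s, f a ∂μ ≤ ∫⁻ a in s, ({a | l ≤ f a}.indicator 1 a + l) ∂μ := by
        refine lintegral_mono fun a => ?_
        by_cases ha : l ≤ f a
        · rw [Set.indicator_of_mem (s := {a | l ≤ f a}) ha]
          exact (hf1 a).trans le_self_add
        · exact (not_le.mp ha).le.trans le_add_self
    _ = μ (s ∩ {a | l ≤ f a}) + l * μ s := by
        rw [lintegral_add_right _ measurable_const, setLIntegral_const, lintegral_indicator_one hm,
          Measure.restrict_apply hm, Set.inter_comm]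

variable (μ) in
lemma sq_lintegral_le {f : α → ℝ≥0∞} (hf : Measurable f) :
    (∫⁻ a, f a ∂μ) ^ 2 ≤ μ Set.univ * ∫⁻ a, f a ^ 2 ∂μ := by
  have holder := ENNReal.lintegral_mul_le_Lp_mul_Lq μ Real.HolderConjugate.two_two
    (aemeasurable_const (b := (1 : ℝ≥0∞))) hf.aemeasurable
  simp only [Pi.mul_apply, one_mul, ENNReal.rpow_two, one_pow, lintegral_one] at holder
  calc (∫⁻ a, f a ∂μ) ^ 2
      ≤ (μ Set.univ ^ (1 / 2 : ℝ) * (∫⁻ a, f a ^ 2 ∂μ) ^ (1 / 2 : ℝ)) ^ 2 := by gcongr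
    _ = μ Set.univ * ∫⁻ a, f a ^ 2 ∂μ := by
        rw [mul_pow, ← ENNReal.rpow_mul_natCast, ← ENNReal.rpow_mul_natCast]
        norm_num

lemma volume_lt_fiber_le {V : Type*} [MeasureSpace V] [SFinite (volume : Measure V)]
    {E : Set (V × ℝ)} (hE : MeasurableSet E) {δ M : ℝ≥0∞} (hM : M ≠ ⊤) (h : volume E ≤ δ * M) :
    volume {t : ℝ | M < volume {x | (x, t) ∈ E}} ≤ δ := by
  have hmeas : Measurable fun t : ℝ => volume {x | (x, t) ∈ E} :=
    measurable_measure_prodMk_right hE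
  have hint : ∫⁻ t : ℝ, volume {x | (x, t) ∈ E} ≤ δ * M :=
    (Measure.prod_apply_symm (μ := volume) (ν := volume) hE).symm.trans_le h
  rcases eq_or_ne M 0 with rfl | hM0
  · have hzero := (lintegral_eq_zero_iff hmeas).mp (le_zero_iff.mp (hint.trans_eq (mul_zero δ)))
    have hnull : volume {t : ℝ | 0 < volume {x | (x, t) ∈ E}} = 0 :=
      measure_mono_null (fun t ht => ne_of_gt ht) (ae_iff.mp hzero)
    exact hnull.trans_le zero_le
  · calc volume {t : ℝ | M < volume {x | (x, t) ∈ E}}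
        ≤ volume {t : ℝ | M ≤ volume {x | (x, t) ∈ E}} := measure_mono fun t (ht : M < _) => ht.le
      _ ≤ δ * M / M := (meas_ge_le_lintegral_div hmeas.aemeasurable hM0 hM).trans (by gcongr)
      _ = δ := ENNReal.mul_div_cancel_right hM0 hM

lemma volume_le_mul_volume_image {A : Set ℝ} {ψ : ℝ → ℝ} {K : ℝ≥0}
    (hψ : AntilipschitzWith K (A.domRestrict ψ)) : volume A ≤ K * volume (ψ '' A) := by
  have h := hψ.le_hausdorffMeasure_image (d := 1) zero_le_one Set.univ
  rwa [← isometry_subtype_coe.hausdorffMeasure_image (Or.inl zero_le_one), Set.image_univ,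
    Subtype.range_coe, ENNReal.rpow_one, Set.image_univ, Set.range_domRestrict,
    hausdorffMeasure_real] at h

lemma volume_sub_le_volume_diff_ball (T : Set ℝ) (s : ℝ) (c : ℝ≥0) :
    volume T - 2 * c ≤ volume (T \ Metric.ball s c) := by
  have hball : volume (Metric.ball s (c : ℝ)) = 2 * c := by
    rw [Real.volume_ball, ENNReal.ofReal_mul zero_le_two, ENNReal.ofReal_coe_nnreal,
      ENNReal.ofReal_ofNat]
  exact hball ▸ le_measure_sdiff

variable {V : Type*} [NormedAddCommGroup V] [NormedSpace ℝ V] [FiniteDimensional ℝ V]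
  [MeasurableSpace V] [BorelSpace V] (μ : Measure V) [μ.IsAddHaarMeasure]

lemma pow_finrank_mul_addHaar_preimage_affine {a : ℝ} (ha : a ≠ 0) (b : V) (A : Set V) :
    ENNReal.ofReal |a| ^ Module.finrank ℝ V * μ {x | b + a • x ∈ A} = μ A := by
  have hpre : {x | b + a • x ∈ A} = (a • ·) ⁻¹' ((b + ·) ⁻¹' A) := rfl
  rw [hpre, Measure.addHaar_preimage_smul μ ha, measure_preimage_add, ← mul_assoc,
    ← ENNReal.ofReal_pow (abs_nonneg a), ← ENNReal.ofReal_mul (by positivity), ← abs_pow, ← abs_mul,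
    mul_inv_cancel₀ (pow_ne_zero _ ha), abs_one, ENNReal.ofReal_one, one_mul]

lemma measurePreserving_shear (t : ℝ) :
    MeasurePreserving (fun g : V × V => (g.1 + t • g.2, g.2)) (μ.prod μ) (μ.prod μ) := by
  have hskew : MeasurePreserving (fun g : V × V => (g.1, g.2 + t • g.1)) (μ.prod μ) (μ.prod μ) :=
    (MeasurePreserving.id μ).skew_product (g := fun ξ x => x + t • ξ)
      (by simp only [Function.uncurry_def]; fun_prop)
      (Filter.Eventually.of_forall fun ξ => map_add_right_eq_self μ (t • ξ))
  exact Measure.measurePreserving_swap.comp (hskew.comp Measure.measurePreserving_swap)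

end Preliminaries

section Partner

lemma abs_sub_le_one_of_mem_Ioc {a b : ℝ} (ha : a ∈ Set.Ioc (0 : ℝ) 1)
    (hb : b ∈ Set.Ioc (0 : ℝ) 1) : |a - b| ≤ 1 :=
  abs_sub_le_iff.mpr ⟨by linarith [ha.2, hb.1], by linarith [hb.2, ha.1]⟩

/-- The time at which the second of two lines meeting at time `s` is sampled when the first is
sampled at time `q`. For lines `P + (t - s) ξ₁` and `P + (t - s) ξ₂`, the points at times `q` and
`partnerTime s y σ q` determine `P + σ ξ₁ + (y - s) ξ₂`; the factor relating them is
`1 - σ / (q - s)`. -/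
def partnerTime (s y σ q : ℝ) : ℝ := s + (y - s) / (1 - σ / (q - s))

/-- The admissible range of the parameter `σ` of `partnerTime`. -/
def shiftRange (c : ℝ) : Set ℝ := {σ | |σ| ∈ Set.Icc (c ^ 2) c⁻¹}

lemma measurableSet_shiftRange (c : ℝ) : MeasurableSet (shiftRange c) :=
  measurable_id.abs measurableSet_Icc

lemma volume_shiftRange_le {c : ℝ≥0} (hc : 0 < c) : volume (shiftRange c) ≤ 2 * (c : ℝ≥0∞)⁻¹ :=
  calc volume (shiftRange c) ≤ volume (Set.Icc (-(c : ℝ)⁻¹) (c : ℝ)⁻¹) :=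
        measure_mono fun _ hσ => abs_le.mp hσ.2
    _ = 2 * (c : ℝ≥0∞)⁻¹ := by
        rw [Real.volume_Icc, sub_neg_eq_add, ← two_mul, ENNReal.ofReal_mul zero_le_two,
          ENNReal.ofReal_inv_of_pos (by exact_mod_cast hc), ENNReal.ofReal_coe_nnreal,
          ENNReal.ofReal_ofNat]

@[fun_prop]
lemma measurable_partnerTime {α : Type*} [MeasurableSpace α] {s y σ q : α → ℝ} (hs : Measurable s)
    (hy : Measurable y) (hσ : Measurable σ) (hq : Measurable q) :
    Measurable fun a => partnerTime (s a) (y a) (σ a) (q a) := by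
  unfold partnerTime
  fun_prop

lemma partnerTime_shift {s y q u : ℝ} (hq : q - s ≠ 0) (hy : y - s ≠ 0) (hu : u - s ≠ 0) :
    partnerTime s y ((q - s) * ((u - y) / (u - s))) q = u := by
  have hk : 1 - (u - y) / (u - s) = (y - s) / (u - s) := by field_simp; ring
  rw [partnerTime, mul_div_cancel_left₀ _ hq, hk, div_div_cancel₀ hy]
  ring

variable {c : ℝ≥0} {s y q : ℝ} {X Y : Set ℝ}

lemma antilipschitzWith_shift (hc : 0 < c) (hs : s ∈ Set.Ioc (0 : ℝ) 1)
    (hq : c ≤ |q - s|) (hy : c ≤ |y - s|) (hY : Y ⊆ Set.Ioc 0 1 \ Metric.ball s c) :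
    AntilipschitzWith (c ^ 2)⁻¹ (Y.domRestrict fun u => (q - s) * ((u - y) / (u - s))) := by
  have hfar : ∀ u ∈ Y, c ≤ |u - s| := fun u hu => not_lt.mp (hY hu).2
  have hc' : (0 : ℝ) < c := hc
  refine AntilipschitzWith.of_le_mul_dist fun ⟨u, hu⟩ ⟨v, hv⟩ => ?_
  have hus : 0 < |u - s| := hc'.trans_le (hfar u hu)
  have hvs : 0 < |v - s| := hc'.trans_le (hfar v hv)
  have hus₀ := abs_pos.mp hus
  have hvs₀ := abs_pos.mp hvs
  have hdiff : (q - s) * ((u - y) / (u - s)) - (q - s) * ((v - y) / (v - s)) =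
      (q - s) * (y - s) * (u - v) / ((u - s) * (v - s)) := by field_simp; ring
  have hden : |u - s| * |v - s| ≤ 1 := mul_le_one₀ (abs_sub_le_one_of_mem_Ioc (hY hu).1 hs)
    hvs.le (abs_sub_le_one_of_mem_Ioc (hY hv).1 hs)
  have hnum : (c : ℝ) ^ 2 ≤ |q - s| * |y - s| := by rw [sq]; gcongr
  simp only [Subtype.dist_eq, Real.dist_eq, Set.domRestrict_apply, NNReal.coe_inv, NNReal.coe_pow]
  rw [le_inv_mul_iff₀ (by positivity), hdiff, abs_div, abs_mul, abs_mul, abs_mul]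
  calc (c : ℝ) ^ 2 * |u - v| ≤ |q - s| * |y - s| * |u - v| := by gcongr
    _ ≤ |q - s| * |y - s| * |u - v| / (|u - s| * |v - s|) :=
        le_div_self (by positivity) (by positivity) hden

lemma image_shift_subset (hc : 0 < c) (hs : s ∈ Set.Ioc (0 : ℝ) 1)
    (hq : q ∈ Set.Ioc 0 1 \ Metric.ball s c) (hy : y ∈ Y)
    (hY : Y ⊆ Set.Ioc 0 1 \ Metric.ball s c) :
    (fun u => (q - s) * ((u - y) / (u - s))) '' (Y \ Metric.ball y c) ⊆
      {σ | σ ∈ shiftRange c ∧ partnerTime s y σ q ∈ Y} := by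
  have hfar : ∀ u ∈ Set.Ioc 0 1 \ Metric.ball s (c : ℝ), c ≤ |u - s| := fun u hu => not_lt.mp hu.2
  have hc' : (0 : ℝ) < c := hc
  rintro _ ⟨u, ⟨hu, huy⟩, rfl⟩
  replace huy : c ≤ |u - y| := not_lt.mp huy
  have hus := hfar u (hY hu)
  have hqs := hfar q hq
  have hus_pos : 0 < |u - s| := hc'.trans_le hus
  refine ⟨?_, ?_⟩
  · change |(q - s) * ((u - y) / (u - s))| ∈ Set.Icc ((c : ℝ) ^ 2) (c : ℝ)⁻¹
    rw [abs_mul, abs_div]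
    constructor
    · calc (c : ℝ) ^ 2 = c * c := sq _
        _ ≤ |q - s| * (|u - y| / |u - s|) := by
          gcongr
          exact huy.trans (le_div_self (abs_nonneg _) hus_pos
            (abs_sub_le_one_of_mem_Ioc (hY hu).1 hs))
    · calc |q - s| * (|u - y| / |u - s|) ≤ 1 * (1 / c) := by
            gcongr
            exacts [abs_sub_le_one_of_mem_Ioc hq.1 hs,
              abs_sub_le_one_of_mem_Ioc (hY hu).1 (hY hy).1]
        _ = (c : ℝ)⁻¹ := by rw [one_mul, one_div]
  · rw [partnerTime_shift (abs_pos.mp (hc'.trans_le hqs))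
      (abs_pos.mp (hc'.trans_le (hfar y (hY hy)))) (abs_pos.mp hus_pos)]
    exact hu

lemma le_volume_partnerTime_mem (hc : 0 < c) (hs : s ∈ Set.Ioc (0 : ℝ) 1)
    (hq : q ∈ Set.Ioc 0 1 \ Metric.ball s c) (hy : y ∈ Y)
    (hY : Y ⊆ Set.Ioc 0 1 \ Metric.ball s c) :
    c ^ 2 * (volume Y - 2 * c) ≤ volume {σ | σ ∈ shiftRange c ∧ partnerTime s y σ q ∈ Y} := by
  set A : Set ℝ := Y \ Metric.ball y c
  have himage := volume_le_mul_volume_image (antilipschitzWith_shift hc hs (not_lt.mp hq.2)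
    (not_lt.mp (hY hy).2) (Set.sdiff_subset.trans hY : A ⊆ _))
  have hc2 : ((c ^ 2 : ℝ≥0) : ℝ≥0∞) ≠ 0 := by exact_mod_cast (pow_pos hc 2).ne'
  calc (c : ℝ≥0∞) ^ 2 * (volume Y - 2 * c) ≤ (c ^ 2 : ℝ≥0) * volume A := by
        push_cast
        gcongr
        exact volume_sub_le_volume_diff_ball Y y c
    _ ≤ (c ^ 2 : ℝ≥0) * (((c ^ 2)⁻¹ : ℝ≥0) *
          volume ((fun u => (q - s) * ((u - y) / (u - s))) '' A)) := by gcongr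
    _ = volume ((fun u => (q - s) * ((u - y) / (u - s))) '' A) := by
        rw [ENNReal.coe_inv (pow_pos hc 2).ne', ENNReal.mul_inv_cancel_left hc2 coe_ne_top]
    _ ≤ _ := measure_mono (image_shift_subset hc hs hq hy hY)

/-- The times in `X` whose partner lies in `Y`. -/
def overlap (s : ℝ) (X Y : Set ℝ) (p : ℝ × ℝ) : Set ℝ := {q | q ∈ X ∧ partnerTime s p.1 p.2 q ∈ Y}

lemma measurable_volume_overlap (s : ℝ) (hX : MeasurableSet X) (hY : MeasurableSet Y) :
    Measurable fun p => volume (overlap s X Y p) :=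
  measurable_measure_prodMk_left (s := {z : (ℝ × ℝ) × ℝ | z.2 ∈ overlap s X Y z.1})
    ((measurable_snd hX).inter
      ((by fun_prop : Measurable fun z : (ℝ × ℝ) × ℝ => partnerTime s z.1.1 z.1.2 z.2) hY))

lemma mul_le_setLIntegral_volume_overlap (hc : 0 < c) (hs : s ∈ Set.Ioc (0 : ℝ) 1)
    (hXm : MeasurableSet X) (hYm : MeasurableSet Y) (hX : X ⊆ Set.Ioc 0 1 \ Metric.ball s c)
    (hY : Y ⊆ Set.Ioc 0 1 \ Metric.ball s c) :
    c ^ 2 * (volume Y - 2 * c) * volume X * volume Y ≤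
      ∫⁻ p in Y ×ˢ shiftRange c, volume (overlap s X Y p) := by
  rw [Measure.volume_eq_prod, ← Measure.prod_restrict,
    lintegral_prod _ (measurable_volume_overlap s hXm hYm).aemeasurable, ← setLIntegral_const]
  refine setLIntegral_mono' hYm fun y hy => ?_
  have hQ : MeasurableSet {z : ℝ × ℝ | z.2 ∈ overlap s X Y (y, z.1)} :=
    (measurable_snd hXm).inter
      ((by fun_prop : Measurable fun z : ℝ × ℝ => partnerTime s y z.1 z.2) hYm)
  calc c ^ 2 * (volume Y - 2 * c) * volume X
      ≤ ∫⁻ q, volume.restrict (shiftRange c) {σ | q ∈ overlap s X Y (y, σ)} := by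
        refine mul_measure_le_lintegral hXm fun q hq => ?_
        refine (le_volume_partnerTime_mem hc hs (hX hq) hy hY).trans ?_
        rw [Measure.restrict_apply' (measurableSet_shiftRange c)]
        exact measure_mono fun σ hσ => ⟨⟨hq, hσ.2⟩, hσ.1⟩
    _ = ∫⁻ σ in shiftRange c, volume (overlap s X Y (y, σ)) := (lintegral_measure_comm hQ).symm

variable {δ : ℝ≥0}

lemma two_mul_coe_le_one (hδ : δ ≤ 1 / 2) : (2 : ℝ≥0∞) * δ ≤ 1 := by
  have h : 2 * δ ≤ 1 := by simpa using mul_le_mul_of_nonneg_left hδ (zero_le (a := (2 : ℝ≥0)))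
  exact_mod_cast h

lemma pow_succ_le_sub_two_mul_pow_four (hδ : δ ≤ 1 / 2) {k : ℕ} (hk : k ≤ 2) {v : ℝ≥0∞}
    (hv : (δ : ℝ≥0∞) ^ k ≤ v) : (δ : ℝ≥0∞) ^ (k + 1) ≤ v - 2 * ((δ ^ 4 : ℝ≥0) : ℝ≥0∞) := by
  have hδ1 : δ ≤ 1 := hδ.trans (by norm_num)
  have hsum : δ ^ (k + 1) + 2 * δ ^ 4 ≤ δ ^ k :=
    calc δ ^ (k + 1) + 2 * δ ^ 4 ≤ δ ^ (k + 1) + 2 * δ ^ (k + 2) := by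
          gcongr δ ^ (k + 1) + 2 * ?_
          exact pow_le_pow_of_le_one zero_le hδ1 (by omega)
      _ = δ ^ k * (δ + 2 * δ ^ 2) := by ring
      _ ≤ δ ^ k * (1 / 2 + 2 * (1 / 2) ^ 2) := by gcongr
      _ = δ ^ k := by norm_num
  refine ENNReal.le_sub_of_add_le_right (by finiteness) (le_trans ?_ hv)
  exact_mod_cast hsum

lemma pow_five_mul_volume_prod_shiftRange_le (hδ₀ : 0 < δ) (hδ : δ ≤ 1 / 2) {T : Set ℝ}
    (hT : T ⊆ Set.Ioc 0 1) : (δ : ℝ≥0∞) ^ 5 * volume (T ×ˢ shiftRange (δ ^ 4 : ℝ≥0)) ≤ 1 :=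
  calc (δ : ℝ≥0∞) ^ 5 * volume (T ×ˢ shiftRange (δ ^ 4 : ℝ≥0))
      ≤ δ ^ 5 * (1 * (2 * ((δ ^ 4 : ℝ≥0) : ℝ≥0∞)⁻¹)) := by
        rw [Measure.volume_eq_prod, Measure.prod_prod]
        gcongr
        · exact (measure_mono hT).trans_eq (by simp)
        · exact volume_shiftRange_le (pow_pos hδ₀ 4)
    _ = 2 * δ * ((δ ^ 4 : ℝ≥0) * ((δ ^ 4 : ℝ≥0) : ℝ≥0∞)⁻¹) := by
        push_cast
        ring
    _ ≤ 1 := mul_le_one' (two_mul_coe_le_one hδ) (ENNReal.mul_inv_le_one _)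

lemma pow_le_volume_setOf_le_volume_overlap (hδ₀ : 0 < δ) (hδ : δ ≤ 1 / 2)
    (hs : s ∈ Set.Ioc (0 : ℝ) 1) (hXm : MeasurableSet X) (hYm : MeasurableSet Y)
    (hX : X ⊆ Set.Ioc 0 1 \ Metric.ball s (δ ^ 4 : ℝ≥0))
    (hY : Y ⊆ Set.Ioc 0 1 \ Metric.ball s (δ ^ 4 : ℝ≥0))
    (hXv : (δ : ℝ≥0∞) ^ 2 ≤ volume X) (hYv : (δ : ℝ≥0∞) ^ 2 ≤ volume Y) :
    (δ : ℝ≥0∞) ^ 16 ≤ volume {p | p ∈ Y ×ˢ shiftRange (δ ^ 4 : ℝ≥0) ∧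
      (δ : ℝ≥0∞) ^ 21 ≤ volume (overlap s X Y p)} := by
  have hδ' := two_mul_coe_le_one hδ
  have hX1 : volume X ≤ 1 := by
    simpa using measure_mono (μ := volume) (hX.trans Set.sdiff_subset)
  have hlower : (δ : ℝ≥0∞) ^ 15 ≤ ∫⁻ p in Y ×ˢ shiftRange (δ ^ 4 : ℝ≥0),
      volume (overlap s X Y p) :=
    calc (δ : ℝ≥0∞) ^ 15 = ((δ ^ 4 : ℝ≥0) : ℝ≥0∞) ^ 2 * δ ^ 3 * δ ^ 2 * δ ^ 2 := by
          push_cast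
          ring
      _ ≤ _ := by
          gcongr
          exact pow_succ_le_sub_two_mul_pow_four hδ le_rfl hYv
      _ ≤ _ := mul_le_setLIntegral_volume_overlap (pow_pos hδ₀ 4) hs hXm hYm hX hY
  have hdomain : (δ : ℝ≥0∞) ^ 21 * volume (Y ×ˢ shiftRange (δ ^ 4 : ℝ≥0)) ≤ δ ^ 16 := by
    rw [pow_add _ 16 5, mul_assoc]
    exact mul_le_of_le_one_right' (pow_five_mul_volume_prod_shiftRange_le hδ₀ hδ
      (hY.trans Set.sdiff_subset))
  have hpopular := setLIntegral_le_measure_superlevel_add (μ := volume)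
    (measurable_volume_overlap s hXm hYm)
    (fun p => (measure_mono (Set.sep_subset _ _)).trans hX1) (Y ×ˢ shiftRange (δ ^ 4 : ℝ≥0))
    ((δ : ℝ≥0∞) ^ 21)
  refine ENNReal.le_of_add_le_add_right (a := (δ : ℝ≥0∞) ^ 16) (by finiteness) ?_
  calc (δ : ℝ≥0∞) ^ 16 + (δ : ℝ≥0∞) ^ 16 = 2 * δ * (δ : ℝ≥0∞) ^ 15 := by ring
    _ ≤ 1 * (δ : ℝ≥0∞) ^ 15 := by gcongr
    _ ≤ _ := by
        rw [one_mul]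
        exact hlower.trans (hpopular.trans (by gcongr; rfl))

end Partner

section Incidence

variable {V : Type*} [NormedAddCommGroup V] [NormedSpace ℝ V]

/-- The times `t ∈ (0, 1]` at which the line `t ↦ x + t ξ`, encoded as `g = (x, ξ)`, is in `E`,
a subset of space-time `V × ℝ`. -/
def lineTimes (E : Set (V × ℝ)) (g : V × V) : Set ℝ :=
  {t | t ∈ Set.Ioc 0 1 ∧ (g.1 + t • g.2, t) ∈ E}

/-- The line with direction `η` that meets the line `g` at time `s`. -/
def meetingLine (s : ℝ) (g : V × V) (η : V) : V × V := (g.1 + s • (g.2 - η), η)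

/-- The pairs of lines of `Ω` meeting at time `s`, the second one being recorded by its direction
only. -/
def concurrentPairs (Ω : Set (V × V)) (s : ℝ) : Set ((V × V) × V) :=
  {z | z.1 ∈ Ω ∧ meetingLine s z.1 z.2 ∈ Ω}

variable [FiniteDimensional ℝ V] [MeasureSpace V] [BorelSpace V]

lemma measurableSet_mem_lineTimes {E : Set (V × ℝ)} (hE : MeasurableSet E) :
    MeasurableSet {z : (V × V) × ℝ | z.2 ∈ lineTimes E z.1} :=
  (measurable_snd measurableSet_Ioc).inter
    ((by fun_prop : Measurable fun z : (V × V) × ℝ => (z.1.1 + z.2 • z.1.2, z.2)) hE)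

lemma measurableSet_lineTimes {E : Set (V × ℝ)} (hE : MeasurableSet E) (g : V × V) :
    MeasurableSet (lineTimes E g) :=
  (by fun_prop : Measurable fun t : ℝ => (g, t)) (measurableSet_mem_lineTimes hE)

@[fun_prop]
lemma measurable_meetingLine (s : ℝ) :
    Measurable fun z : (V × V) × V => meetingLine s z.1 z.2 := by
  unfold meetingLine
  fun_prop

lemma measurableSet_concurrentPairs {Ω : Set (V × V)} (hΩ : MeasurableSet Ω) (s : ℝ) :
    MeasurableSet (concurrentPairs Ω s) :=
  (measurable_fst hΩ).inter (measurable_meetingLine s hΩ)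

/-- The measure of the set of directions of the lines of `Ω` through the space-time point `z`. -/
def pencil (Ω : Set (V × V)) (z : V × ℝ) : ℝ≥0∞ := volume {ξ | (z.1 - z.2 • ξ, ξ) ∈ Ω}

variable [(volume : Measure V).IsAddHaarMeasure] {E : Set (V × ℝ)} {Ω : Set (V × V)}

lemma measurable_pencil (hΩ : MeasurableSet Ω) : Measurable (pencil Ω) :=
  measurable_measure_prodMk_left
    ((by fun_prop : Measurable fun p : (V × ℝ) × V => (p.1.1 - p.1.2 • p.2, p.2)) hΩ)

lemma lintegral_volume_lineTimes (hE : MeasurableSet E) (hΩ : MeasurableSet Ω) :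
    ∫⁻ g in Ω, volume (lineTimes E g) =
      ∫⁻ z in E ∩ Prod.snd ⁻¹' Set.Ioc 0 1, pencil Ω z := by
  set E' : Set (V × ℝ) := E ∩ Prod.snd ⁻¹' Set.Ioc 0 1
  have hE' : MeasurableSet E' := hE.inter (measurable_snd measurableSet_Ioc)
  have hslice (t : ℝ) : (volume : Measure (V × V)).restrict Ω {g | t ∈ lineTimes E g} =
      ∫⁻ P, E'.indicator (pencil Ω) (P, t) := by
    set A : Set (V × V) := {p | (p.1, t) ∈ E' ∧ (p.1 - t • p.2, p.2) ∈ Ω}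
    have hA : MeasurableSet A :=
      ((by fun_prop : Measurable fun p : V × V => (p.1, t)) hE').inter
        ((by fun_prop : Measurable fun p : V × V => (p.1 - t • p.2, p.2)) hΩ)
    have hpre : {g | t ∈ lineTimes E g} ∩ Ω = (fun g : V × V => (g.1 + t • g.2, g.2)) ⁻¹' A := by
      ext g
      simp only [lineTimes, A, E', Set.mem_inter_iff, Set.mem_ofPred_eq, Set.mem_preimage,
        add_sub_cancel_right, Prod.mk.eta]
      tauto
    rw [Measure.restrict_apply' hΩ, hpre, Measure.volume_eq_prod,
      (measurePreserving_shear volume t).measure_preimage hA.nullMeasurableSet,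
      Measure.prod_apply hA]
    refine lintegral_congr fun P => ?_
    by_cases hP : (P, t) ∈ E'
    · simp [A, hP, pencil]
    · simp [A, hP]
  calc ∫⁻ g in Ω, volume (lineTimes E g)
      = ∫⁻ t, (volume : Measure (V × V)).restrict Ω {g | t ∈ lineTimes E g} :=
        lintegral_measure_comm (measurableSet_mem_lineTimes hE)
    _ = ∫⁻ t, ∫⁻ P, E'.indicator (pencil Ω) (P, t) := lintegral_congr hslice
    _ = ∫⁻ z in E', pencil Ω z := by
        rw [← lintegral_indicator hE', Measure.volume_eq_prod,
          lintegral_prod_symm' _ ((measurable_pencil hΩ).indicator hE')]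

lemma lintegral_pencil_sq (hΩ : MeasurableSet Ω) (s : ℝ) :
    ∫⁻ P, pencil Ω (P, s) ^ 2 = volume (concurrentPairs Ω s) := by
  set N : V → Set V := fun P => {ξ | (P - s • ξ, ξ) ∈ Ω}
  have hNm (P : V) : MeasurableSet (N P) :=
    (by fun_prop : Measurable fun ξ : V => (P - s • ξ, ξ)) hΩ
  have hQ : MeasurableSet {z : (V × V) × V | z.1.2 ∈ N z.1.1 ∧ z.2 ∈ N z.1.1} :=
    ((by fun_prop : Measurable fun z : (V × V) × V => (z.1.1 - s • z.1.2, z.1.2)) hΩ).inter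
      ((by fun_prop : Measurable fun z : (V × V) × V => (z.1.1 - s • z.2, z.2)) hΩ)
  have hF : Measurable fun p : V × V => volume {η | p.2 ∈ N p.1 ∧ η ∈ N p.1} :=
    measurable_measure_prodMk_left hQ
  have hcp (g : V × V) : {η | (g, η) ∈ concurrentPairs Ω s} =
      {η | g.2 ∈ N (g.1 + s • g.2) ∧ η ∈ N (g.1 + s • g.2)} := by
    ext η
    simp only [concurrentPairs, meetingLine, N, Set.mem_ofPred_eq, Prod.mk.eta,
      smul_sub, add_sub_assoc, sub_self, add_zero]
  calc ∫⁻ P, pencil Ω (P, s) ^ 2 = ∫⁻ P, ∫⁻ ξ, volume {η | ξ ∈ N P ∧ η ∈ N P} := by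
        refine lintegral_congr fun P => ?_
        have hsq : pencil Ω (P, s) ^ 2 = volume (N P ×ˢ N P) := by
          rw [Measure.volume_eq_prod, Measure.prod_prod, sq]
          rfl
        rw [hsq, Measure.volume_eq_prod, Measure.prod_apply ((hNm P).prod (hNm P))]
        rfl
    _ = ∫⁻ g : V × V, volume {η | (g, η) ∈ concurrentPairs Ω s} := by
        simp only [hcp]
        rw [Measure.volume_eq_prod,
          (measurePreserving_shear volume s).lintegral_comp hF, lintegral_prod _ hF.aemeasurable]
    _ = volume (concurrentPairs Ω s) :=
        (Measure.prod_apply (measurableSet_concurrentPairs hΩ s)).symm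

/-- Cauchy–Schwarz over the points of `E`. -/
lemma sq_mul_volume_le_volume_mul_lintegral_concurrentPairs (hE : MeasurableSet E)
    (hΩ : MeasurableSet Ω) {l : ℝ≥0∞} (hl : ∀ g ∈ Ω, l ≤ volume (lineTimes E g)) :
    (l * volume Ω) ^ 2 ≤ volume E * ∫⁻ s in Set.Ioc (0 : ℝ) 1, volume (concurrentPairs Ω s) := by
  have hpm := measurable_pencil hΩ
  calc (l * volume Ω) ^ 2 ≤ (∫⁻ g in Ω, volume (lineTimes E g)) ^ 2 := by
        rw [← setLIntegral_const]
        gcongr 1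
        exact setLIntegral_mono' hΩ hl
    _ ≤ volume (E ∩ Prod.snd ⁻¹' Set.Ioc 0 1) *
          ∫⁻ z in E ∩ Prod.snd ⁻¹' Set.Ioc 0 1, pencil Ω z ^ 2 := by
        rw [lintegral_volume_lineTimes hE hΩ]
        simpa only [Measure.restrict_apply_univ] using
          sq_lintegral_le (volume.restrict (E ∩ Prod.snd ⁻¹' Set.Ioc 0 1)) hpm
    _ ≤ volume E * ∫⁻ z in Set.univ ×ˢ Set.Ioc 0 1, pencil Ω z ^ 2 := by
        gcongr
        · exact Set.inter_subset_left
        · exact fun z hz => ⟨trivial, hz.2⟩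
    _ = volume E * ∫⁻ s in Set.Ioc (0 : ℝ) 1, volume (concurrentPairs Ω s) := by
        rw [Measure.volume_eq_prod, ← Measure.prod_restrict,
          lintegral_prod_symm' _ (hpm.pow_const 2), Measure.restrict_univ]
        simp only [lintegral_pencil_sq hΩ]

end Incidence

section DensityEstimate

variable {V : Type*} [NormedAddCommGroup V] [NormedSpace ℝ V] [FiniteDimensional ℝ V]
  [MeasureSpace V] [BorelSpace V]

lemma coe_pow_finrank_mul_addHaar_preimage_affine_le (μ : Measure V) [μ.IsAddHaarMeasure]
    {c : ℝ≥0} (hc : 0 < c) {a : ℝ} (ha : c ≤ |a|) (b : V) (A : Set V) :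
    (c : ℝ≥0∞) ^ Module.finrank ℝ V * μ {x | b + a • x ∈ A} ≤ μ A := by
  have ha₀ : a ≠ 0 := abs_pos.mp ((NNReal.coe_pos.mpr hc).trans_le ha)
  rw [← pow_finrank_mul_addHaar_preimage_affine μ ha₀ b A, ← ENNReal.ofReal_coe_nnreal]
  gcongr

lemma pow_finrank_mul_volume_lines_through_slices_le [(volume : Measure V).IsAddHaarMeasure]
    {c : ℝ≥0} (hc : 0 < c) {s t : ℝ} (hst : c ≤ |t - s|) {A B : Set V} (hA : MeasurableSet A)
    (hB : MeasurableSet B) :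
    (c : ℝ≥0∞) ^ Module.finrank ℝ V *
      volume {g : V × V | g.1 + s • g.2 ∈ A ∧ g.1 + t • g.2 ∈ B} ≤ volume A * volume B := by
  set Q : Set (V × V) := {p | p.1 ∈ A ∧ p.1 + (t - s) • p.2 ∈ B}
  have hQ : MeasurableSet Q := (measurable_fst hA).inter
    ((by fun_prop : Measurable fun p : V × V => p.1 + (t - s) • p.2) hB)
  have hpre : {g : V × V | g.1 + s • g.2 ∈ A ∧ g.1 + t • g.2 ∈ B} =
      (fun g : V × V => (g.1 + s • g.2, g.2)) ⁻¹' Q := by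
    ext g
    simp only [Q, Set.mem_preimage, Set.mem_ofPred_eq, sub_smul, add_assoc, add_sub_cancel]
  rw [hpre, Measure.volume_eq_prod,
    (measurePreserving_shear volume s).measure_preimage hQ.nullMeasurableSet,
    Measure.prod_apply hQ, ← lintegral_const_mul _ (measurable_measure_prodMk_left hQ), mul_comm]
  refine lintegral_le_mul_measure (fun P hP => ?_) fun P hP => ?_
  · simpa only [Q, Set.preimage_ofPred_eq, Set.mem_ofPred_eq, hP, true_and] using
      coe_pow_finrank_mul_addHaar_preimage_affine_le volume hc hst P B
  · simp only [Q, Set.preimage_ofPred_eq, hP, false_and, Set.ofPred_false,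
      measure_empty, mul_zero]

lemma le_rpow_of_le_one {x : ℝ≥0∞} (hx : x ≤ 1) {θ : ℝ} (hθ : θ ≤ 1) : x ≤ x ^ θ := by
  simpa only [ENNReal.rpow_one] using ENNReal.rpow_le_rpow_of_exponent_ge hx hθ

lemma pow_mul_div_rpow_le {x : ℝ≥0∞} (hx₀ : x ≠ 0) (hx : x ≤ 1) (v : ℝ≥0∞) {κ : ℝ} (hκ : 0 ≤ κ)
    {k : ℕ} (hk : κ ≤ k) : x ^ k * (v / x) ^ κ ≤ v ^ κ :=
  calc x ^ k * (v / x) ^ κ ≤ x ^ κ * (v / x) ^ κ := by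
        rw [← ENNReal.rpow_natCast]
        gcongr ?_ * _
        exact ENNReal.rpow_le_rpow_of_exponent_ge hx hk
    _ = v ^ κ := by
        rw [← ENNReal.mul_rpow_of_nonneg _ _ hκ,
          ENNReal.mul_div_cancel hx₀ (ne_top_of_le_ne_top one_ne_top hx)]

variable (V) in
/-- The incidence estimate with exponent `θ`, with polynomial loss of order `N` in the density `δ`:
if every line of `Ω` spends time at least `δ` in `E`, and at most a measure `m` of the lines of `Ω`
have any given direction, then `|Ω|^(1-θ) ≲ |E| m^(1-2θ)`. -/
def DensityEstimate (θ : ℝ) (N : ℕ) : Prop :=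
  ∀ δ : ℝ≥0, 0 < δ → δ ≤ 1 / 2 → ∀ (E : Set (V × ℝ)) (Ω : Set (V × V)) (m : ℝ≥0∞),
    MeasurableSet E → MeasurableSet Ω → volume E ≠ ⊤ →
    (∀ g ∈ Ω, δ ≤ volume (lineTimes E g)) → (∀ ξ, volume {x | (x, ξ) ∈ Ω} ≤ m) →
    (δ : ℝ≥0∞) ^ N * volume Ω ^ (1 - θ) ≤ volume E * m ^ (1 - 2 * θ)

lemma measurableSet_separated (c : ℝ≥0) :
    MeasurableSet {p : ℝ × ℝ | p.2 ∉ Metric.ball p.1 (c : ℝ)} :=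
  (measurableSet_lt (by fun_prop) measurable_const).compl

lemma mul_sub_le_volume_separated_pairs {T : Set ℝ} (hT : MeasurableSet T) {l c : ℝ≥0}
    (hl : l ≤ volume T) :
    l * (l - 2 * c) ≤ volume {p : ℝ × ℝ | p.1 ∈ T ∧ p.2 ∈ T \ Metric.ball p.1 c} := by
  have hR : MeasurableSet {p : ℝ × ℝ | p.1 ∈ T ∧ p.2 ∈ T \ Metric.ball p.1 c} :=
    (measurable_fst hT).inter ((measurable_snd hT).inter (measurableSet_separated c))
  rw [mul_comm, Measure.volume_eq_prod, Measure.prod_apply hR]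
  calc (l - 2 * c) * (l : ℝ≥0∞) ≤ (l - 2 * c) * volume T := by gcongr
    _ ≤ _ := by
        refine mul_measure_le_lintegral hT fun t ht => (tsub_le_tsub_right hl _).trans ?_
        exact (volume_sub_le_volume_diff_ball _ t c).trans (measure_mono fun u hu => ⟨ht, hu⟩)

variable [(volume : Measure V).IsAddHaarMeasure]

lemma pow_mul_volume_le_volume_sq {E : Set (V × ℝ)} {Ω : Set (V × V)}
    (hE : MeasurableSet E) (hΩ : MeasurableSet Ω) {l c : ℝ≥0} (hc : 0 < c)
    (hdense : ∀ g ∈ Ω, l ≤ volume (lineTimes E g)) :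
    (c : ℝ≥0∞) ^ Module.finrank ℝ V * (l * (l - 2 * c) * volume Ω) ≤ volume E ^ 2 := by
  set R : Set ((V × V) × (ℝ × ℝ)) :=
    {z | z.2.1 ∈ lineTimes E z.1 ∧ z.2.2 ∈ lineTimes E z.1 \ Metric.ball z.2.1 c}
  have hlines := measurableSet_mem_lineTimes hE
  have hR : MeasurableSet R :=
    ((by fun_prop : Measurable fun z : (V × V) × (ℝ × ℝ) => (z.1, z.2.1)) hlines).inter
      (((by fun_prop : Measurable fun z : (V × V) × (ℝ × ℝ) => (z.1, z.2.2)) hlines).inter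
        (measurable_snd (measurableSet_separated c)))
  have hslice (t : ℝ) : MeasurableSet {x : V | (x, t) ∈ E} :=
    (by fun_prop : Measurable fun x : V => (x, t)) hE
  have hslicem : Measurable fun t : ℝ => volume {x : V | (x, t) ∈ E} :=
    measurable_measure_prodMk_right hE
  have hvolE : ∫⁻ t : ℝ, volume {x : V | (x, t) ∈ E} = volume E :=
    (Measure.prod_apply_symm (μ := volume) (ν := volume) hE).symm
  have hlower : l * (l - 2 * c) * volume Ω ≤ ∫⁻ g, volume {p | (g, p) ∈ R} := by
    refine mul_measure_le_lintegral hΩ fun g hg => ?_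
    exact mul_sub_le_volume_separated_pairs (measurableSet_lineTimes hE g) (hdense g hg)
  calc (c : ℝ≥0∞) ^ Module.finrank ℝ V * (l * (l - 2 * c) * volume Ω)
      ≤ c ^ Module.finrank ℝ V * ∫⁻ p : ℝ × ℝ, volume {g | (g, p) ∈ R} := by
        rw [← lintegral_measure_comm hR]
        gcongr
    _ ≤ ∫⁻ p : ℝ × ℝ, volume {x : V | (x, p.1) ∈ E} * volume {x : V | (x, p.2) ∈ E} := by
        refine (lintegral_const_mul_le _ _).trans (lintegral_mono fun p => ?_)
        by_cases hp : c ≤ |p.2 - p.1|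
        · refine le_trans ?_
            (pow_finrank_mul_volume_lines_through_slices_le hc hp (hslice p.1) (hslice p.2))
          gcongr
          exact fun hg => ⟨hg.1.2, hg.2.1.2⟩
        · rw [Set.eq_empty_of_forall_notMem (s := {g | (g, p) ∈ R}) fun g hg =>
            hg.2.2 (not_le.mp hp), measure_empty, mul_zero]
          exact zero_le
    _ = volume E ^ 2 := by
        rw [Measure.volume_eq_prod, lintegral_prod_mul hslicem.aemeasurable hslicem.aemeasurable,
          hvolE, sq]

lemma densityEstimate_half :
    DensityEstimate V (1 / 2) (4 * Module.finrank ℝ V + 3) := by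
  intro δ hδ₀ hδ E Ω m hE hΩ _ hdense _
  have hsq : (δ : ℝ≥0∞) ^ (4 * Module.finrank ℝ V + 3) * volume Ω ≤ volume E ^ 2 := by
    refine le_trans ?_ (pow_mul_volume_le_volume_sq hE hΩ (pow_pos hδ₀ 4) hdense)
    rw [pow_add, pow_mul, mul_assoc, ENNReal.coe_pow, pow_succ' _ 2]
    gcongr
    exact pow_succ_le_sub_two_mul_pow_four hδ one_le_two (pow_one _).le
  have hδ1 : (δ : ℝ≥0∞) ≤ 1 := by exact_mod_cast hδ.trans (by norm_num)
  calc (δ : ℝ≥0∞) ^ (4 * Module.finrank ℝ V + 3) * volume Ω ^ (1 - 1 / 2 : ℝ)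
      = (δ : ℝ≥0∞) ^ (4 * Module.finrank ℝ V + 3) * volume Ω ^ (1 / 2 : ℝ) := by norm_num
    _ ≤ ((δ : ℝ≥0∞) ^ (4 * Module.finrank ℝ V + 3)) ^ (1 / 2 : ℝ) * volume Ω ^ (1 / 2 : ℝ) := by
        gcongr
        exact le_rpow_of_le_one (pow_le_one' hδ1 _) (by norm_num)
    _ ≤ (volume E ^ 2) ^ (1 / 2 : ℝ) := by
        rw [← ENNReal.mul_rpow_of_nonneg _ _ (by norm_num)]
        gcongr
    _ = volume E * m ^ (1 - 2 * (1 / 2) : ℝ) := by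
        rw [← ENNReal.rpow_natCast_mul]
        norm_num

end DensityEstimate

section Step

variable {V : Type*} [NormedAddCommGroup V] [NormedSpace ℝ V]

/-- The pairs of lines of `Ω` meeting at time `s`, together with a time `y` at which the second line
is in `E` and a shift `σ` for which a set of times of measure at least `ℓ` is such that both sample
points given by `partnerTime` are in `E`. -/
def configurations (E : Set (V × ℝ)) (Ω : Set (V × V)) (s c : ℝ) (ℓ : ℝ≥0∞) :
    Set (((V × V) × V) × (ℝ × ℝ)) :=
  {w | w.1 ∈ concurrentPairs Ω s ∧
    w.2 ∈ lineTimes E (meetingLine s w.1.1 w.1.2) ×ˢ shiftRange c ∧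
    ℓ ≤ volume (overlap s (lineTimes E w.1.1) (lineTimes E (meetingLine s w.1.1 w.1.2)) w.2)}

/-- The points of `E` whose partner is in `E`, where two points are partners when they are sampled
by `partnerTime` on two lines meeting at time `s` for which the associated point is `S`. -/
def pairedPoints (E : Set (V × ℝ)) (s y σ : ℝ) (S : V) : Set (V × ℝ) :=
  {z | z ∈ E ∧ ((1 - σ / (z.2 - s))⁻¹ • (S - (σ / (z.2 - s)) • z.1), partnerTime s y σ z.2) ∈ E}

/-- The direction of the second of two lines meeting at time `s`, recovered from the first line and
the point `S` associated with the parameters `y` and `σ` of `partnerTime`. -/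
def partnerDirection (s y σ : ℝ) (S : V) (g : V × V) : V :=
  (y - s)⁻¹ • (S - (g.1 + (s + σ) • g.2))

lemma meetingLine_add_smul (s t : ℝ) (g : V × V) (η : V) :
    (meetingLine s g η).1 + t • (meetingLine s g η).2 = g.1 + s • g.2 + (t - s) • η := by
  simp only [meetingLine]
  module

lemma meetingLine_partnerDirection_self {s y : ℝ} (hy : y - s ≠ 0) (σ : ℝ) (S : V) (g : V × V) :
    (meetingLine s g (partnerDirection s y σ S g)).1 +
      y • (meetingLine s g (partnerDirection s y σ S g)).2 = S - σ • g.2 := by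
  rw [meetingLine_add_smul, partnerDirection, smul_inv_smul₀ hy]
  module

lemma meetingLine_partnerDirection_partnerTime {s y σ q : ℝ} (hy : y - s ≠ 0) (hq : q - s ≠ 0)
    (hk : 1 - σ / (q - s) ≠ 0) (S : V) (g : V × V) :
    (meetingLine s g (partnerDirection s y σ S g)).1 +
      partnerTime s y σ q • (meetingLine s g (partnerDirection s y σ S g)).2 =
    (1 - σ / (q - s))⁻¹ • (S - (σ / (q - s)) • (g.1 + q • g.2)) := by
  have hσ : σ = σ / (q - s) * (q - s) := (div_mul_cancel₀ σ hq).symm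
  rw [meetingLine_add_smul, partnerDirection, partnerTime, add_sub_cancel_left, smul_smul,
    div_mul_eq_mul_div, mul_inv_cancel₀ hy, one_div, eq_inv_smul_iff₀ hk, smul_add,
    smul_inv_smul₀ hk]
  generalize σ / (q - s) = ρ at hσ ⊢
  subst hσ
  module

lemma overlap_subset_lineTimes_pairedPoints {E : Set (V × ℝ)} {s y σ : ℝ} (hy : y - s ≠ 0)
    (hE : ∀ z ∈ E, z.2 ≠ s) (S : V) (g : V × V) :
    overlap s (lineTimes E g) (lineTimes E (meetingLine s g (partnerDirection s y σ S g))) (y, σ) ⊆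
      lineTimes (pairedPoints E s y σ S) g := by
  rintro q ⟨⟨hq, hqE⟩, -, huE⟩
  have hk : 1 - σ / (q - s) ≠ 0 := by
    intro hk
    have hpole : partnerTime s y σ q = s := by rw [partnerTime, hk, _root_.div_zero, add_zero]
    exact hE _ huE hpole
  refine ⟨hq, hqE, ?_⟩
  rwa [← meetingLine_partnerDirection_partnerTime hy (sub_ne_zero.mpr (hE _ hqE)) hk]

lemma le_abs_inv_of_le_abs_partnerTime_sub {c s y σ q : ℝ} (hy : |y - s| ≤ 1)
    (h : c ≤ |partnerTime s y σ q - s|) : c ≤ |(1 - σ / (q - s))⁻¹| := by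
  rw [partnerTime, add_sub_cancel_left, div_eq_mul_inv, abs_mul] at h
  exact h.trans (mul_le_of_le_one_left (abs_nonneg _) hy)

variable [FiniteDimensional ℝ V] [MeasureSpace V] [BorelSpace V]

lemma measurableSet_configurations {E : Set (V × ℝ)} {Ω : Set (V × V)} (hE : MeasurableSet E)
    (hΩ : MeasurableSet Ω) (s c : ℝ) (ℓ : ℝ≥0∞) : MeasurableSet (configurations E Ω s c ℓ) := by
  have hlines := measurableSet_mem_lineTimes hE
  have hoverlap : MeasurableSet {v : (((V × V) × V) × (ℝ × ℝ)) × ℝ | v.2 ∈ overlap s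
      (lineTimes E v.1.1.1) (lineTimes E (meetingLine s v.1.1.1 v.1.1.2)) v.1.2} :=
    ((by fun_prop : Measurable fun v : (((V × V) × V) × (ℝ × ℝ)) × ℝ => (v.1.1.1, v.2))
      hlines).inter
    ((by fun_prop : Measurable fun v : (((V × V) × V) × (ℝ × ℝ)) × ℝ =>
      (meetingLine s v.1.1.1 v.1.1.2, partnerTime s v.1.2.1 v.1.2.2 v.2)) hlines)
  refine (measurable_fst (measurableSet_concurrentPairs hΩ s)).inter (MeasurableSet.inter ?_ ?_)
  · exact ((by fun_prop : Measurable fun w : ((V × V) × V) × (ℝ × ℝ) =>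
      (meetingLine s w.1.1 w.1.2, w.2.1)) hlines).inter
      ((by fun_prop : Measurable fun w : ((V × V) × V) × (ℝ × ℝ) => w.2.2)
        (measurableSet_shiftRange c))
  · exact measurableSet_le measurable_const (measurable_measure_prodMk_left hoverlap)

lemma measurableSet_mem_pairedPoints {E : Set (V × ℝ)} (hE : MeasurableSet E) (s y σ : ℝ) :
    MeasurableSet {w : V × (V × ℝ) | w.2 ∈ pairedPoints E s y σ w.1} :=
  (measurable_snd hE).inter ((by fun_prop : Measurable fun w : V × (V × ℝ) =>
    ((1 - σ / (w.2.2 - s))⁻¹ • (w.1 - (σ / (w.2.2 - s)) • w.2.1), partnerTime s y σ w.2.2)) hE)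

variable [(volume : Measure V).IsAddHaarMeasure] {E : Set (V × ℝ)} {Ω : Set (V × V)}
  {c : ℝ≥0} {s y σ : ℝ} {m M : ℝ≥0∞}

lemma lintegral_volume_pairedPoints_le (hE : MeasurableSet E) (hc : 0 < c) (hy : |y - s| ≤ 1)
    (hfar : ∀ z ∈ E, c ≤ |z.2 - s|) (hslice : ∀ t, volume {x | (x, t) ∈ E} ≤ M) :
    (c : ℝ≥0∞) ^ Module.finrank ℝ V * ∫⁻ S, volume (pairedPoints E s y σ S) ≤ M * volume E := by
  have hQ := measurableSet_mem_pairedPoints hE s y σ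
  calc (c : ℝ≥0∞) ^ Module.finrank ℝ V * ∫⁻ S, volume (pairedPoints E s y σ S)
      = c ^ Module.finrank ℝ V * ∫⁻ z, volume {S | z ∈ pairedPoints E s y σ S} :=
        congrArg _ (lintegral_measure_comm hQ)
    _ ≤ ∫⁻ z, c ^ Module.finrank ℝ V * volume {S | z ∈ pairedPoints E s y σ S} :=
        lintegral_const_mul_le _ _
    _ ≤ M * volume E := by
        refine lintegral_le_mul_measure (fun z _ => ?_) fun z hz => ?_
        · by_cases hS : ∃ S, z ∈ pairedPoints E s y σ S
          · obtain ⟨S₀, -, hz⟩ := hS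
            have hk := le_abs_inv_of_le_abs_partnerTime_sub hy (hfar _ hz)
            refine le_trans ?_ ((coe_pow_finrank_mul_addHaar_preimage_affine_le volume hc hk
              (-((1 - σ / (z.2 - s))⁻¹ • (σ / (z.2 - s)) • z.1)) {x | (x, _) ∈ E}).trans
              (hslice (partnerTime s y σ z.2)))
            gcongr
            intro hS
            simpa only [smul_sub, neg_add_eq_sub, Set.mem_ofPred_eq] using hS.2
          · rw [Set.eq_empty_of_forall_notMem (s := {S | z ∈ pairedPoints E s y σ S})
              (not_exists.mp hS), measure_empty, mul_zero]
            exact zero_le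
        · rw [Set.eq_empty_of_forall_notMem (s := {S | z ∈ pairedPoints E s y σ S})
            fun S hS => hz hS.1, measure_empty, mul_zero]

lemma pow_mul_volume_le_lintegral_fiber {Γ : Set ((V × V) × V)} (hΓ : MeasurableSet Γ)
    (hc : 0 < c) (hy : c ≤ |y - s|) :
    (c : ℝ≥0∞) ^ Module.finrank ℝ V * volume Γ ≤
      ∫⁻ S, volume {g | (g, partnerDirection s y σ S g) ∈ Γ} := by
  have hy₀ : y - s ≠ 0 := abs_pos.mp ((NNReal.coe_pos.mpr hc).trans_le hy)
  have hQ : MeasurableSet {w : V × (V × V) | (w.2, partnerDirection s y σ w.1 w.2) ∈ Γ} := by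
    unfold partnerDirection
    exact (by fun_prop : Measurable fun w : V × (V × V) =>
      (w.2, (y - s)⁻¹ • (w.1 - (w.2.1 + (s + σ) • w.2.2)))) hΓ
  rw [Measure.volume_eq_prod (V × V), Measure.prod_apply hΓ]
  refine ((lintegral_const_mul_le _ _).trans (lintegral_mono fun g => ?_)).trans
    (lintegral_measure_comm hQ).ge
  have hpre : Prod.mk g ⁻¹' Γ = {η | (g.1 + (s + σ) • g.2) + (y - s) • η ∈
      {S | (g, partnerDirection s y σ S g) ∈ Γ}} := by
    ext η
    simp only [partnerDirection, Set.mem_preimage, Set.mem_ofPred_eq, add_sub_cancel_left,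
      inv_smul_smul₀ hy₀]
  rw [hpre]
  exact coe_pow_finrank_mul_addHaar_preimage_affine_le volume hc hy _ _

lemma pow_mul_volume_le_of_shifted_direction (hE : MeasurableSet E) (hΩ : MeasurableSet Ω)
    (hc : 0 < c) (hσ : c ≤ |σ|) (hm : ∀ ξ, volume {x | (x, ξ) ∈ Ω} ≤ m)
    (hslice : ∀ t, volume {x | (x, t) ∈ E} ≤ M) (S : V) :
    (c : ℝ≥0∞) ^ Module.finrank ℝ V *
      volume {g | g ∈ Ω ∧ (S - σ • g.2, y) ∈ E} ≤ m * M := by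
  have hQ : MeasurableSet {g : V × V | g ∈ Ω ∧ (S - σ • g.2, y) ∈ E} :=
    hΩ.inter ((by fun_prop : Measurable fun g : V × V => (S - σ • g.2, y)) hE)
  have hdirections : (c : ℝ≥0∞) ^ Module.finrank ℝ V * volume {ξ : V | (S - σ • ξ, y) ∈ E} ≤ M := by
    refine le_trans (le_of_eq ?_) ((coe_pow_finrank_mul_addHaar_preimage_affine_le volume hc
      (a := -σ) (by rwa [abs_neg]) S {x | (x, y) ∈ E}).trans (hslice y))
    simp only [neg_smul, ← sub_eq_add_neg, Set.mem_ofPred_eq]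
  calc (c : ℝ≥0∞) ^ Module.finrank ℝ V * volume {g | g ∈ Ω ∧ (S - σ • g.2, y) ∈ E}
      ≤ c ^ Module.finrank ℝ V * (m * volume {ξ : V | (S - σ • ξ, y) ∈ E}) := by
        gcongr
        exact measure_prod_le_mul hQ (fun g hg => hg.2) fun ξ =>
          (measure_mono fun x hx => hx.1).trans (hm ξ)
    _ ≤ m * M := by
        rw [mul_left_comm]
        gcongr

lemma mul_mul_le_of_mul_rpow_le {θ : ℝ} (hθ₀ : 0 ≤ θ) (hθ : θ ≤ 1 / 2) {a k F O : ℝ≥0∞}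
    (hk : k ≤ 1) (hF : a * F ^ (1 - θ) ≤ O * m ^ (1 - 2 * θ)) (hkF : k * F ≤ m * M) :
    a * (k * F) ≤ O * (m ^ (1 - θ) * M ^ θ) :=
  calc a * (k * F) = a * F ^ (1 - θ) * (k * F ^ θ) := by
        have hFθ : F = F ^ (1 - θ) * F ^ θ := by
          rw [← ENNReal.rpow_add_of_nonneg _ _ (by linarith) hθ₀, sub_add_cancel, ENNReal.rpow_one]
        conv_lhs => rw [hFθ]
        ring
    _ ≤ O * m ^ (1 - 2 * θ) * (m * M) ^ θ := by
        gcongr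
        calc k * F ^ θ ≤ k ^ θ * F ^ θ := by
              gcongr
              exact le_rpow_of_le_one hk (by linarith)
          _ ≤ (m * M) ^ θ := by
              rw [← ENNReal.mul_rpow_of_nonneg _ _ hθ₀]
              gcongr
    _ = O * (m ^ (1 - θ) * M ^ θ) := by
        have hmθ : m ^ (1 - θ) = m ^ (1 - 2 * θ) * m ^ θ := by
          rw [← ENNReal.rpow_add_of_nonneg _ _ (by linarith) hθ₀]
          congr 1
          ring
        rw [ENNReal.mul_rpow_of_nonneg _ _ hθ₀, hmθ]
        ring

variable {θ : ℝ} {N : ℕ} {ℓ : ℝ≥0}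

lemma pow_mul_volume_fiber_le (h : DensityEstimate V θ N) (hθ₀ : 0 ≤ θ) (hθ : θ ≤ 1 / 2)
    (hE : MeasurableSet E) (hE_top : volume E ≠ ⊤) (hΩ : MeasurableSet Ω) (hc₀ : 0 < c) (hc : c ≤ 1)
    (hℓ₀ : 0 < ℓ) (hℓ : ℓ ≤ 1 / 2) (hy : c ≤ |y - s|) (hσ : σ ∈ shiftRange c)
    (hfar : ∀ z ∈ E, c ≤ |z.2 - s|) (hm : ∀ ξ, volume {x | (x, ξ) ∈ Ω} ≤ m)
    (hslice : ∀ t, volume {x | (x, t) ∈ E} ≤ M) (S : V) :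
    (ℓ : ℝ≥0∞) ^ N * (((c ^ 2 : ℝ≥0) : ℝ≥0∞) ^ Module.finrank ℝ V * volume {g |
        ((g, partnerDirection s y σ S g), (y, σ)) ∈ configurations E Ω s c ℓ}) ≤
      volume (pairedPoints E s y σ S) * (m ^ (1 - θ) * M ^ θ) := by
  have hy₀ : y - s ≠ 0 := abs_pos.mp ((NNReal.coe_pos.mpr hc₀).trans_le hy)
  set F : Set (V × V) := {g | ((g, partnerDirection s y σ S g), (y, σ)) ∈ configurations E Ω s c ℓ}
  have hFm : MeasurableSet F := by
    refine (?_ : Measurable fun g : V × V => ((g, partnerDirection s y σ S g), (y, σ)))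
      (measurableSet_configurations hE hΩ s c ℓ)
    unfold partnerDirection
    fun_prop
  have hFΩ : F ⊆ Ω := fun g hg => hg.1.1
  have hne (z) (hz : z ∈ E) : z.2 ≠ s := fun hzs =>
    (NNReal.coe_pos.mpr hc₀).not_ge (by simpa [hzs] using hfar z hz)
  have hdense (g) (hg : g ∈ F) : ℓ ≤ volume (lineTimes (pairedPoints E s y σ S) g) :=
    hg.2.2.trans (measure_mono (overlap_subset_lineTimes_pairedPoints hy₀ hne S g))
  have hpaired : MeasurableSet (pairedPoints E s y σ S) :=
    (by fun_prop : Measurable fun z : V × ℝ => (S, z)) (measurableSet_mem_pairedPoints hE s y σ)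
  refine mul_mul_le_of_mul_rpow_le hθ₀ hθ (pow_le_one' (by exact_mod_cast pow_le_one' hc 2) _)
    (h ℓ hℓ₀ hℓ _ F m hpaired hFm
      (measure_ne_top_of_subset (fun z hz => hz.1) hE_top) hdense
      fun ξ => (measure_mono (fun x hx => hFΩ hx : {x | (x, ξ) ∈ F} ⊆ _)).trans (hm ξ)) ?_
  refine le_trans ?_ (pow_mul_volume_le_of_shifted_direction (y := y) hE hΩ (pow_pos hc₀ 2)
    (by exact_mod_cast hσ.1) hm hslice S)
  gcongr
  intro g hg
  refine ⟨hFΩ hg, ?_⟩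
  rw [← meetingLine_partnerDirection_self hy₀]
  exact hg.2.1.1.2

lemma pow_mul_volume_configurations_slice_le (h : DensityEstimate V θ N) (hθ₀ : 0 ≤ θ)
    (hθ : θ ≤ 1 / 2) (hE : MeasurableSet E) (hE_top : volume E ≠ ⊤) (hΩ : MeasurableSet Ω)
    (hc₀ : 0 < c) (hc : c ≤ 1) (hℓ₀ : 0 < ℓ) (hℓ : ℓ ≤ 1 / 2)
    (hy : c ≤ |y - s|) (hy1 : |y - s| ≤ 1) (hσ : σ ∈ shiftRange c)
    (hfar : ∀ z ∈ E, c ≤ |z.2 - s|) (hm : ∀ ξ, volume {x | (x, ξ) ∈ Ω} ≤ m)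
    (hslice : ∀ t, volume {x | (x, t) ∈ E} ≤ M) :
    (c : ℝ≥0∞) ^ (4 * Module.finrank ℝ V) * ℓ ^ N *
        volume {z | (z, (y, σ)) ∈ configurations E Ω s c ℓ} ≤
      m ^ (1 - θ) * M ^ (1 + θ) * volume E := by
  set n := Module.finrank ℝ V
  set K : ℝ≥0∞ := m ^ (1 - θ) * M ^ θ
  set F : V → Set (V × V) := fun S =>
    {g | ((g, partnerDirection s y σ S g), (y, σ)) ∈ configurations E Ω s c ℓ}
  have hΓ : MeasurableSet {z | (z, (y, σ)) ∈ configurations E Ω s c ℓ} :=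
    (by fun_prop : Measurable fun z : (V × V) × V => (z, (y, σ)))
      (measurableSet_configurations hE hΩ s c ℓ)
  have hpaired : Measurable fun S => volume (pairedPoints E s y σ S) :=
    measurable_measure_prodMk_left (measurableSet_mem_pairedPoints hE s y σ)
  calc (c : ℝ≥0∞) ^ (4 * n) * ℓ ^ N * volume {z | (z, (y, σ)) ∈ configurations E Ω s c ℓ}
      = c ^ n * (ℓ ^ N * ((c ^ 2 : ℝ≥0) : ℝ≥0∞) ^ n *
          (c ^ n * volume {z | (z, (y, σ)) ∈ configurations E Ω s c ℓ})) := by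
        push_cast
        ring
    _ ≤ c ^ n * (ℓ ^ N * ((c ^ 2 : ℝ≥0) : ℝ≥0∞) ^ n * ∫⁻ S, volume (F S)) := by
        gcongr
        exact pow_mul_volume_le_lintegral_fiber hΓ hc₀ hy
    _ ≤ c ^ n * ∫⁻ S, volume (pairedPoints E s y σ S) * K := by
        gcongr
        refine (lintegral_const_mul_le _ _).trans (lintegral_mono fun S => ?_)
        rw [mul_assoc]
        exact pow_mul_volume_fiber_le h hθ₀ hθ hE hE_top hΩ hc₀ hc hℓ₀ hℓ hy hσ hfar hm hslice S
    _ ≤ M * volume E * K := by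
        rw [lintegral_mul_const _ hpaired, ← mul_assoc]
        gcongr ?_ * K
        exact lintegral_volume_pairedPoints_le hE hc₀ hy1 hfar hslice
    _ = m ^ (1 - θ) * M ^ (1 + θ) * volume E := by
        rw [ENNReal.rpow_add_of_nonneg _ _ zero_le_one hθ₀, ENNReal.rpow_one]
        ring

end Step

section Iteration

variable {V : Type*} [NormedAddCommGroup V] [NormedSpace ℝ V] [FiniteDimensional ℝ V]
  [MeasureSpace V] [BorelSpace V] [(volume : Measure V).IsAddHaarMeasure] {E : Set (V × ℝ)}
  {Ω : Set (V × V)} {δ : ℝ≥0} {s θ : ℝ} {N : ℕ} {m M : ℝ≥0∞}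

lemma pow_mul_volume_concurrentPairs_le_of_configurations (hδ₀ : 0 < δ) (hδ : δ ≤ 1 / 2)
    (hs : s ∈ Set.Ioc (0 : ℝ) 1) (hE : MeasurableSet E) (hΩ : MeasurableSet Ω)
    (hfar : ∀ z ∈ E, (δ ^ 4 : ℝ≥0) ≤ |z.2 - s|)
    (hdense : ∀ g ∈ Ω, (δ : ℝ≥0∞) ^ 2 ≤ volume (lineTimes E g)) {B : ℝ≥0∞}
    (hB : ∀ p ∈ (Set.Ioc (0 : ℝ) 1 \ Metric.ball s (δ ^ 4 : ℝ≥0)) ×ˢ shiftRange (δ ^ 4 : ℝ≥0),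
      volume {z | (z, p) ∈ configurations E Ω s (δ ^ 4 : ℝ≥0) (δ ^ 21)} ≤ B) :
    (δ : ℝ≥0∞) ^ 21 * volume (concurrentPairs Ω s) ≤ B := by
  have hsub (g : V × V) : lineTimes E g ⊆ Set.Ioc 0 1 \ Metric.ball s (δ ^ 4 : ℝ≥0) :=
    fun t ht => ⟨ht.1, not_lt.mpr (hfar _ ht.2)⟩
  have hcount := mul_measure_le_mul_measure_of_fibers (μ := volume) (ν := volume)
    (t := (Set.Ioc (0 : ℝ) 1 \ Metric.ball s (δ ^ 4 : ℝ≥0)) ×ˢ shiftRange (δ ^ 4 : ℝ≥0))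
    (measurableSet_configurations hE hΩ s _ (δ ^ 21)) (measurableSet_concurrentPairs hΩ s)
    (fun w hw => ⟨hsub _ hw.2.1.1, hw.2.1.2⟩)
    (fun z hz => (pow_le_volume_setOf_le_volume_overlap hδ₀ hδ hs
      (measurableSet_lineTimes hE z.1) (measurableSet_lineTimes hE (meetingLine s z.1 z.2))
      (hsub _) (hsub _) (hdense _ hz.1) (hdense _ hz.2)).trans
      (measure_mono fun p hp => ⟨hz, hp⟩)) hB
  calc (δ : ℝ≥0∞) ^ 21 * volume (concurrentPairs Ω s)
      = δ ^ 5 * (δ ^ 16 * volume (concurrentPairs Ω s)) := by ring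
    _ ≤ δ ^ 5 * (B * volume ((Set.Ioc (0 : ℝ) 1 \ Metric.ball s (δ ^ 4 : ℝ≥0)) ×ˢ
          shiftRange (δ ^ 4 : ℝ≥0))) := by gcongr
    _ ≤ B := by
        rw [mul_left_comm]
        exact mul_le_of_le_one_right'
          (pow_five_mul_volume_prod_shiftRange_le hδ₀ hδ Set.sdiff_subset)

lemma pow_mul_volume_concurrentPairs_le (h : DensityEstimate V θ N) (hθ₀ : 0 ≤ θ) (hθ : θ ≤ 1 / 2)
    (hδ₀ : 0 < δ) (hδ : δ ≤ 1 / 2) (hs : s ∈ Set.Ioc (0 : ℝ) 1) (hE : MeasurableSet E)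
    (hE_top : volume E ≠ ⊤) (hΩ : MeasurableSet Ω) (hdense : ∀ g ∈ Ω, δ ≤ volume (lineTimes E g))
    (hm : ∀ ξ, volume {x | (x, ξ) ∈ Ω} ≤ m) (hslice : ∀ t, volume {x | (x, t) ∈ E} ≤ M) :
    (δ : ℝ≥0∞) ^ (21 + 16 * Module.finrank ℝ V + 21 * N) * volume (concurrentPairs Ω s) ≤
      m ^ (1 - θ) * M ^ (1 + θ) * volume E := by
  set E' : Set (V × ℝ) := E \ Prod.snd ⁻¹' Metric.ball s (δ ^ 4 : ℝ≥0)
  have hE' : MeasurableSet E' := hE.diff (measurable_snd measurableSet_ball)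
  have hE'E : E' ⊆ E := Set.sdiff_subset
  have hfar : ∀ z ∈ E', (δ ^ 4 : ℝ≥0) ≤ |z.2 - s| := fun z hz => not_lt.mp hz.2
  have hdense' (g) (hg : g ∈ Ω) : (δ : ℝ≥0∞) ^ 2 ≤ volume (lineTimes E' g) :=
    (pow_succ_le_sub_two_mul_pow_four hδ one_le_two ((pow_one _).trans_le (hdense g hg))).trans
      ((volume_sub_le_volume_diff_ball _ s _).trans
        (measure_mono fun t ht => ⟨ht.1.1, ht.1.2, ht.2⟩))
  have hδ1 : δ ≤ 1 := hδ.trans (by norm_num)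
  set k : ℝ≥0∞ := ((δ ^ 4 : ℝ≥0) : ℝ≥0∞) ^ (4 * Module.finrank ℝ V) * ((δ ^ 21 : ℝ≥0) : ℝ≥0∞) ^ N
  have hk₀ : k ≠ 0 := mul_ne_zero
    (pow_ne_zero _ (coe_ne_zero.mpr (pow_pos hδ₀ 4).ne'))
    (pow_ne_zero _ (coe_ne_zero.mpr (pow_pos hδ₀ 21).ne'))
  have hk : k ≠ ⊤ := mul_ne_top (pow_ne_top coe_ne_top) (pow_ne_top coe_ne_top)
  have hpairs := pow_mul_volume_concurrentPairs_le_of_configurations hδ₀ hδ hs hE' hΩ hfar hdense'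
    (B := m ^ (1 - θ) * M ^ (1 + θ) * volume E / k) fun p hp => by
      rw [ENNReal.le_div_iff_mul_le (Or.inl hk₀) (Or.inl hk), mul_comm]
      have hconfig := pow_mul_volume_configurations_slice_le h hθ₀ hθ hE'
        (measure_ne_top_of_subset hE'E hE_top) hΩ (pow_pos hδ₀ 4) (pow_le_one' hδ1 4)
        (pow_pos hδ₀ 21) ((pow_le_of_le_one zero_le hδ1 (by norm_num)).trans hδ)
        (not_lt.mp hp.1.2) (abs_sub_le_one_of_mem_Ioc hp.1.1 hs) hp.2 hfar hm
        fun t => (measure_mono (fun x hx => hE'E hx : {x | (x, t) ∈ E'} ⊆ _)).trans (hslice t)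
      refine le_trans ?_ (hconfig.trans (by gcongr))
      rw [← ENNReal.coe_pow]
  calc (δ : ℝ≥0∞) ^ (21 + 16 * Module.finrank ℝ V + 21 * N) * volume (concurrentPairs Ω s)
      = k * (δ ^ 21 * volume (concurrentPairs Ω s)) := by
        simp only [k, ENNReal.coe_pow]
        ring
    _ ≤ k * (m ^ (1 - θ) * M ^ (1 + θ) * volume E / k) := by gcongr
    _ = m ^ (1 - θ) * M ^ (1 + θ) * volume E := ENNReal.mul_div_cancel hk₀ hk

omit [BorelSpace V] in
lemma sq_le_volume_lineTimes_of_trim (hδ : δ ≤ 1 / 2) (hE : MeasurableSet E) (hM : M ≠ ⊤)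
    (hEM : volume E ≤ ((δ ^ 2 : ℝ≥0) : ℝ≥0∞) * M) {g : V × V} (hg : δ ≤ volume (lineTimes E g)) :
    (δ ^ 2 : ℝ≥0) ≤
      volume (lineTimes (E ∩ Prod.snd ⁻¹' {t | volume {x | (x, t) ∈ E} ≤ M}) g) := by
  have hsq : (δ ^ 2 : ℝ≥0) ≤ (δ : ℝ≥0∞) - (δ ^ 2 : ℝ≥0) := by
    refine ENNReal.le_sub_of_add_le_right coe_ne_top ?_
    calc ((δ ^ 2 : ℝ≥0) : ℝ≥0∞) + (δ ^ 2 : ℝ≥0) = δ * (2 * δ) := by push_cast; ring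
      _ ≤ δ := mul_le_of_le_one_right' (two_mul_coe_le_one hδ)
  calc ((δ ^ 2 : ℝ≥0) : ℝ≥0∞)
      ≤ volume (lineTimes E g) - volume {t : ℝ | M < volume {x | (x, t) ∈ E}} :=
        hsq.trans (tsub_le_tsub hg (volume_lt_fiber_le hE hM hEM))
    _ ≤ volume (lineTimes E g \ {t : ℝ | M < volume {x | (x, t) ∈ E}}) := le_measure_sdiff
    _ ≤ volume (lineTimes (E ∩ Prod.snd ⁻¹' {t | volume {x | (x, t) ∈ E} ≤ M}) g) := by
        refine measure_mono fun t ht => ⟨ht.1.1, ht.1.2, ?_⟩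
        exact (not_lt.mp ht.2 : volume {x | (x, t) ∈ E} ≤ M)

lemma pow_mul_lintegral_concurrentPairs_le (h : DensityEstimate V θ N) (hθ₀ : 0 ≤ θ)
    (hθ : θ ≤ 1 / 2) (hδ₀ : 0 < δ) (hδ : δ ≤ 1 / 2) (hE : MeasurableSet E) (hE_top : volume E ≠ ⊤)
    (hΩ : MeasurableSet Ω) (hdense : ∀ g ∈ Ω, δ ≤ volume (lineTimes E g))
    (hm : ∀ ξ, volume {x | (x, ξ) ∈ Ω} ≤ m) :
    ((δ ^ 2 : ℝ≥0) : ℝ≥0∞) ^ (21 + 16 * Module.finrank ℝ V + 21 * N) *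
        ∫⁻ s in Set.Ioc (0 : ℝ) 1, volume (concurrentPairs Ω s) ≤
      m ^ (1 - θ) * (volume E / (δ ^ 2 : ℝ≥0)) ^ (1 + θ) * volume E := by
  have hδ1 : δ ≤ 1 := hδ.trans (by norm_num)
  set δ' : ℝ≥0 := δ ^ 2
  have hδ'₀ : (δ' : ℝ≥0∞) ≠ 0 := coe_ne_zero.mpr (pow_pos hδ₀ 2).ne'
  set M : ℝ≥0∞ := volume E / δ'
  have hM : M ≠ ⊤ := div_ne_top hE_top hδ'₀
  have hMδ : δ' * M = volume E := ENNReal.mul_div_cancel hδ'₀ coe_ne_top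
  set E' : Set (V × ℝ) := E ∩ Prod.snd ⁻¹' {t | volume {x | (x, t) ∈ E} ≤ M}
  have hE' : MeasurableSet E' := hE.inter (measurable_snd
    (measurableSet_le (measurable_measure_prodMk_right hE) measurable_const))
  have hE'E : volume E' ≤ volume E := measure_mono Set.inter_subset_left
  have hslice (t : ℝ) : volume {x | (x, t) ∈ E'} ≤ M := by
    by_cases ht : volume {x | (x, t) ∈ E} ≤ M
    · exact (measure_mono fun x hx => hx.1).trans ht
    · simp [E', ht]
  have hpairs (s) (hs : s ∈ Set.Ioc (0 : ℝ) 1) :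
      (δ' : ℝ≥0∞) ^ (21 + 16 * Module.finrank ℝ V + 21 * N) * volume (concurrentPairs Ω s) ≤
        m ^ (1 - θ) * M ^ (1 + θ) * volume E :=
    (pow_mul_volume_concurrentPairs_le h hθ₀ hθ (pow_pos hδ₀ 2)
      ((pow_le_of_le_one zero_le hδ1 two_ne_zero).trans hδ) hs hE' (ne_top_of_le_ne_top hE_top hE'E)
      hΩ (fun g hg => sq_le_volume_lineTimes_of_trim hδ hE hM hMδ.ge (hdense g hg)) hm
      hslice).trans (by gcongr)
  calc _ ≤ ∫⁻ s in Set.Ioc (0 : ℝ) 1,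
          (δ' : ℝ≥0∞) ^ (21 + 16 * Module.finrank ℝ V + 21 * N) * volume (concurrentPairs Ω s) :=
        lintegral_const_mul_le _ _
    _ ≤ ∫⁻ _ in Set.Ioc (0 : ℝ) 1, m ^ (1 - θ) * M ^ (1 + θ) * volume E :=
        setLIntegral_mono measurable_const hpairs
    _ = _ := by simp

lemma pow_mul_volume_sq_le_mul_rpow (h : DensityEstimate V θ N) (hθ₀ : 0 ≤ θ) (hθ : θ ≤ 1 / 2)
    (hδ₀ : 0 < δ) (hδ : δ ≤ 1 / 2) (hE : MeasurableSet E) (hE_top : volume E ≠ ⊤)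
    (hΩ : MeasurableSet Ω) (hdense : ∀ g ∈ Ω, δ ≤ volume (lineTimes E g))
    (hm : ∀ ξ, volume {x | (x, ξ) ∈ Ω} ≤ m) :
    (δ : ℝ≥0∞) ^ (2 * (21 + 16 * Module.finrank ℝ V + 21 * N) + 6) * volume Ω ^ 2 ≤
      m ^ (1 - θ) * volume E ^ (3 + θ) := by
  have hpairs := pow_mul_lintegral_concurrentPairs_le h hθ₀ hθ hδ₀ hδ hE hE_top hΩ hdense hm
  set K := 21 + 16 * Module.finrank ℝ V + 21 * N
  set δ' : ℝ≥0 := δ ^ 2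
  have hδ' : (δ' : ℝ≥0∞) ≤ 1 := by exact_mod_cast pow_le_one' (hδ.trans (by norm_num)) 2
  calc (δ : ℝ≥0∞) ^ (2 * K + 6) * volume Ω ^ 2
      = δ' ^ 2 * (δ' ^ K * (δ * volume Ω) ^ 2) := by
        simp only [δ', ENNReal.coe_pow]
        ring
    _ ≤ δ' ^ 2 * (volume E *
          (δ' ^ K * ∫⁻ s in Set.Ioc (0 : ℝ) 1, volume (concurrentPairs Ω s))) := by
        rw [mul_left_comm (volume E)]
        gcongr
        exact sq_mul_volume_le_volume_mul_lintegral_concurrentPairs hE hΩ hdense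
    _ ≤ δ' ^ 2 * (volume E * (m ^ (1 - θ) * (volume E / δ') ^ (1 + θ) * volume E)) := by gcongr
    _ = m ^ (1 - θ) * (δ' ^ 2 * (volume E / δ') ^ (1 + θ)) * volume E ^ 2 := by ring
    _ ≤ m ^ (1 - θ) * volume E ^ (1 + θ) * volume E ^ 2 := by
        gcongr _ * ?_ * _
        exact pow_mul_div_rpow_le (coe_ne_zero.mpr (pow_pos hδ₀ 2).ne') hδ' _ (by linarith)
          (by push_cast; linarith)
    _ = m ^ (1 - θ) * volume E ^ (3 + θ) := by
        rw [mul_assoc, ← ENNReal.rpow_two,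
          ← ENNReal.rpow_add_of_nonneg _ _ (by linarith) two_pos.le]
        ring_nf

lemma DensityEstimate.step (h : DensityEstimate V θ N) (hθ₀ : 0 ≤ θ) (hθ : θ ≤ 1 / 2) :
    DensityEstimate V ((1 + θ) / (3 + θ)) (2 * (21 + 16 * Module.finrank ℝ V + 21 * N) + 6) := by
  intro δ hδ₀ hδ E Ω m hE hΩ hE_top hdense hm
  have hsq := pow_mul_volume_sq_le_mul_rpow h hθ₀ hθ hδ₀ hδ hE hE_top hΩ hdense hm
  set K := 2 * (21 + 16 * Module.finrank ℝ V + 21 * N) + 6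
  have hδ1 : (δ : ℝ≥0∞) ≤ 1 := by exact_mod_cast hδ.trans (by norm_num)
  have h3 : 0 < 3 + θ := by linarith
  have hα : 0 ≤ 1 / (3 + θ) := by positivity
  calc (δ : ℝ≥0∞) ^ K * volume Ω ^ (1 - (1 + θ) / (3 + θ))
      = δ ^ K * (volume Ω ^ 2) ^ (1 / (3 + θ)) := by
        rw [← ENNReal.rpow_natCast_mul]
        congr 2
        field_simp
        push_cast
        ring
    _ ≤ (δ ^ K) ^ (1 / (3 + θ)) * (volume Ω ^ 2) ^ (1 / (3 + θ)) := by
        gcongr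
        exact le_rpow_of_le_one (pow_le_one' hδ1 _) ((div_le_one h3).mpr (by linarith))
    _ ≤ (m ^ (1 - θ) * volume E ^ (3 + θ)) ^ (1 / (3 + θ)) := by
        rw [← ENNReal.mul_rpow_of_nonneg _ _ hα]
        gcongr
    _ = volume E * m ^ (1 - 2 * ((1 + θ) / (3 + θ))) := by
        rw [ENNReal.mul_rpow_of_nonneg _ _ hα, ← ENNReal.rpow_mul, ← ENNReal.rpow_mul,
          mul_one_div_cancel h3.ne', ENNReal.rpow_one, mul_comm]
        congr 2
        field_simp
        ring

variable (V) in
lemma exists_densityEstimate_near {κ : ℝ} (hκ : 0 < κ) :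
    ∃ θ N, √2 - 1 ≤ θ ∧ θ ≤ √2 - 1 + κ ∧ θ ≤ 1 / 2 ∧ DensityEstimate V θ N := by
  have hsq : √2 ^ 2 = 2 := Real.sq_sqrt zero_le_two
  have hlow : 1.4 ≤ √2 := Real.le_sqrt_of_sq_le (by norm_num)
  have hhigh : √2 ≤ 1.5 := Real.sqrt_le_iff.mpr (by norm_num)
  have iterate (k : ℕ) : ∃ θ N, √2 - 1 ≤ θ ∧ θ ≤ √2 - 1 + (1 / 2) ^ k ∧ θ ≤ 1 / 2 ∧
      DensityEstimate V θ N := by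
    induction k with
    | zero => exact ⟨1 / 2, _, by linarith, by linarith, le_rfl, densityEstimate_half⟩
    | succ k ih =>
      obtain ⟨θ, N, hθ₁, hθ₂, hθ, h⟩ := ih
      have h3 : 0 < 3 + θ := by linarith
      refine ⟨(1 + θ) / (3 + θ), _, ?_, ?_, ?_, h.step (by linarith) hθ⟩
      · rw [le_div_iff₀ h3]
        nlinarith
      · rw [div_le_iff₀ h3, pow_succ]
        nlinarith [pow_pos (one_half_pos (α := ℝ)) k]
      · rw [div_le_iff₀ h3]
        linarith
  obtain ⟨k, hk⟩ := exists_pow_lt_of_lt_one hκ (one_half_lt_one (α := ℝ))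
  obtain ⟨θ, N, hθ₁, hθ₂, hθ, h⟩ := iterate k
  exact ⟨θ, N, hθ₁, by linarith, hθ, h⟩

end Iteration

section Dyadic

lemma rpow_tsum_le_tsum_rpow {ι : Type*} (a : ι → ℝ≥0∞) {β : ℝ} (hβ₀ : 0 < β) (hβ : β ≤ 1) :
    (∑' i, a i) ^ β ≤ ∑' i, a i ^ β := by
  rw [← ENNReal.le_rpow_inv_iff hβ₀, ENNReal.tsum_eq_iSup_sum]
  refine iSup_le fun s => ?_
  rw [ENNReal.le_rpow_inv_iff hβ₀]
  exact (Finset.le_sum_of_subadditive (· ^ β) (ENNReal.zero_rpow_of_pos hβ₀).le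
    (fun x y => ENNReal.rpow_add_le_add_rpow x y hβ₀.le hβ) s a).trans (ENNReal.sum_le_tsum s)

lemma exists_dyadic_lt_and_le {u M : ℝ≥0∞} (hu : u ≠ 0) (hM : M ≠ ⊤) (huM : u ≤ M) :
    ∃ j : ℕ, 2⁻¹ ^ (j + 1) * M < u ∧ u ≤ 2⁻¹ ^ j * M := by
  have hM₀ : M ≠ 0 := fun h => hu (le_zero_iff.mp (h ▸ huM))
  obtain ⟨k, hk⟩ := ENNReal.exists_inv_two_pow_lt (ENNReal.div_ne_zero.mpr ⟨hu, hM⟩)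
  have hex : ∃ j : ℕ, 2⁻¹ ^ j * M < u :=
    ⟨k, (ENNReal.lt_div_iff_mul_lt (Or.inl hM₀) (Or.inl hM)).mp hk⟩
  classical
  have hpos : Nat.find hex ≠ 0 := fun h => by
    have := Nat.find_spec hex
    rw [h, pow_zero, one_mul] at this
    exact this.not_ge huM
  obtain ⟨j, hj⟩ := Nat.exists_eq_succ_of_ne_zero hpos
  have hlt := Nat.find_spec hex
  rw [hj] at hlt
  exact ⟨j, hlt, not_lt.mp (Nat.find_min hex (hj.symm ▸ j.lt_succ_self))⟩

variable {α β : Type*} [MeasurableSpace α] [MeasurableSpace β] {μ : Measure α} {ν : Measure β}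

lemma lintegral_rpow_le_tsum_dyadic {f : α → ℝ≥0∞} (hf : Measurable f) {M : ℝ≥0∞} (hM : M ≠ ⊤)
    (hfM : ∀ a, f a ≤ M) {r : ℝ} (hr : 0 < r) :
    ∫⁻ a, f a ^ r ∂μ ≤
      ∑' j : ℕ, (2⁻¹ ^ j * M) ^ r * μ {a | 2⁻¹ ^ (j + 1) * M < f a ∧ f a ≤ 2⁻¹ ^ j * M} := by
  set X : ℕ → Set α := fun j => {a | 2⁻¹ ^ (j + 1) * M < f a ∧ f a ≤ 2⁻¹ ^ j * M}
  have hX (j : ℕ) : MeasurableSet (X j) :=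
    (measurableSet_lt measurable_const hf).inter (measurableSet_le hf measurable_const)
  calc ∫⁻ a, f a ^ r ∂μ ≤ ∫⁻ a, ∑' j, (X j).indicator (fun _ => (2⁻¹ ^ j * M) ^ r) a ∂μ := by
        refine lintegral_mono fun a => ?_
        rcases eq_or_ne (f a) 0 with ha | ha
        · simp [ha, ENNReal.zero_rpow_of_pos hr]
        · obtain ⟨j, hj⟩ := exists_dyadic_lt_and_le ha hM (hfM a)
          refine le_trans ?_ (ENNReal.le_tsum j)
          rw [Set.indicator_of_mem (show a ∈ X j from hj)]
          exact ENNReal.rpow_le_rpow hj.2 hr.le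
    _ = ∑' j, (2⁻¹ ^ j * M) ^ r * μ (X j) := by
        rw [lintegral_tsum fun j => (measurable_const.indicator (hX j)).aemeasurable]
        simp only [lintegral_indicator_const (hX _)]

lemma rpow_lintegral_rpow_le_tsum_dyadic {f : α → ℝ≥0∞} (hf : Measurable f) (hf1 : ∀ a, f a ≤ 1)
    {b r : ℝ} (hr : 0 < r) (hb₀ : 0 < b) (hb : b ≤ 1) :
    (∫⁻ a, f a ^ r ∂μ) ^ b ≤
      ∑' j : ℕ, (2⁻¹ ^ j) ^ (r * b) * μ {a | 2⁻¹ ^ (j + 1) ≤ f a} ^ b :=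
  calc (∫⁻ a, f a ^ r ∂μ) ^ b
      ≤ (∑' j : ℕ, (2⁻¹ ^ j) ^ r * μ {a | 2⁻¹ ^ (j + 1) ≤ f a}) ^ b := by
        gcongr
        refine (lintegral_rpow_le_tsum_dyadic hf one_ne_top hf1 hr).trans ?_
        simp only [mul_one]
        exact ENNReal.tsum_le_tsum fun j => mul_le_mul_right (measure_mono fun a ha => ha.1.le) _
    _ ≤ ∑' j : ℕ, ((2⁻¹ ^ j) ^ r * μ {a | 2⁻¹ ^ (j + 1) ≤ f a}) ^ b :=
        rpow_tsum_le_tsum_rpow _ hb₀ hb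
    _ = ∑' j : ℕ, (2⁻¹ ^ j) ^ (r * b) * μ {a | 2⁻¹ ^ (j + 1) ≤ f a} ^ b := by
        simp only [ENNReal.mul_rpow_of_nonneg _ _ hb₀.le, ENNReal.rpow_mul]

/-- The factor `2⁻¹ ^ (K + 1)` gained at the dyadic level `f ≈ 2⁻¹ ^ j` pays for the loss of order
`K` in the level, with a geometric series to spare. -/
lemma lintegral_rpow_lintegral_rpow_le [SFinite μ] {f : α × β → ℝ≥0∞} (hf : Measurable f)
    (hf1 : ∀ z, f z ≤ 1) {b r : ℝ} (hb₀ : 0 < b) (hb : b ≤ 1) {K : ℕ} (hr : r * b = K + 1)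
    {B : ℝ≥0∞} (hB : ∀ δ : ℝ≥0, 0 < δ → δ ≤ 1 / 2 →
      (δ : ℝ≥0∞) ^ K * ∫⁻ y, μ {x | δ ≤ f (x, y)} ^ b ∂ν ≤ B) :
    ∫⁻ y, (∫⁻ x, f (x, y) ^ r ∂μ) ^ b ∂ν ≤ 2 ^ (K + 1) * B := by
  have hr₀ : 0 < r := pos_of_mul_pos_left (hr ▸ K.cast_add_one_pos) hb₀.le
  set D : ℕ → β → ℝ≥0∞ := fun j y => μ {x | 2⁻¹ ^ (j + 1) ≤ f (x, y)}
  have hD (j : ℕ) : Measurable (D j) :=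
    measurable_measure_prodMk_right (measurableSet_le measurable_const hf)
  have hlevels (y : β) : (∫⁻ x, f (x, y) ^ r ∂μ) ^ b ≤
      ∑' j : ℕ, (2⁻¹ ^ j) ^ (K + 1) * D j y ^ b := by
    simpa only [hr, ← Nat.cast_add_one, ENNReal.rpow_natCast] using
      rpow_lintegral_rpow_le_tsum_dyadic (f := fun x => f (x, y)) (by fun_prop)
        (fun x => hf1 (x, y)) hr₀ hb₀ hb
  have hlevel (j : ℕ) : (2⁻¹ ^ j) ^ (K + 1) * ∫⁻ y, D j y ^ b ∂ν ≤ 2⁻¹ ^ j * (2 ^ K * B) := by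
    have h2 : (2 : ℝ≥0∞) * 2⁻¹ = 1 := ENNReal.mul_inv_cancel two_ne_zero ofNat_ne_top
    have hδ : (((2⁻¹ : ℝ≥0) ^ (j + 1) : ℝ≥0) : ℝ≥0∞) = 2⁻¹ ^ (j + 1) := by
      rw [ENNReal.coe_pow, ENNReal.coe_inv_two]
    have hBj := hB (2⁻¹ ^ (j + 1)) (by positivity)
      ((pow_le_of_le_one zero_le (by norm_num) j.succ_ne_zero).trans_eq (one_div 2).symm)
    rw [hδ] at hBj
    calc (2⁻¹ ^ j) ^ (K + 1) * ∫⁻ y, D j y ^ b ∂ν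
        = 2⁻¹ ^ j * ((2 * 2⁻¹) ^ K * (2⁻¹ ^ j) ^ K * ∫⁻ y, D j y ^ b ∂ν) := by
          rw [h2]
          ring
      _ = 2⁻¹ ^ j * (2 ^ K * ((2⁻¹ ^ (j + 1)) ^ K * ∫⁻ y, D j y ^ b ∂ν)) := by ring
      _ ≤ 2⁻¹ ^ j * (2 ^ K * B) := by gcongr
  calc ∫⁻ y, (∫⁻ x, f (x, y) ^ r ∂μ) ^ b ∂ν
      ≤ ∫⁻ y, ∑' j : ℕ, (2⁻¹ ^ j) ^ (K + 1) * D j y ^ b ∂ν := lintegral_mono hlevels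
    _ = ∑' j : ℕ, (2⁻¹ ^ j) ^ (K + 1) * ∫⁻ y, D j y ^ b ∂ν := by
        rw [lintegral_tsum fun j => (((hD j).pow_const b).const_mul _).aemeasurable]
        simp only [lintegral_const_mul _ ((hD _).pow_const b)]
    _ ≤ ∑' j : ℕ, 2⁻¹ ^ j * (2 ^ K * B) := ENNReal.tsum_le_tsum hlevel
    _ = 2 ^ (K + 1) * B := by
        rw [ENNReal.tsum_mul_right, ENNReal.tsum_geometric, ENNReal.one_sub_inv_two, inv_inv]
        ring

end Dyadic

section RestrictedType

variable {V : Type*} [NormedAddCommGroup V] [NormedSpace ℝ V]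

lemma volume_lineTimes_le_one (E : Set (V × ℝ)) (g : V × V) : volume (lineTimes E g) ≤ 1 :=
  calc volume (lineTimes E g) ≤ volume (Set.Ioc (0 : ℝ) 1) := measure_mono fun _ ht => ht.1
    _ = 1 := by simp

variable [MeasureSpace V] {E : Set (V × ℝ)} {θ : ℝ} {N : ℕ} {δ : ℝ≥0}

lemma DensityEstimate.pow_mul_volume_le (h : DensityEstimate V θ N)
    (hθ : θ ≤ 1 / 2) (hδ₀ : 0 < δ) (hδ : δ ≤ 1 / 2) (hE : MeasurableSet E) (hEtop : volume E ≠ ⊤)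
    {Ω : Set (V × V)} (hΩ : MeasurableSet Ω) (hdense : ∀ g ∈ Ω, δ ≤ volume (lineTimes E g))
    {m : ℝ≥0∞} (hm : ∀ ξ, volume {x | (x, ξ) ∈ Ω} ≤ m) :
    (δ : ℝ≥0∞) ^ (2 * N) * volume Ω ≤
      volume E ^ (1 + θ / (1 - θ)) * m ^ (1 - θ / (1 - θ)) := by
  have hθ₁ : 0 < 1 - θ := by linarith
  have hsum : (1 - θ)⁻¹ = 1 + θ / (1 - θ) := by field_simp; ring
  have hdiff : (1 - 2 * θ) * (1 - θ)⁻¹ = 1 - θ / (1 - θ) := by field_simp; ring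
  have hγ : θ / (1 - θ) ≤ 1 := (div_le_one hθ₁).mpr (by linarith)
  have hδ₁ : (δ : ℝ≥0∞) ≤ 1 := by exact_mod_cast hδ.trans (by norm_num)
  calc (δ : ℝ≥0∞) ^ (2 * N) * volume Ω
      ≤ ((δ : ℝ≥0∞) ^ N) ^ (1 - θ)⁻¹ * volume Ω := by
        gcongr
        rw [mul_comm 2 N, pow_mul, ← ENNReal.rpow_natCast _ 2]
        exact ENNReal.rpow_le_rpow_of_exponent_ge (pow_le_one' hδ₁ N)
          (by rw [hsum]; push_cast; linarith)
    _ = ((δ : ℝ≥0∞) ^ N * volume Ω ^ (1 - θ)) ^ (1 - θ)⁻¹ := by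
        rw [ENNReal.mul_rpow_of_nonneg _ _ (inv_nonneg.mpr hθ₁.le),
          ENNReal.rpow_rpow_inv hθ₁.ne']
    _ ≤ (volume E * m ^ (1 - 2 * θ)) ^ (1 - θ)⁻¹ := by
        gcongr ?_ ^ _
        exact h δ hδ₀ hδ E Ω m hE hΩ hEtop hdense hm
    _ = volume E ^ (1 + θ / (1 - θ)) * m ^ (1 - θ / (1 - θ)) := by
        rw [ENNReal.mul_rpow_of_nonneg _ _ (inv_nonneg.mpr hθ₁.le), ← ENNReal.rpow_mul, hsum,
          ← hsum, hdiff]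

variable [FiniteDimensional ℝ V] [BorelSpace V]

lemma measurable_volume_lineTimes (hE : MeasurableSet E) :
    Measurable fun g : V × V => volume (lineTimes E g) :=
  measurable_measure_prodMk_left (measurableSet_mem_lineTimes hE)

variable [(volume : Measure V).IsAddHaarMeasure]

lemma lintegral_volume_lineTimes_le (hE : MeasurableSet E) (ξ : V) :
    ∫⁻ x, volume (lineTimes E (x, ξ)) ≤ volume E := by
  have hQ : MeasurableSet {z : V × ℝ | z.2 ∈ lineTimes E (z.1, ξ)} :=
    (by fun_prop : Measurable fun z : V × ℝ => ((z.1, ξ), z.2)) (measurableSet_mem_lineTimes hE)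
  calc ∫⁻ x, volume (lineTimes E (x, ξ))
      = ∫⁻ t, volume {x | t ∈ lineTimes E (x, ξ)} := lintegral_measure_comm hQ
    _ ≤ ∫⁻ t, volume {x | (x + t • ξ, t) ∈ E} :=
        lintegral_mono fun t => measure_mono fun x hx => hx.2
    _ = ∫⁻ t, volume {x | (x, t) ∈ E} :=
        lintegral_congr fun t => measure_preimage_add_right volume (t • ξ) {x | (x, t) ∈ E}
    _ = volume E := (Measure.prod_apply_symm hE).symm

/-- The measure of the set of lines with direction `ξ` that spend time at least `δ` in `E`. -/
def richness (E : Set (V × ℝ)) (δ : ℝ≥0) (ξ : V) : ℝ≥0∞ :=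
  volume {x | δ ≤ volume (lineTimes E (x, ξ))}

lemma measurable_richness (hE : MeasurableSet E) (δ : ℝ≥0) : Measurable (richness E δ) :=
  measurable_measure_prodMk_right
    (measurableSet_le measurable_const (measurable_volume_lineTimes hE))

lemma richness_le (hE : MeasurableSet E) (hδ : 0 < δ) (ξ : V) :
    richness E δ ξ ≤ volume E / δ :=
  (meas_ge_le_lintegral_div
    ((measurable_volume_lineTimes hE).comp measurable_prodMk_right).aemeasurable
    (by exact_mod_cast hδ.ne') coe_ne_top).trans
    (ENNReal.div_le_div_right (lintegral_volume_lineTimes_le hE ξ) _)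

lemma DensityEstimate.pow_mul_volume_richness_level_le (h : DensityEstimate V θ N) (hθ₀ : 0 ≤ θ)
    (hθ : θ ≤ 1 / 2) (hδ₀ : 0 < δ) (hδ : δ ≤ 1 / 2) (hE : MeasurableSet E) (hEtop : volume E ≠ ⊤)
    {m : ℝ≥0∞} (hm : m ≠ ⊤) {β : ℝ} (hβ : θ / (1 - θ) < β) :
    (δ : ℝ≥0∞) ^ (2 * N) * (m ^ β * volume {ξ | 2⁻¹ * m < richness E δ ξ ∧ richness E δ ξ ≤ m}) ≤
      2 * (volume E ^ (1 + θ / (1 - θ)) * m ^ (β - θ / (1 - θ))) := by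
  have hγ₀ : 0 ≤ θ / (1 - θ) := div_nonneg hθ₀ (by linarith)
  rcases eq_or_ne m 0 with rfl | hm₀
  · simp [ENNReal.zero_rpow_of_pos (hγ₀.trans_lt hβ)]
  set X : Set V := {ξ | 2⁻¹ * m < richness E δ ξ ∧ richness E δ ξ ≤ m}
  set Ω : Set (V × V) := {g | δ ≤ volume (lineTimes E g) ∧ g.2 ∈ X}
  have hX : MeasurableSet X :=
    (measurableSet_lt measurable_const (measurable_richness hE δ)).inter
      (measurableSet_le (measurable_richness hE δ) measurable_const)
  have hΩ : MeasurableSet Ω :=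
    (measurableSet_le measurable_const (measurable_volume_lineTimes hE)).inter (measurable_snd hX)
  have hfiber (ξ : V) : volume {x | (x, ξ) ∈ Ω} ≤ m := by
    by_cases hξ : ξ ∈ X
    · exact (measure_mono fun x hx => hx.1).trans hξ.2
    · simp [Ω, hξ]
  have hlower : 2⁻¹ * m * volume X ≤ volume Ω := by
    rw [Measure.volume_eq_prod, Measure.prod_apply_symm hΩ]
    exact mul_measure_le_lintegral hX fun ξ hξ =>
      hξ.1.le.trans (measure_mono fun x hx => ⟨hx, hξ⟩)
  have h2 : (2 : ℝ≥0∞) * 2⁻¹ = 1 := ENNReal.mul_inv_cancel two_ne_zero ofNat_ne_top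
  have hsplit : m ^ β = m ^ (β - 1) * (2 * (2⁻¹ * m)) := by
    rw [← mul_assoc 2, h2, one_mul]
    nth_rw 3 [← ENNReal.rpow_one m]
    rw [← ENNReal.rpow_add _ _ hm₀ hm, sub_add_cancel]
  calc (δ : ℝ≥0∞) ^ (2 * N) * (m ^ β * volume X)
      = 2 * m ^ (β - 1) * ((δ : ℝ≥0∞) ^ (2 * N) * (2⁻¹ * m * volume X)) := by
        rw [hsplit]
        ring
    _ ≤ 2 * m ^ (β - 1) * ((δ : ℝ≥0∞) ^ (2 * N) * volume Ω) := by gcongr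
    _ ≤ 2 * m ^ (β - 1) * (volume E ^ (1 + θ / (1 - θ)) * m ^ (1 - θ / (1 - θ))) := by
        gcongr _ * ?_
        exact h.pow_mul_volume_le hθ hδ₀ hδ hE hEtop hΩ (fun g hg => hg.1) hfiber
    _ = 2 * (volume E ^ (1 + θ / (1 - θ)) * (m ^ (β - 1) * m ^ (1 - θ / (1 - θ)))) := by ring
    _ = 2 * (volume E ^ (1 + θ / (1 - θ)) * m ^ (β - θ / (1 - θ))) := by
        rw [← ENNReal.rpow_add _ _ hm₀ hm]
        congr 3
        ring

lemma DensityEstimate.pow_mul_lintegral_richness_rpow_le (h : DensityEstimate V θ N)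
    (hθ₀ : 0 ≤ θ) (hθ : θ ≤ 1 / 2) (hδ₀ : 0 < δ) (hδ : δ ≤ 1 / 2) (hE : MeasurableSet E)
    (hEtop : volume E ≠ ⊤) {β : ℝ} (hβ : θ / (1 - θ) < β) (hβ₁ : β ≤ 1) :
    (δ : ℝ≥0∞) ^ (2 * N + 1) * ∫⁻ ξ, richness E δ ξ ^ β ≤
      2 * (∑' j : ℕ, ((2⁻¹ : ℝ≥0∞) ^ (β - θ / (1 - θ))) ^ j) * volume E ^ (1 + β) := by
  set γ := θ / (1 - θ)
  set M : ℝ≥0∞ := volume E / δ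
  have hγ₀ : 0 ≤ γ := div_nonneg hθ₀ (by linarith)
  have hδ_ne : (δ : ℝ≥0∞) ≠ 0 := by exact_mod_cast hδ₀.ne'
  have hδ₁ : (δ : ℝ≥0∞) ≤ 1 := by exact_mod_cast hδ.trans (by norm_num)
  have hM : M ≠ ⊤ := ENNReal.div_ne_top hEtop hδ_ne
  have hlevel (j : ℕ) : (δ : ℝ≥0∞) ^ (2 * N) * ((2⁻¹ ^ j * M) ^ β *
      volume {ξ | 2⁻¹ ^ (j + 1) * M < richness E δ ξ ∧ richness E δ ξ ≤ 2⁻¹ ^ j * M}) ≤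
      2 * volume E ^ (1 + γ) * M ^ (β - γ) * (2⁻¹ ^ (β - γ)) ^ j := by
    have hbound := h.pow_mul_volume_richness_level_le hθ₀ hθ hδ₀ hδ hE hEtop
      (m := 2⁻¹ ^ j * M) (ENNReal.mul_ne_top (by simp) hM) hβ
    rw [← mul_assoc 2⁻¹, ← pow_succ'] at hbound
    refine hbound.trans_eq ?_
    rw [ENNReal.mul_rpow_of_nonneg _ _ (by linarith), ← ENNReal.rpow_natCast, ← ENNReal.rpow_mul,
      mul_comm (j : ℝ), ENNReal.rpow_mul, ENNReal.rpow_natCast]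
    ring
  calc (δ : ℝ≥0∞) ^ (2 * N + 1) * ∫⁻ ξ, richness E δ ξ ^ β
      ≤ δ ^ (2 * N + 1) * ∑' j : ℕ, (2⁻¹ ^ j * M) ^ β *
          volume {ξ | 2⁻¹ ^ (j + 1) * M < richness E δ ξ ∧ richness E δ ξ ≤ 2⁻¹ ^ j * M} := by
        gcongr
        exact lintegral_rpow_le_tsum_dyadic (measurable_richness hE δ) hM (richness_le hE hδ₀)
          (hγ₀.trans_lt hβ)
    _ ≤ δ * ∑' j : ℕ, 2 * volume E ^ (1 + γ) * M ^ (β - γ) * (2⁻¹ ^ (β - γ)) ^ j := by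
        rw [pow_succ', mul_assoc, ← ENNReal.tsum_mul_left]
        exact mul_le_mul_right (ENNReal.tsum_le_tsum hlevel) _
    _ = 2 * (∑' j : ℕ, ((2⁻¹ : ℝ≥0∞) ^ (β - γ)) ^ j) * (volume E ^ (1 + γ) *
          (δ * M ^ (β - γ))) := by
        rw [ENNReal.tsum_mul_left]
        ring
    _ ≤ 2 * (∑' j : ℕ, ((2⁻¹ : ℝ≥0∞) ^ (β - γ)) ^ j) * (volume E ^ (1 + γ) *
          volume E ^ (β - γ)) := by
        gcongr _ * (_ * ?_)
        simpa only [pow_one] using pow_mul_div_rpow_le hδ_ne hδ₁ (volume E) (sub_nonneg.mpr hβ.le)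
          (k := 1) (by push_cast; linarith)
    _ = 2 * (∑' j : ℕ, ((2⁻¹ : ℝ≥0∞) ^ (β - γ)) ^ j) * volume E ^ (1 + β) := by
        rw [← ENNReal.rpow_add_of_nonneg _ _ (by linarith) (by linarith)]
        congr 2
        ring

variable (V) in
/-- The restricted form of the mixed-norm estimate, `‖T 1_E‖_{L^{rβ}(L^r)}^{rβ} ≤ A |E|^(1+β)`,
the integral in the direction running over all of `V`. -/
def RestrictedEstimate (r β : ℝ) (A : ℝ≥0∞) : Prop :=
  ∀ E : Set (V × ℝ), MeasurableSet E → volume E ≠ ⊤ →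
    ∫⁻ ξ, (∫⁻ x, volume (lineTimes E (x, ξ)) ^ r) ^ β ≤ A * volume E ^ (1 + β)

lemma DensityEstimate.exists_restrictedEstimate (h : DensityEstimate V θ N) (hθ₀ : 0 ≤ θ)
    (hθ : θ ≤ 1 / 2) {β : ℝ} (hβ : θ / (1 - θ) < β) (hβ₁ : β ≤ 1) {r : ℝ}
    (hr : r * β = 2 * N + 2) : ∃ A ≠ ⊤, RestrictedEstimate V r β A := by
  have hβ₀ : 0 < β := (div_nonneg hθ₀ (by linarith)).trans_lt hβ
  set S : ℝ≥0∞ := ∑' j : ℕ, ((2⁻¹ : ℝ≥0∞) ^ (β - θ / (1 - θ))) ^ j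
  have hS : S ≠ ⊤ := by
    have hlt : (2⁻¹ : ℝ≥0∞) ^ (β - θ / (1 - θ)) < 1 :=
      ENNReal.rpow_lt_one (ENNReal.inv_lt_one.mpr one_lt_two) (sub_pos.mpr hβ)
    simp only [S, ENNReal.tsum_geometric]
    exact ENNReal.inv_ne_top.mpr (tsub_pos_of_lt hlt).ne'
  refine ⟨2 ^ (2 * N + 1 + 1) * (2 * S), by finiteness, fun E hE hEtop => ?_⟩
  rw [mul_assoc (2 ^ (2 * N + 1 + 1))]
  refine lintegral_rpow_lintegral_rpow_le (measurable_volume_lineTimes hE)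
    (volume_lineTimes_le_one E) hβ₀ hβ₁ (K := 2 * N + 1) (by push_cast; linarith) fun δ hδ₀ hδ => ?_
  exact h.pow_mul_lintegral_richness_rpow_le hθ₀ hθ hδ₀ hδ hE hEtop hβ hβ₁

end RestrictedType

section StrongType

lemma rpow_tsum_le_rpow_tsum_inv_mul_tsum {ι : Type*} (a : ι → ℝ≥0∞) {ω : ι → ℝ≥0∞}
    (hω₀ : ∀ i, ω i ≠ 0) (hω : ∀ i, ω i ≠ ⊤) {r : ℝ} (hr : 0 < r) :
    (∑' i, a i) ^ r ≤ (∑' i, (ω i)⁻¹) ^ r * ∑' i, (ω i * a i) ^ r := by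
  set S := ∑' i, (ω i * a i) ^ r
  have hterm (i : ι) : a i ≤ (ω i)⁻¹ * S ^ r⁻¹ := by
    rw [← ENNReal.mul_le_iff_le_inv (hω₀ i) (hω i), ENNReal.le_rpow_inv_iff hr]
    exact ENNReal.le_tsum (f := fun i => (ω i * a i) ^ r) i
  calc (∑' i, a i) ^ r ≤ (∑' i, (ω i)⁻¹ * S ^ r⁻¹) ^ r := by
        gcongr with i
        exact hterm i
    _ = (∑' i, (ω i)⁻¹) ^ r * S := by
        rw [ENNReal.tsum_mul_right, ENNReal.mul_rpow_of_nonneg _ _ hr.le,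
          ENNReal.rpow_inv_rpow hr.ne']

lemma lintegral_rpow_lintegral_rpow_const_mul {α β : Type*} [MeasurableSpace α]
    [MeasurableSpace β] (μ : Measure α) (ν : Measure β) {c : ℝ≥0∞} (hc : c ≠ ⊤)
    (f : α → β → ℝ≥0∞) {r b : ℝ} (hr : 0 ≤ r) (hb : 0 ≤ b) :
    ∫⁻ y, (∫⁻ x, (c * f x y) ^ r ∂μ) ^ b ∂ν =
      c ^ (r * b) * ∫⁻ y, (∫⁻ x, f x y ^ r ∂μ) ^ b ∂ν := by
  have hcr : c ^ r ≠ ⊤ := ENNReal.rpow_ne_top_of_nonneg hr hc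
  simp only [ENNReal.mul_rpow_of_nonneg _ _ hr, lintegral_const_mul' _ _ hcr,
    ENNReal.mul_rpow_of_nonneg _ _ hb, ENNReal.rpow_mul,
    lintegral_const_mul' _ _ (ENNReal.rpow_ne_top_of_nonneg hb hcr)]

lemma lintegral_rpow_lintegral_rpow_tsum_le {α β ι : Type*} [MeasurableSpace α]
    [MeasurableSpace β] [Countable ι] {μ : Measure α} [SFinite μ] {ν : Measure β}
    {f : ι → α × β → ℝ≥0∞} (hf : ∀ i, Measurable (f i)) {ω : ι → ℝ≥0∞} (hω₀ : ∀ i, ω i ≠ 0)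
    (hω : ∀ i, ω i ≠ ⊤) (hsum : ∑' i, (ω i)⁻¹ ≠ ⊤) {r b : ℝ} (hr : 0 < r) (hb₀ : 0 < b)
    (hb : b ≤ 1) :
    ∫⁻ y, (∫⁻ x, (∑' i, f i (x, y)) ^ r ∂μ) ^ b ∂ν ≤
      (∑' i, (ω i)⁻¹) ^ (r * b) *
        ∑' i, ω i ^ (r * b) * ∫⁻ y, (∫⁻ x, f i (x, y) ^ r ∂μ) ^ b ∂ν := by
  set W := ∑' i, (ω i)⁻¹
  have hpointwise (y : β) : (∫⁻ x, (∑' i, f i (x, y)) ^ r ∂μ) ^ b ≤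
      W ^ (r * b) * ∑' i, ω i ^ (r * b) * (∫⁻ x, f i (x, y) ^ r ∂μ) ^ b :=
    calc (∫⁻ x, (∑' i, f i (x, y)) ^ r ∂μ) ^ b
        ≤ (∫⁻ x, W ^ r * ∑' i, ω i ^ r * f i (x, y) ^ r ∂μ) ^ b := by
          gcongr with x
          simpa only [ENNReal.mul_rpow_of_nonneg _ _ hr.le] using
            rpow_tsum_le_rpow_tsum_inv_mul_tsum (fun i => f i (x, y)) hω₀ hω hr
      _ = W ^ (r * b) * (∑' i, ω i ^ r * ∫⁻ x, f i (x, y) ^ r ∂μ) ^ b := by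
          rw [lintegral_const_mul' _ _ (ENNReal.rpow_ne_top_of_nonneg hr.le hsum),
            ENNReal.mul_rpow_of_nonneg _ _ hb₀.le, ← ENNReal.rpow_mul,
            lintegral_tsum fun i => by fun_prop]
          simp_rw [lintegral_const_mul' _ _ (ENNReal.rpow_ne_top_of_nonneg hr.le (hω _))]
      _ ≤ W ^ (r * b) * ∑' i, (ω i ^ r * ∫⁻ x, f i (x, y) ^ r ∂μ) ^ b := by
          gcongr
          exact rpow_tsum_le_tsum_rpow _ hb₀ hb
      _ = W ^ (r * b) * ∑' i, ω i ^ (r * b) * (∫⁻ x, f i (x, y) ^ r ∂μ) ^ b := by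
          simp only [ENNReal.mul_rpow_of_nonneg _ _ hb₀.le, ENNReal.rpow_mul]
  have hmeas (i : ι) : Measurable fun y => (∫⁻ x, f i (x, y) ^ r ∂μ) ^ b :=
    (((hf i).pow_const r).lintegral_prod_left').pow_const b
  have hrb : 0 ≤ r * b := (mul_pos hr hb₀).le
  refine (lintegral_mono hpointwise).trans_eq ?_
  rw [lintegral_const_mul' _ _ (ENNReal.rpow_ne_top_of_nonneg hrb hsum),
    lintegral_tsum fun i => ((hmeas i).const_mul _).aemeasurable]
  simp_rw [lintegral_const_mul' _ _ (ENNReal.rpow_ne_top_of_nonneg hrb (hω _))]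

lemma tsum_int_two_rpow_neg_mul_abs_ne_top {κ : ℝ} (hκ : 0 < κ) :
    ∑' j : ℤ, (2 : ℝ≥0∞) ^ (-(κ * |(j : ℝ)|)) ≠ ⊤ := by
  have hgeom : Summable fun k : ℕ => (2 : ℝ) ^ (-(κ * k)) := by
    simp only [← neg_mul, Real.rpow_mul_natCast zero_le_two]
    exact summable_geometric_of_lt_one (by positivity)
      (Real.rpow_lt_one_of_one_lt_of_neg one_lt_two (by linarith))
  have hsum : Summable fun j : ℤ => (2 : ℝ) ^ (-(κ * |(j : ℝ)|)) :=
    .of_nat_of_neg (by simpa using hgeom) (by simpa using hgeom)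
  simpa only [← ENNReal.ofReal_rpow_of_pos two_pos, ENNReal.ofReal_ofNat] using
    hsum.tsum_ofReal_ne_top

lemma le_tsum_int_indicator_two_rpow {α : Type*} (f : α → ℝ≥0∞) (a : α) :
    f a ≤ ∑' j : ℤ, {x | (2 : ℝ≥0∞) ^ (j : ℝ) ≤ f x}.indicator (fun _ => 2 ^ ((j : ℝ) + 1)) a := by
  rcases eq_or_ne (f a) 0 with h₀ | h₀
  · exact h₀.trans_le zero_le
  rcases eq_or_ne (f a) ⊤ with htop | htop
  · have hone (k : ℕ) : 1 ≤ {x | (2 : ℝ≥0∞) ^ ((k : ℤ) : ℝ) ≤ f x}.indicator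
        (fun _ => (2 : ℝ≥0∞) ^ (((k : ℤ) : ℝ) + 1)) a := by
      rw [Set.indicator_of_mem (by simp [htop])]
      exact ENNReal.one_le_rpow one_le_two (by positivity)
    calc f a ≤ ∑' _ : ℕ, (1 : ℝ≥0∞) := by
          rw [ENNReal.tsum_const_eq_top_of_ne_zero one_ne_zero]
          exact le_top
      _ ≤ _ := (ENNReal.tsum_le_tsum hone).trans
          (ENNReal.tsum_comp_le_tsum_of_injective Nat.cast_injective _)
  · obtain ⟨j, hle, hlt⟩ := ENNReal.exists_mem_Ico_zpow h₀ htop one_lt_two ofNat_ne_top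
    rw [← ENNReal.rpow_intCast] at hle hlt
    push_cast at hlt
    refine le_trans ?_ (ENNReal.le_tsum j)
    rw [Set.indicator_of_mem (show a ∈ {x | (2 : ℝ≥0∞) ^ (j : ℝ) ≤ f x} from hle)]
    exact hlt.le

lemma volume_le_two_rpow_of_lintegral_rpow_le_one {α : Type*} [MeasureSpace α] {f : α → ℝ≥0∞}
    (hf : Measurable f) {p : ℝ} (hp : 0 < p) (hfp : ∫⁻ z, f z ^ p ≤ 1) (j : ℝ) :
    volume {z | (2 : ℝ≥0∞) ^ j ≤ f z} ≤ 2 ^ (-(j * p)) :=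
  calc volume {z | (2 : ℝ≥0∞) ^ j ≤ f z}
      ≤ volume {z | (2 : ℝ≥0∞) ^ (j * p) ≤ f z ^ p} := by
        simp only [ENNReal.rpow_mul, ENNReal.rpow_le_rpow_iff hp, le_refl]
    _ ≤ (∫⁻ z, f z ^ p) / 2 ^ (j * p) :=
        meas_ge_le_lintegral_div (by fun_prop)
          (by simp) (ENNReal.rpow_ne_top_of_ne_zero two_ne_zero ofNat_ne_top)
    _ ≤ 2 ^ (-(j * p)) := by
        rw [ENNReal.rpow_neg, ← one_div]
        gcongr

variable {V : Type*} [NormedAddCommGroup V] [NormedSpace ℝ V] [FiniteDimensional ℝ V]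
  [MeasureSpace V] [BorelSpace V] [(volume : Measure V).IsAddHaarMeasure]

lemma lintegral_rpow_volume_lineTimes_le {E : Set (V × ℝ)} (hE : MeasurableSet E) {r : ℝ}
    (hr : 1 ≤ r) (ξ : V) : ∫⁻ x, volume (lineTimes E (x, ξ)) ^ r ≤ volume E :=
  (lintegral_mono fun x => (ENNReal.rpow_le_rpow_of_exponent_ge
    (volume_lineTimes_le_one E (x, ξ)) hr).trans_eq (ENNReal.rpow_one _)).trans
    (lintegral_volume_lineTimes_le hE ξ)

lemma rpow_le_two_rpow_neg_of_le_two_rpow_neg {v : ℝ≥0∞} {j q β η b : ℝ} (hq : 0 ≤ q)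
    (hβ : 0 ≤ β) (hb : 0 ≤ b) (hv : v ≤ 2 ^ (-(j * (q * (1 + η) / (1 + β)))))
    (hexp : j * (1 + β) + η * |j| * (1 + β) ≤ j * (1 + η) * b) :
    v ^ b ≤ 2 ^ (-(q * (j + η * |j|))) :=
  calc v ^ b ≤ (2 ^ (-(j * (q * (1 + η) / (1 + β))))) ^ b := by gcongr
    _ = 2 ^ (-(j * (q * (1 + η) / (1 + β))) * b) := (ENNReal.rpow_mul _ _ _).symm
    _ ≤ 2 ^ (-(q * (j + η * |j|))) := by
        refine ENNReal.rpow_le_rpow_of_exponent_le one_le_two ?_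
        rw [neg_mul, neg_le_neg_iff]
        calc q * (j + η * |j|) = q * (j * (1 + β) + η * |j| * (1 + β)) / (1 + β) := by field_simp
          _ ≤ q * (j * (1 + η) * b) / (1 + β) := by gcongr
          _ = j * (q * (1 + η) / (1 + β)) * b := by ring

/-- Small sets are controlled by the restricted estimate and large ones by the trivial bound
`‖T 1_E‖_{L^∞(L^r)} ≤ |E|^(1/r)`. -/
lemma RestrictedEstimate.setLIntegral_le_two_rpow {r β : ℝ} {A : ℝ≥0∞}
    (h : RestrictedEstimate V r β A) (hr : 1 ≤ r) (hβ₀ : 0 < β) (hβ : β ≤ 1) {η : ℝ} (hη₀ : 0 < η)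
    (hη : η ≤ 1 / 4) (B : Set V) {j : ℝ} {E : Set (V × ℝ)} (hE : MeasurableSet E)
    (hEj : volume E ≤ 2 ^ (-(j * (r * β * (1 + η) / (1 + β))))) :
    ∫⁻ ξ in B, (∫⁻ x, volume (lineTimes E (x, ξ)) ^ r) ^ β ≤
      (A + volume B) * 2 ^ (-(r * β * (j + η * |j|))) := by
  have hEtop : volume E ≠ ⊤ :=
    ne_top_of_le_ne_top (ENNReal.rpow_ne_top_of_ne_zero two_ne_zero ofNat_ne_top) hEj
  rcases le_or_gt 0 j with hj | hj
  · calc ∫⁻ ξ in B, (∫⁻ x, volume (lineTimes E (x, ξ)) ^ r) ^ β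
        ≤ A * volume E ^ (1 + β) := (setLIntegral_le_lintegral _ _).trans (h E hE hEtop)
      _ ≤ (A + volume B) * 2 ^ (-(r * β * (j + η * |j|))) := by
          gcongr
          · exact le_self_add
          · refine rpow_le_two_rpow_neg_of_le_two_rpow_neg (by positivity) hβ₀.le (by linarith) hEj
              (le_of_eq ?_)
            rw [abs_of_nonneg hj]
            ring
  · calc ∫⁻ ξ in B, (∫⁻ x, volume (lineTimes E (x, ξ)) ^ r) ^ β
        ≤ ∫⁻ _ in B, volume E ^ β := by
          gcongr with ξ
          exact lintegral_rpow_volume_lineTimes_le hE hr ξ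
      _ = volume B * volume E ^ β := by rw [setLIntegral_const, mul_comm]
      _ ≤ (A + volume B) * 2 ^ (-(r * β * (j + η * |j|))) := by
          gcongr
          · exact le_add_self
          · refine rpow_le_two_rpow_neg_of_le_two_rpow_neg (by positivity) hβ₀.le hβ₀.le hEj ?_
            have hη_eq : j * (1 + η) * β - (j * (1 + β) + η * |j| * (1 + β)) =
                -j * (1 - η - 2 * η * β) := by
              rw [abs_of_neg hj]
              ring
            have hη_nonneg : 0 ≤ 1 - η - 2 * η * β := by nlinarith
            linarith [mul_nonneg (neg_nonneg.mpr hj.le) hη_nonneg]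

lemma RestrictedEstimate.two_rpow_mul_setLIntegral_superlevel_le {r β : ℝ} {A : ℝ≥0∞}
    (h : RestrictedEstimate V r β A) (hr : 1 ≤ r) (hβ₀ : 0 < β) (hβ : β ≤ 1) {η : ℝ} (hη₀ : 0 < η)
    (hη : η ≤ 1 / 4) (B : Set V) {f : V × ℝ → ℝ≥0∞} (hf : Measurable f)
    (hfp : ∫⁻ z, f z ^ (r * β * (1 + η) / (1 + β)) ≤ 1) (j : ℝ) :
    (2 ^ (η / 2 * |j|)) ^ (r * β) *
        ∫⁻ ξ in B, (∫⁻ x, (2 ^ (j + 1) * volume (lineTimes {z | 2 ^ j ≤ f z} (x, ξ))) ^ r) ^ β ≤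
      (A + volume B) * 2 ^ (r * β) * 2 ^ (-(r * β * (η / 2) * |j|)) := by
  have htwo : (2 : ℝ≥0∞) ^ (j + 1) ≠ ⊤ :=
    ENNReal.rpow_ne_top_of_ne_zero two_ne_zero ofNat_ne_top
  rw [lintegral_rpow_lintegral_rpow_const_mul volume _ htwo
    (fun x ξ => volume (lineTimes {z | 2 ^ j ≤ f z} (x, ξ))) (zero_le_one.trans hr) hβ₀.le]
  calc (2 ^ (η / 2 * |j|)) ^ (r * β) * ((2 ^ (j + 1)) ^ (r * β) *
        ∫⁻ ξ in B, (∫⁻ x, volume (lineTimes {z | 2 ^ j ≤ f z} (x, ξ)) ^ r) ^ β)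
      ≤ (2 ^ (η / 2 * |j|)) ^ (r * β) * ((2 ^ (j + 1)) ^ (r * β) *
        ((A + volume B) * 2 ^ (-(r * β * (j + η * |j|))))) := by
        gcongr _ * (_ * ?_)
        exact h.setLIntegral_le_two_rpow hr hβ₀ hβ hη₀ hη B
          (measurableSet_le measurable_const hf)
          (volume_le_two_rpow_of_lintegral_rpow_le_one hf (by positivity) hfp j)
    _ = (A + volume B) * ((2 ^ (η / 2 * |j|)) ^ (r * β) * (2 ^ (j + 1)) ^ (r * β) *
          2 ^ (-(r * β * (j + η * |j|)))) := by ring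
    _ = (A + volume B) * 2 ^ (r * β) * 2 ^ (-(r * β * (η / 2) * |j|)) := by
        simp only [← ENNReal.rpow_mul,
          ← ENNReal.rpow_add _ _ (two_ne_zero' ℝ≥0∞) ofNat_ne_top, mul_assoc (A + volume B)]
        congr 2
        ring

end StrongType

section XRay

lemma xrayT_le_tsum_volume_lineTimes {n : ℕ} {f : Euc n × ℝ → ℝ≥0∞} (hf : Measurable f)
    (ξ x : Euc n) :
    xrayT f ξ x ≤ ∑' j : ℤ, 2 ^ ((j : ℝ) + 1) *
      volume (lineTimes {z | (2 : ℝ≥0∞) ^ (j : ℝ) ≤ f z} (x, ξ)) := by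
  set E : ℤ → Set (Euc n × ℝ) := fun j => {z | (2 : ℝ≥0∞) ^ (j : ℝ) ≤ f z}
  have hline : Measurable fun t : ℝ => (x + t • ξ, t) := by fun_prop
  have hE (j : ℤ) : MeasurableSet {t : ℝ | (x + t • ξ, t) ∈ E j} :=
    hline (measurableSet_le measurable_const hf)
  calc xrayT f ξ x
      ≤ ∫⁻ t in Set.Ioc (0 : ℝ) 1, ∑' j : ℤ, {t : ℝ | (x + t • ξ, t) ∈ E j}.indicator
          (fun _ => 2 ^ ((j : ℝ) + 1)) t :=
        lintegral_mono fun t => le_tsum_int_indicator_two_rpow (fun t => f (x + t • ξ, t)) t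
    _ = ∑' j : ℤ, 2 ^ ((j : ℝ) + 1) * volume (lineTimes (E j) (x, ξ)) := by
        rw [lintegral_tsum fun j => (measurable_const.indicator (hE j)).aemeasurable]
        refine tsum_congr fun j => ?_
        rw [lintegral_indicator_const (hE j), Measure.restrict_apply (hE j), Set.inter_comm]
        rfl

lemma RestrictedEstimate.exists_lintegral_xrayT_le {n : ℕ} {r β : ℝ} {A : ℝ≥0∞}
    (h : RestrictedEstimate (Euc n) r β A) (hA : A ≠ ⊤) (hr : 1 ≤ r) (hβ₀ : 0 < β) (hβ : β ≤ 1)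
    {η : ℝ} (hη₀ : 0 < η) (hη : η ≤ 1 / 4) {B : Set (Euc n)} (hB : volume B ≠ ⊤) :
    ∃ K ≠ ⊤, ∀ f : Euc n × ℝ → ℝ≥0∞, Measurable f →
      ∫⁻ z, f z ^ (r * β * (1 + η) / (1 + β)) ≤ 1 →
      ∫⁻ ξ in B, (∫⁻ x, xrayT f ξ x ^ r) ^ β ≤ K := by
  set q := r * β
  have hq : 0 < q := by positivity
  set ω : ℤ → ℝ≥0∞ := fun j => 2 ^ (η / 2 * |(j : ℝ)|)
  have hω (j : ℤ) : ω j ≠ ⊤ := ENNReal.rpow_ne_top_of_nonneg (by positivity) ofNat_ne_top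
  have hω₀ (j : ℤ) : ω j ≠ 0 := by simp [ω]
  have hW : ∑' j, (ω j)⁻¹ ≠ ⊤ := by
    simpa only [ω, ← ENNReal.rpow_neg] using tsum_int_two_rpow_neg_mul_abs_ne_top (half_pos hη₀)
  have hS := tsum_int_two_rpow_neg_mul_abs_ne_top (κ := q * (η / 2)) (by positivity)
  set S := ∑' j : ℤ, (2 : ℝ≥0∞) ^ (-(q * (η / 2) * |(j : ℝ)|))
  refine ⟨(∑' j, (ω j)⁻¹) ^ q * ((A + volume B) * 2 ^ q * S), by finiteness, fun f hf hfp => ?_⟩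
  set E : ℤ → Set (Euc n × ℝ) := fun j => {z | (2 : ℝ≥0∞) ^ (j : ℝ) ≤ f z}
  have hE (j : ℤ) : MeasurableSet (E j) := measurableSet_le measurable_const hf
  calc ∫⁻ ξ in B, (∫⁻ x, xrayT f ξ x ^ r) ^ β
      ≤ ∫⁻ ξ in B, (∫⁻ x, (∑' j : ℤ, 2 ^ ((j : ℝ) + 1) *
          volume (lineTimes (E j) (x, ξ))) ^ r) ^ β := by
        gcongr with ξ x
        exact xrayT_le_tsum_volume_lineTimes hf ξ x
    _ ≤ (∑' j, (ω j)⁻¹) ^ q * ∑' j : ℤ, ω j ^ q *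
          ∫⁻ ξ in B, (∫⁻ x, (2 ^ ((j : ℝ) + 1) * volume (lineTimes (E j) (x, ξ))) ^ r) ^ β :=
        lintegral_rpow_lintegral_rpow_tsum_le
          (f := fun (j : ℤ) g => 2 ^ ((j : ℝ) + 1) * volume (lineTimes (E j) g))
          (fun j => (measurable_volume_lineTimes (hE j)).const_mul _) hω₀ hω hW
          (one_pos.trans_le hr) hβ₀ hβ
    _ ≤ (∑' j, (ω j)⁻¹) ^ q * ((A + volume B) * 2 ^ q * S) := by
        exact mul_le_mul_right ((ENNReal.tsum_le_tsum fun j : ℤ =>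
          h.two_rpow_mul_setLIntegral_superlevel_le hr hβ₀ hβ hη₀ hη B hf hfp j).trans_eq
            ENNReal.tsum_mul_left) _

lemma xrayT_const_mul {n : ℕ} {a : ℝ≥0∞} (ha : a ≠ ⊤) (f : Euc n × ℝ → ℝ≥0∞) (ξ x : Euc n) :
    xrayT (fun z => a * f z) ξ x = a * xrayT f ξ x :=
  lintegral_const_mul' _ _ ha

lemma kakeyaMixedNorm_const_mul {n : ℕ} {q r : ℝ} (hq : 0 < q) (hr : 0 < r) (C : ℝ) {a : ℝ≥0∞}
    (ha : a ≠ ⊤) (f : Euc n × ℝ → ℝ≥0∞) :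
    kakeyaMixedNorm q r C (fun z => a * f z) = a * kakeyaMixedNorm q r C f := by
  unfold kakeyaMixedNorm
  simp only [xrayT_const_mul ha]
  rw [lintegral_rpow_lintegral_rpow_const_mul volume _ ha (fun x ξ => xrayT f ξ x) hr.le
      (by positivity), mul_div_cancel₀ q hr.ne', ENNReal.mul_rpow_of_nonneg _ _ (by positivity),
    one_div, ENNReal.rpow_rpow_inv hq.ne']

lemma lpNorm_const_mul {α : Type*} [MeasureSpace α] {p : ℝ} (hp : 0 < p) {a : ℝ≥0∞} (ha : a ≠ ⊤)
    (f : α → ℝ≥0∞) : _root_.lpNorm p (fun z => a * f z) = a * _root_.lpNorm p f := by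
  unfold _root_.lpNorm
  simp only [ENNReal.mul_rpow_of_nonneg _ _ hp.le]
  rw [lintegral_const_mul' _ _ (ENNReal.rpow_ne_top_of_nonneg hp.le ha),
    ENNReal.mul_rpow_of_nonneg _ _ (by positivity), one_div, ENNReal.rpow_rpow_inv hp.ne']

lemma kakeyaMixedNorm_le_mul_lpNorm_of_lpNorm_le_one {n : ℕ} {p q r C : ℝ} (hp : 0 < p)
    (hq : 0 < q) (hr : 0 < r) {A : ℝ≥0∞} (hA₀ : A ≠ 0) (hA : A ≠ ⊤)
    (h : ∀ f : Euc n × ℝ → ℝ≥0∞, Measurable f → _root_.lpNorm p f ≤ 1 →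
      kakeyaMixedNorm q r C f ≤ A)
    {f : Euc n × ℝ → ℝ≥0∞} (hf : Measurable f) :
    kakeyaMixedNorm q r C f ≤ A * _root_.lpNorm p f := by
  rw [mul_comm, ← ENNReal.div_le_iff hA₀ hA]
  refine le_of_forall_gt_imp_ge_of_dense fun c hc => ?_
  rcases eq_or_ne c ⊤ with rfl | hctop
  · exact le_top
  have hc₀ : c ≠ 0 := (zero_le.trans_lt hc).ne'
  have hcinv : c⁻¹ ≠ ⊤ := ENNReal.inv_ne_top.mpr hc₀
  have hunit : _root_.lpNorm p (fun z => c⁻¹ * f z) ≤ 1 := by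
    rw [lpNorm_const_mul hp hcinv, ENNReal.inv_mul_le_iff hc₀ hctop, mul_one]
    exact hc.le
  have hbound := h _ (hf.const_mul c⁻¹) hunit
  rw [kakeyaMixedNorm_const_mul hq hr C hcinv, ENNReal.inv_mul_le_iff hc₀ hctop] at hbound
  exact (ENNReal.div_le_iff hA₀ hA).mpr hbound

lemma RestrictedEstimate.exists_kakeyaMixedNorm_le {n : ℕ} {r β : ℝ} {A₀ : ℝ≥0∞}
    (h : RestrictedEstimate (Euc n) r β A₀) (hA₀ : A₀ ≠ ⊤) (hr : 1 ≤ r) (hβ₀ : 0 < β) (hβ : β ≤ 1)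
    {η : ℝ} (hη₀ : 0 < η) (hη : η ≤ 1 / 4) (C : ℝ) :
    ∃ A : ℝ, 0 < A ∧ ∀ {f : Euc n × ℝ → ℝ≥0∞}, Measurable f → kakeyaMixedNorm (r * β) r C f ≤
      ENNReal.ofReal A * _root_.lpNorm (r * β * (1 + η) / (1 + β)) f := by
  obtain ⟨K, hK, hstrong⟩ := h.exists_lintegral_xrayT_le hA₀ hr hβ₀ hβ hη₀ hη
    (B := Metric.ball 0 C) measure_ball_lt_top.ne
  have hr₀ : 0 < r := one_pos.trans_le hr
  have hp : 0 < r * β * (1 + η) / (1 + β) := by positivity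
  have hKtop : K ^ (1 / (r * β)) ≠ ⊤ := ENNReal.rpow_ne_top_of_nonneg (by positivity) hK
  have hpos : 0 < (K ^ (1 / (r * β))).toReal + 1 := by positivity
  refine ⟨(K ^ (1 / (r * β))).toReal + 1, hpos, fun {f} hf => ?_⟩
  refine kakeyaMixedNorm_le_mul_lpNorm_of_lpNorm_le_one hp (by positivity) hr₀
    (ENNReal.ofReal_pos.mpr hpos).ne' ofReal_ne_top (fun g hg hgp => ?_) hf
  have hgp' : ∫⁻ z, g z ^ (r * β * (1 + η) / (1 + β)) ≤ 1 := by
    rwa [_root_.lpNorm, one_div, ENNReal.rpow_inv_le_iff hp, ENNReal.one_rpow] at hgp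
  calc kakeyaMixedNorm (r * β) r C g ≤ K ^ (1 / (r * β)) := by
        rw [kakeyaMixedNorm, mul_div_cancel_left₀ β hr₀.ne']
        gcongr
        exact hstrong g hg hgp'
    _ ≤ ENNReal.ofReal ((K ^ (1 / (r * β))).toReal + 1) := by
        rw [ENNReal.le_ofReal_iff_toReal_le hKtop hpos.le]
        exact (lt_add_one _).le

end XRay

section Exponents

lemma exists_densityEstimate_exponents (V : Type*) [NormedAddCommGroup V] [NormedSpace ℝ V]
    [FiniteDimensional ℝ V] [MeasureSpace V] [BorelSpace V]
    [(volume : Measure V).IsAddHaarMeasure] {ε : ℝ} (hε : 0 < ε) :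
    ∃ (θ β η : ℝ) (N : ℕ), 0 ≤ θ ∧ θ ≤ 1 / 2 ∧ DensityEstimate V θ N ∧ θ / (1 - θ) < β ∧
      1 / 2 ≤ β ∧ β ≤ 1 ∧ 0 < η ∧ η ≤ 1 / 4 ∧
      1 + √2 - ε < (1 + 1 / β) / (1 + η) ∧ 1 + √2 / 2 - ε < (1 + β) / (1 + η) := by
  have hsq : √2 * √2 = 2 := Real.mul_self_sqrt zero_le_two
  have hlower : 1.4 < √2 := Real.lt_sqrt_of_sq_lt (by norm_num)
  have hupper : √2 < 1.42 := (Real.sqrt_lt' (by norm_num)).mpr (by norm_num)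
  obtain ⟨κ, hκ₀, hκε, hκ⟩ : ∃ κ : ℝ, 0 < κ ∧ κ ≤ ε / 8 ∧ κ ≤ 1 / 10 :=
    ⟨min (ε / 8) (1 / 10), by positivity, min_le_left _ _, min_le_right _ _⟩
  obtain ⟨η, hη₀, hηε, hη⟩ : ∃ η : ℝ, 0 < η ∧ η ≤ ε / 16 ∧ η ≤ 1 / 4 :=
    ⟨min (ε / 16) (1 / 4), by positivity, min_le_left _ _, min_le_right _ _⟩
  obtain ⟨θ, N, hθ_lower, hθ_upper, hθ, h⟩ :=
    exists_densityEstimate_near V (κ := κ / 8) (by positivity)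
  have hβ₀ : 0 < √2 / 2 + κ := by linarith
  have hβ_inv : √2 - 2 * κ ≤ 1 / (√2 / 2 + κ) := by
    rw [le_div_iff₀ hβ₀]
    nlinarith
  refine ⟨θ, √2 / 2 + κ, η, N, by linarith, hθ, h, ?_, by linarith, by linarith, hη₀, hη, ?_, ?_⟩
  · have : (√2 / 2 + κ) * (2 - √2 - κ / 8) ≤ (√2 / 2 + κ) * (1 - θ) :=
      mul_le_mul_of_nonneg_left (by linarith) hβ₀.le
    rw [div_lt_iff₀ (by linarith)]
    nlinarith
  · rw [lt_div_iff₀ (by linarith)]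
    nlinarith
  · rw [lt_div_iff₀ (by linarith)]
    nlinarith

end Exponents

theorem statement1_general (n : ℕ) (ε : ℝ) (hε : 0 < ε) (C : ℝ) :
    ∃ p q r : ℝ, 1 ≤ p ∧ p ≤ q ∧ q ≤ r ∧
      r / p > 1 + Real.sqrt 2 - ε ∧ q / p > 1 + Real.sqrt 2 / 2 - ε ∧
      ∃ A : ℝ, 0 < A ∧ ∀ f : Euc n × ℝ → ℝ≥0∞, Measurable f →
        kakeyaMixedNorm q r C f ≤ ENNReal.ofReal A * lpNorm p f := by
  obtain ⟨θ, β, η, N, hθ₀, hθ, hdens, hθβ, hβ_half, hβ, hη₀, hη, hrp, hqp⟩ :=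
    exists_densityEstimate_exponents (Euc n) hε
  have hβ₀ : 0 < β := by linarith
  set q : ℝ := 2 * N + 2
  have hq : 2 ≤ q := le_add_of_nonneg_left (by positivity)
  have hrβ : q / β * β = q := div_mul_cancel₀ q hβ₀.ne'
  have hqr : q ≤ q / β := le_div_self (by linarith) hβ₀ hβ
  obtain ⟨A₀, hA₀, hrestricted⟩ := hdens.exists_restrictedEstimate hθ₀ hθ hθβ hβ hrβ
  obtain ⟨A, hA, hbound⟩ := hrβ ▸
    hrestricted.exists_kakeyaMixedNorm_le hA₀ (by linarith) hβ₀ hβ hη₀ hη C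
  refine ⟨q * (1 + η) / (1 + β), q, q / β, ?_, ?_, hqr, ?_, ?_, A, hA, fun f hf => hbound hf⟩
  · rw [one_le_div (by linarith)]
    nlinarith
  · rw [div_le_iff₀ (by linarith)]
    nlinarith
  · convert hrp using 1
    field_simp
    ring
  · convert hqp using 1
    field_simp

/-- Theorem 2: for `d ≥ 4` and `ε > 0` there are exponents `1 ≤ p ≤ q ≤ r < ∞`
with `r/p > 1 + √2 - ε` and `q/p > 1 + √2/2 - ε` for which the Kakeya-order mixed
norm bound holds. -/
theorem statement1 (d : ℕ) (hd : 4 ≤ d) (ε : ℝ) (hε : 0 < ε) (C : ℝ) (hC : 0 < C) :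
    ∃ p q r : ℝ, 1 ≤ p ∧ p ≤ q ∧ q ≤ r ∧
      r / p > 1 + Real.sqrt 2 - ε ∧ q / p > 1 + Real.sqrt 2 / 2 - ε ∧
      ∃ A : ℝ, 0 < A ∧ ∀ f : Euc (d - 1) × ℝ → ℝ≥0∞, Measurable f →
        kakeyaMixedNorm q r C f ≤ ENNReal.ofReal A * lpNorm p f :=
  statement1_general (d - 1) ε hε C

end
end

section
/- Let k ≥ 2 and d ≥ 5 + k be integers, set p = d/(k + 3/4), and let q, r ∈ [1,∞) satisfy 1 + (d−k)/r > d/p and q < (4(d−(k−1))+3)/4. Then for every R > 0 there is a constant A > 0 such that for every nonnegative measurable function f on ℝ^d supported in the ball B(0,R), (∫_{G(d,k)} (∫_{M^⊥} T^k[f](M + x)^r dx)^{q/r} dγ(M))^{1/q} ≤ A ‖f‖_{L^p(ℝ^d)}. -/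
open MeasureTheory ENNReal

noncomputable section

/-- The orthogonal group `O(d)`, with its Borel σ-algebra. -/
instance (d : ℕ) : MeasurableSpace (Matrix.orthogonalGroup (Fin d) ℝ) := borel _
instance (d : ℕ) : BorelSpace (Matrix.orthogonalGroup (Fin d) ℝ) := ⟨rfl⟩

/-- A fixed `k`-dimensional subspace `M₀ ∈ G(d,k)`: the span of the first `k`
standard basis vectors. -/
def M₀ (d k : ℕ) : Submodule ℝ (Euc d) :=
  Submodule.span ℝ {x | ∃ i : Fin d, (i : ℕ) < k ∧ x = EuclideanSpace.single i 1}

/-- The image plane `A(M₀)` of `M₀` under an orthogonal transformation `A`. -/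
def planeOf (d k : ℕ) (U : Matrix.orthogonalGroup (Fin d) ℝ) : Submodule ℝ (Euc d) :=
  (M₀ d k).map (Matrix.toEuclideanLin (U : Matrix (Fin d) (Fin d) ℝ))

/-- The `k`-plane transform `T^k[f](M + x) = ∫_M f(y + x) dℒ_M(y)`, where `ℒ_M` is
Lebesgue (Haar) measure on the subspace `M`. -/
def kplaneT (d : ℕ) (M : Submodule ℝ (Euc d)) (f : Euc d → ℝ≥0∞) (x : Euc d) : ℝ≥0∞ :=
  ∫⁻ y : ↥M, f ((y : Euc d) + x)

/-!
Write `N_w(U) = |{y ∈ M₀ : U y + w ∈ E}|` for the slices of a set `E ⊆ B(0, R)`. By Fubini the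
double integral of `(T^k 1_E)^ρ` over `O(d)` and `M₀ᗮ` is `∫_{w ∈ E} ∫_{O(d)} N_w(U)^(ρ-1)`. Among
subsets of `M₀` of given measure a centred ball minimises the integral of `‖y‖^(d-k)`, so
`N_w(U)^(d/k)` is at most a constant times that integral over the slice, and polar coordinates
show that its average over `O(d)` is a multiple of `|E|`. With Jensen's inequality, and the
uniform bound on `T^k 1_E` to raise the outer exponent from `ρ` to `Q`, this gives the restricted
estimate `‖T^k 1_E‖ ≤ C |E|^β` in `L^Q(L^ρ)` with `β > 1/p`, for `ρ = (d-k)/(k-1/4)` and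
`Q = d - k + 7/4`. Because `β > 1/p`, a dyadic decomposition of `f` sums to the strong estimate,
and Hölder's inequality lowers `(Q, ρ)` to `(q, r)`.
-/

namespace KPlane

section MixedNorm

variable {α β : Type*} [MeasurableSpace α] [MeasurableSpace β] {μ : Measure α} {ν : Measure β}

theorem lintegral_rpow_le_mul_lintegral_rpow {f : α → ℝ≥0∞} {M : ℝ≥0∞} (hM : M ≠ ∞)
    (hf : ∀ x, f x ≤ M) {s t : ℝ} (hs : 0 ≤ s) (hst : s ≤ t) :
    ∫⁻ x, f x ^ t ∂μ ≤ M ^ (t - s) * ∫⁻ x, f x ^ s ∂μ := by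
  rw [← lintegral_const_mul' _ _ (ENNReal.rpow_ne_top_of_nonneg (sub_nonneg.2 hst) hM)]
  refine lintegral_mono fun x => ?_
  calc f x ^ t = f x ^ (t - s) * f x ^ s := by
        rw [← ENNReal.rpow_add_of_nonneg _ _ (sub_nonneg.2 hst) hs, sub_add_cancel]
    _ ≤ M ^ (t - s) * f x ^ s := by gcongr; exact hf x

theorem lintegral_rpow_le_rpow_lintegral [IsProbabilityMeasure μ] {f : α → ℝ≥0∞}
    (hf : Measurable f) {s : ℝ} (hs : 0 < s) (hs1 : s ≤ 1) :
    ∫⁻ x, f x ^ s ∂μ ≤ (∫⁻ x, f x ∂μ) ^ s := by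
  have h := eLpNorm'_le_eLpNorm'_mul_rpow_measure_univ (μ := μ) hs hs1 hf.aestronglyMeasurable
  simp only [eLpNorm', enorm_eq_self, measure_univ, ENNReal.one_rpow, mul_one, div_one,
    ENNReal.rpow_one] at h
  rwa [one_div, ENNReal.rpow_inv_le_iff hs] at h

theorem eLpNorm'_tsum_le {q : ℝ} (hq : 1 ≤ q) {f : ℕ → α → ℝ≥0∞}
    (hf : ∀ n, Measurable (f n)) :
    eLpNorm' (fun x => ∑' n, f n x) q μ ≤ ∑' n, eLpNorm' (f n) q μ := by
  have hq0 : 0 < q := zero_lt_one.trans_le hq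
  have hmono : Monotone fun n x => (∑ i ∈ Finset.range n, f i x) ^ q := fun m n hmn x => by
    have : Finset.range m ⊆ Finset.range n := Finset.range_mono hmn
    dsimp only
    gcongr
  have hsup : ∫⁻ x, (∑' n, f n x) ^ q ∂μ =
      ⨆ n, ∫⁻ x, (∑ i ∈ Finset.range n, f i x) ^ q ∂μ := by
    rw [← lintegral_iSup (fun n => by fun_prop) hmono]
    simp_rw [ENNReal.tsum_eq_iSup_nat]
    exact lintegral_congr fun x => (ENNReal.orderIsoRpow q hq0).map_iSup _
  simp only [eLpNorm', enorm_eq_self] at *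
  rw [hsup, one_div, ENNReal.rpow_inv_le_iff hq0]
  refine iSup_le fun n => ?_
  rw [← ENNReal.rpow_inv_le_iff hq0, ← one_div]
  have hsum := eLpNorm'_sum_le (μ := μ) (s := Finset.range n)
    (fun i _ => (hf i).aestronglyMeasurable) hq
  simp only [eLpNorm', enorm_eq_self, Finset.sum_apply] at hsum
  exact hsum.trans (ENNReal.sum_le_tsum _)

/-- The norm of the mixed space `L^q(μ; L^r(ν))`, for `[0,∞]`-valued functions. -/
def mixedNorm (μ : Measure α) (ν : Measure β) (q r : ℝ) (F : α → β → ℝ≥0∞) : ℝ≥0∞ :=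
  eLpNorm' (fun a => eLpNorm' (F a) r ν) q μ

theorem mixedNorm_eq_lintegral {q r : ℝ} (F : α → β → ℝ≥0∞) :
    mixedNorm μ ν q r F = (∫⁻ a, (∫⁻ b, F a b ^ r ∂ν) ^ (q / r) ∂μ) ^ (1 / q) := by
  simp only [mixedNorm, eLpNorm', enorm_eq_self, ← ENNReal.rpow_mul, one_div_mul_eq_div]

theorem mixedNorm_mono {q r : ℝ} (hq : 0 ≤ q) (hr : 0 ≤ r) {F G : α → β → ℝ≥0∞}
    (h : ∀ a b, F a b ≤ G a b) : mixedNorm μ ν q r F ≤ mixedNorm μ ν q r G := by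
  unfold mixedNorm eLpNorm'
  simp only [enorm_eq_self]
  gcongr with a b
  exact h a b

theorem mixedNorm_const_smul_le {q r : ℝ} (hq : 0 < q) (hr : 0 < r) (c : NNReal)
    (F : α → β → ℝ≥0∞) : mixedNorm μ ν q r (c • F) ≤ c * mixedNorm μ ν q r F := by
  refine eLpNorm'_le_nnreal_smul_eLpNorm'_of_ae_le_mul' (.of_forall fun a => ?_) hq
  exact eLpNorm'_le_nnreal_smul_eLpNorm'_of_ae_le_mul' (.of_forall fun b => le_rfl) hr

theorem measurable_eLpNorm'_right [SFinite ν] {r : ℝ} {F : α → β → ℝ≥0∞}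
    (hF : Measurable (Function.uncurry F)) : Measurable fun a => eLpNorm' (F a) r ν := by
  simp only [eLpNorm', enorm_eq_self]
  exact ((hF.pow_const r).lintegral_prod_right' (ν := ν)).pow_const _

theorem mixedNorm_tsum_le [SFinite ν] {q r : ℝ} (hq : 1 ≤ q) (hr : 1 ≤ r)
    {F : ℕ → α → β → ℝ≥0∞} (hF : ∀ n, Measurable (Function.uncurry (F n))) :
    mixedNorm μ ν q r (fun a b => ∑' n, F n a b) ≤ ∑' n, mixedNorm μ ν q r (F n) := by
  refine le_trans ?_ (eLpNorm'_tsum_le hq fun n => measurable_eLpNorm'_right (hF n))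
  refine eLpNorm'_mono_enorm_ae (by linarith) (.of_forall fun a => ?_)
  simpa only [enorm_eq_self] using
    eLpNorm'_tsum_le hr fun n => (hF n).of_uncurry_left

theorem mixedNorm_le_mul_mixedNorm [IsProbabilityMeasure μ] [SFinite ν] {q r Q ρ : ℝ}
    (hq : 0 < q) (hr : 0 < r) (hqQ : q ≤ Q) (hrρ : r ≤ ρ) {B : Set β} (hB : ν B ≠ ∞)
    {F : α → β → ℝ≥0∞} (hF : Measurable (Function.uncurry F)) (hFB : ∀ a, ∀ b ∉ B, F a b = 0) :
    mixedNorm μ ν q r F ≤ ν B ^ (1 / r - 1 / ρ) * mixedNorm μ ν Q ρ F := by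
  have hc : ν B ^ (1 / r - 1 / ρ) ≠ ∞ :=
    ENNReal.rpow_ne_top_of_nonneg (sub_nonneg.2 (one_div_le_one_div_of_le hr hrρ)) hB
  have hrestrict (s : ℝ) (hs : 0 < s) (a : α) :
      eLpNorm' (F a) s (ν.restrict B) = eLpNorm' (F a) s ν := by
    simp only [eLpNorm', enorm_eq_self]
    rw [setLIntegral_eq_of_support_subset]
    exact fun b hb => by_contra fun hbB => hb (by simp [hFB a b hbB, hs])
  have hinner (a : α) : eLpNorm' (F a) r ν ≤ ν B ^ (1 / r - 1 / ρ) * eLpNorm' (F a) ρ ν := by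
    have h := eLpNorm'_le_eLpNorm'_mul_rpow_measure_univ (μ := ν.restrict B) hr hrρ
      (hF.of_uncurry_left (x := a)).aestronglyMeasurable
    rwa [hrestrict r hr, hrestrict ρ (hr.trans_le hrρ), Measure.restrict_apply_univ, mul_comm] at h
  lift ν B ^ (1 / r - 1 / ρ) to NNReal using hc with c
  calc mixedNorm μ ν q r F
      ≤ mixedNorm μ ν Q r F := by
        simpa [mixedNorm] using eLpNorm'_le_eLpNorm'_mul_rpow_measure_univ (μ := μ) hq hqQ
          (measurable_eLpNorm'_right (r := r) hF).aestronglyMeasurable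
    _ ≤ c * mixedNorm μ ν Q ρ F :=
        eLpNorm'_le_nnreal_smul_eLpNorm'_of_ae_le_mul' (.of_forall hinner) (by linarith)

end MixedNorm

section RestrictedType

theorem le_two_mul_tsum_dyadic (x : ℝ≥0∞) :
    x ≤ 2 * ∑' j : ℕ, 2 ^ j * (if 2 ^ j ≤ max 1 x then 1 else 0) := by
  rcases eq_or_ne x ∞ with rfl | hx
  · simp [ENNReal.tsum_geometric, tsub_eq_zero_of_le]
  obtain ⟨n, hn, hn'⟩ : ∃ n : ℕ, 2 ^ n ≤ max 1 x ∧ max 1 x < 2 ^ (n + 1) := by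
    lift x to NNReal using hx
    exact_mod_cast exists_nat_pow_near (le_max_left 1 x) one_lt_two
  calc x ≤ 2 * (2 ^ n * (if 2 ^ n ≤ max 1 x then 1 else 0)) := by
        rw [if_pos hn, mul_one, ← pow_succ']
        exact (le_max_right 1 x).trans hn'.le
    _ ≤ _ := by gcongr; exact ENNReal.le_tsum n

variable {α : Type*} {B : Set α} {f : α → ℝ≥0∞}

theorem le_tsum_dyadic_superlevel (hfB : ∀ x ∉ B, f x = 0) (x : α) :
    f x ≤ ∑' j : ℕ, ((2 ^ (j + 1) : NNReal) •
      (B ∩ {x | 2 ^ j ≤ max 1 (f x)}).indicator (1 : α → ℝ≥0∞)) x := by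
  by_cases hx : x ∈ B
  · refine (le_two_mul_tsum_dyadic (f x)).trans_eq ?_
    rw [← ENNReal.tsum_mul_left]
    refine tsum_congr fun j => ?_
    have hind : (B ∩ {x | 2 ^ j ≤ max 1 (f x)}).indicator (1 : α → ℝ≥0∞) x =
        if 2 ^ j ≤ max 1 (f x) then 1 else 0 := by
      by_cases hj : 2 ^ j ≤ max 1 (f x)
      · rw [if_pos hj, Set.indicator_of_mem (Set.mem_inter hx hj), Pi.one_apply]
      · rw [if_neg hj, Set.indicator_of_notMem fun h => hj h.2]
    rw [Pi.smul_apply, hind, ENNReal.smul_def, smul_eq_mul]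
    push_cast
    ring
  · simp [hfB x hx]

variable [MeasurableSpace α] {ν : Measure α} {p β : ℝ}

/-- A functional on `[0,∞]`-valued functions that is monotone, positively homogeneous and
countably subadditive, such as a norm of a positive integral operator. -/
structure IsCountablySublinear (N : (α → ℝ≥0∞) → ℝ≥0∞) : Prop where
  mono : ∀ {f g : α → ℝ≥0∞}, f ≤ g → N f ≤ N g
  smul_le : ∀ (c : NNReal) (f : α → ℝ≥0∞), N (c • f) ≤ c * N f
  tsum_le : ∀ {f : ℕ → α → ℝ≥0∞}, (∀ n, Measurable (f n)) →
    N (fun x => ∑' n, f n x) ≤ ∑' n, N (f n)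

theorem measure_dyadic_superlevel_le (hf : Measurable f) (hp : 0 < p)
    (hB : MeasurableSet B) (hfp : ∫⁻ x, f x ^ p ∂ν ≤ 1) (j : ℕ) :
    ν (B ∩ {x | 2 ^ j ≤ max 1 (f x)}) ≤ (1 + ν B) * 2 ^ (-(p * j)) := by
  have hpow : ((2 : ℝ≥0∞) ^ j) ^ p = 2 ^ (p * j) := by
    rw [← ENNReal.rpow_natCast, ← ENNReal.rpow_mul, mul_comm]
  calc ν (B ∩ {x | 2 ^ j ≤ max 1 (f x)})
      ≤ ν.restrict B {x | (2 ^ j) ^ p ≤ max 1 (f x) ^ p} := by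
        rw [Measure.restrict_apply' hB]
        exact measure_mono fun x hx => ⟨ENNReal.rpow_le_rpow hx.2 hp.le, hx.1⟩
    _ ≤ (∫⁻ x in B, max 1 (f x) ^ p ∂ν) / (2 ^ j) ^ p :=
        meas_ge_le_lintegral_div (by fun_prop) (by simp [hpow])
          (ENNReal.rpow_ne_top_of_nonneg hp.le (by simp))
    _ ≤ (1 + ν B) * 2 ^ (-(p * j)) := by
        rw [hpow, div_eq_mul_inv, ← ENNReal.rpow_neg]
        gcongr
        calc ∫⁻ x in B, max 1 (f x) ^ p ∂ν
            ≤ ∫⁻ x in B, f x ^ p + 1 ∂ν := lintegral_mono fun x => by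
              rcases max_cases 1 (f x) with ⟨h, -⟩ | ⟨h, -⟩ <;> simp [h]
          _ = (∫⁻ x in B, f x ^ p ∂ν) + ν B := by
              rw [lintegral_add_right _ measurable_const]; simp
          _ ≤ 1 + ν B := by
              gcongr
              exact (setLIntegral_le_lintegral _ _).trans hfp

theorem tsum_dyadic_ne_top (hpβ : 1 < p * β) :
    ∑' j : ℕ, (2 : ℝ≥0∞) ^ j * 2 ^ (-(p * β * j)) ≠ ∞ := by
  have hr : (2 : ℝ≥0∞) ^ (1 - p * β) < 1 :=
    ENNReal.rpow_lt_one_of_one_lt_of_neg one_lt_two (sub_neg.2 hpβ)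
  have hgeom (j : ℕ) : (2 : ℝ≥0∞) ^ j * 2 ^ (-(p * β * j)) = (2 ^ (1 - p * β)) ^ j := by
    rw [← ENNReal.rpow_natCast, ← ENNReal.rpow_natCast, ← ENNReal.rpow_mul,
      ← ENNReal.rpow_add _ _ two_ne_zero ofNat_ne_top]
    ring_nf
  simp_rw [hgeom, ENNReal.tsum_geometric]
  exact ENNReal.inv_ne_top.2 (tsub_pos_of_lt hr).ne'

variable {N : (α → ℝ≥0∞) → ℝ≥0∞} {C : ℝ≥0∞}

theorem IsCountablySublinear.exists_le_of_lintegral_le_one (hN : IsCountablySublinear N)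
    (hp : 0 < p) (hpβ : 1 < p * β) (hB : MeasurableSet B) (hνB : ν B ≠ ∞) (hC : C ≠ ∞)
    (hNC : ∀ E, MeasurableSet E → E ⊆ B → N (E.indicator 1) ≤ C * ν E ^ β) :
    ∃ A ≠ ∞, ∀ f : α → ℝ≥0∞, Measurable f → (∀ x ∉ B, f x = 0) →
      ∫⁻ x, f x ^ p ∂ν ≤ 1 → N f ≤ A := by
  have hβ : 0 < β := pos_of_mul_pos_right (zero_lt_one.trans hpβ) hp.le
  have hK : 2 * (C * (1 + ν B) ^ β) ≠ ∞ := by finiteness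
  refine ⟨2 * (C * (1 + ν B) ^ β) * ∑' j : ℕ, (2 : ℝ≥0∞) ^ j * 2 ^ (-(p * β * j)),
    ENNReal.mul_ne_top hK (tsum_dyadic_ne_top hpβ), fun f hf hfB hfp => ?_⟩
  set E : ℕ → Set α := fun j => B ∩ {x | 2 ^ j ≤ max 1 (f x)}
  have hE (j : ℕ) : MeasurableSet (E j) :=
    hB.inter (measurableSet_le measurable_const (by fun_prop))
  calc N f ≤ N fun x => ∑' j : ℕ, ((2 ^ (j + 1) : NNReal) • (E j).indicator 1) x :=
        hN.mono (le_tsum_dyadic_superlevel hfB)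
    _ ≤ ∑' j : ℕ, N ((2 ^ (j + 1) : NNReal) • (E j).indicator 1) :=
        hN.tsum_le fun j => (measurable_one.indicator (hE j)).const_smul _
    _ ≤ ∑' j : ℕ, 2 ^ (j + 1) * (C * ((1 + ν B) * 2 ^ (-(p * j))) ^ β) := by
        refine ENNReal.tsum_le_tsum fun j => (hN.smul_le _ _).trans ?_
        push_cast
        gcongr
        refine (hNC _ (hE j) Set.inter_subset_left).trans ?_
        gcongr
        exact measure_dyadic_superlevel_le hf hp hB hfp j
    _ = _ := by
        rw [← ENNReal.tsum_mul_left]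
        refine tsum_congr fun j => ?_
        rw [ENNReal.mul_rpow_of_nonneg _ _ hβ.le, ← ENNReal.rpow_mul,
          show -(p * j) * β = -(p * β * j) by ring]
        ring

theorem IsCountablySublinear.exists_le_mul_rpow_lintegral (hN : IsCountablySublinear N)
    (hp : 0 < p) (hpβ : 1 < p * β) (hB : MeasurableSet B) (hνB : ν B ≠ ∞) (hC : C ≠ ∞)
    (hNC : ∀ E, MeasurableSet E → E ⊆ B → N (E.indicator 1) ≤ C * ν E ^ β) :
    ∃ A ≠ ∞, ∀ f : α → ℝ≥0∞, Measurable f → (∀ x ∉ B, f x = 0) →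
      N f ≤ A * (∫⁻ x, f x ^ p ∂ν) ^ (1 / p) := by
  obtain ⟨A, hA, hNA⟩ := hN.exists_le_of_lintegral_le_one hp hpβ hB hνB hC hNC
  refine ⟨A + 1, by finiteness, fun f hf hfB => ?_⟩
  have hscale (c : NNReal) (hc : (∫⁻ x, f x ^ p ∂ν) ^ (1 / p) < c) : N f ≤ (A + 1) * c := by
    have hc0 : c ≠ 0 := by rintro rfl; simp at hc
    have hone : ∫⁻ x, (c⁻¹ • f) x ^ p ∂ν ≤ 1 := by
      rw [one_div, ENNReal.rpow_inv_lt_iff hp] at hc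
      simp only [Pi.smul_apply, ENNReal.smul_def, smul_eq_mul, ENNReal.mul_rpow_of_nonneg _ _ hp.le]
      calc ∫⁻ x, (↑c⁻¹ : ℝ≥0∞) ^ p * f x ^ p ∂ν = (↑c⁻¹ : ℝ≥0∞) ^ p * ∫⁻ x, f x ^ p ∂ν :=
            lintegral_const_mul _ (hf.pow_const p)
        _ ≤ (↑c⁻¹ : ℝ≥0∞) ^ p * (c : ℝ≥0∞) ^ p := by gcongr
        _ = 1 := by
            rw [← ENNReal.mul_rpow_of_nonneg _ _ hp.le, ← ENNReal.coe_mul, inv_mul_cancel₀ hc0,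
              ENNReal.coe_one, ENNReal.one_rpow]
    calc N f = N (c • c⁻¹ • f) := by rw [smul_inv_smul₀ hc0]
      _ ≤ c * N (c⁻¹ • f) := hN.smul_le _ _
      _ ≤ c * A := by
          gcongr
          exact hNA _ (hf.const_smul _) (fun x hx => by simp [hfB x hx]) hone
      _ ≤ (A + 1) * c := by rw [mul_comm]; gcongr; exact le_self_add
  have hA0 : A + 1 ≠ 0 := by simp
  rw [mul_comm, ← ENNReal.div_le_iff_le_mul (.inl hA0) (.inl (by finiteness))]
  refine le_of_forall_gt_imp_ge_of_dense fun c hc => ?_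
  rcases eq_or_ne c ∞ with rfl | hc_top
  · exact le_top
  lift c to NNReal using hc_top
  rw [ENNReal.div_le_iff_le_mul (.inl hA0) (.inl (by finiteness)), mul_comm]
  exact hscale c hc

end RestrictedType

section Radial

open Module

theorem pow_mul_measure_sdiff_ball_le {V : Type*} [NormedAddCommGroup V] [MeasurableSpace V]
    [OpensMeasurableSpace V] (ν : Measure V) {A : Set V} (hA : MeasurableSet A) (m : ℕ)
    (r : NNReal) :
    (r : ℝ≥0∞) ^ m * ν (A \ Metric.ball 0 r) ≤ ∫⁻ y in A, ‖y‖ₑ ^ m ∂ν := by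
  calc (r : ℝ≥0∞) ^ m * ν (A \ Metric.ball 0 r)
      = ∫⁻ _ in A \ Metric.ball 0 r, (r : ℝ≥0∞) ^ m ∂ν := by simp
    _ ≤ ∫⁻ y in A \ Metric.ball 0 r, ‖y‖ₑ ^ m ∂ν := by
        refine setLIntegral_mono' (hA.diff Metric.isOpen_ball.measurableSet) fun y hy => ?_
        gcongr
        have hry : (r : ℝ) ≤ ‖y‖ := by simpa using hy.2
        exact_mod_cast hry
    _ ≤ _ := lintegral_mono_set Set.sdiff_subset

variable {V : Type*} [NormedAddCommGroup V] [NormedSpace ℝ V] [MeasurableSpace V] [BorelSpace V]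
  [FiniteDimensional ℝ V] [Nontrivial V] (ν : Measure V) [ν.IsAddHaarMeasure]

theorem lintegral_fun_norm_addHaar {h : ℝ → ℝ≥0∞} (hh : Measurable h) :
    ∫⁻ x, h ‖x‖ ∂ν = ν.toSphere Set.univ *
      ∫⁻ t in Set.Ioi (0 : ℝ), ENNReal.ofReal (t ^ (finrank ℝ V - 1)) * h t := by
  calc ∫⁻ x, h ‖x‖ ∂ν
      = ∫⁻ x : ({0}ᶜ : Set V), h ‖x.1‖ ∂ν.comap (↑) := by
        rw [lintegral_subtype_comap (measurableSet_singleton _).compl fun x => h ‖x‖,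
          restrict_compl_singleton]
    _ = ∫⁻ x, h x.2 ∂ν.toSphere.prod (.volumeIoiPow (finrank ℝ V - 1)) := by
        rw [← ν.measurePreserving_homeomorphUnitSphereProd.lintegral_comp_emb
          (Homeomorph.measurableEmbedding _) fun x => h x.2]
        simp
    _ = ν.toSphere Set.univ * ∫⁻ t : Set.Ioi (0 : ℝ), h t ∂.volumeIoiPow (finrank ℝ V - 1) := by
        rw [lintegral_prod _ (by fun_prop)]
        simp [mul_comm]
    _ = _ := by
        rw [Measure.volumeIoiPow,
          lintegral_withDensity_eq_lintegral_mul _ (by fun_prop) (by fun_prop),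
          ← lintegral_subtype_comap measurableSet_Ioi]
        rfl

theorem exists_lintegral_enorm_pow_mul_fun_norm_eq {E : Type*} [NormedAddCommGroup E]
    [NormedSpace ℝ E] [MeasurableSpace E] [BorelSpace E] [FiniteDimensional ℝ E] (μ : Measure E)
    [μ.IsAddHaarMeasure] (hVE : finrank ℝ V ≤ finrank ℝ E) :
    ∃ c ≠ ∞, ∀ h : ℝ → ℝ≥0∞, Measurable h →
      ∫⁻ y, ‖y‖ₑ ^ (finrank ℝ E - finrank ℝ V) * h ‖y‖ ∂ν = c * ∫⁻ z, h ‖z‖ ∂μ := by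
  have hV : 0 < finrank ℝ V := finrank_pos
  have : Nontrivial E := nontrivial_of_finrank_pos (hV.trans_le hVE)
  have hμ : μ.toSphere Set.univ ≠ 0 := Measure.measure_univ_ne_zero.2 μ.toSphere_ne_zero
  refine ⟨ν.toSphere Set.univ * (μ.toSphere Set.univ)⁻¹,
    ENNReal.mul_ne_top (measure_ne_top _ _) (ENNReal.inv_ne_top.2 hμ), fun h hh => ?_⟩
  simp_rw [← ofReal_norm]
  rw [lintegral_fun_norm_addHaar μ hh, lintegral_fun_norm_addHaar ν
    (h := fun t => ENNReal.ofReal t ^ (finrank ℝ E - finrank ℝ V) * h t) (by fun_prop), mul_assoc,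
    ENNReal.inv_mul_cancel_left hμ (measure_ne_top _ _)]
  congr 1
  refine setLIntegral_congr_fun measurableSet_Ioi fun t (ht : 0 < t) => ?_
  simp only [ENNReal.ofReal_pow ht.le]
  rw [← mul_assoc, ← pow_add]
  congr 2
  omega

theorem exists_measure_ball_eq_half {a : ℝ≥0∞} (ha : a ≠ ∞) :
    ∃ r : NNReal, ν (Metric.ball 0 r) = a / 2 ∧
      (r : ℝ≥0∞) = (a / (2 * ν (Metric.ball 0 1))) ^ (1 / finrank ℝ V : ℝ) := by
  have hb : ν (Metric.ball 0 1) ≠ 0 := (Metric.measure_ball_pos ν 0 one_pos).ne'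
  have hb_top : ν (Metric.ball 0 1) ≠ ∞ := measure_ball_lt_top.ne
  have hk : (finrank ℝ V : ℝ) ≠ 0 := Nat.cast_ne_zero.2 finrank_pos.ne'
  have hr_top : (a / (2 * ν (Metric.ball 0 1))) ^ (1 / finrank ℝ V : ℝ) ≠ ∞ :=
    ENNReal.rpow_ne_top_of_nonneg (by positivity)
      (ENNReal.div_ne_top ha (mul_ne_zero two_ne_zero hb))
  lift (a / (2 * ν (Metric.ball 0 1))) ^ (1 / finrank ℝ V : ℝ) to NNReal using hr_top with r hr
  refine ⟨r, ?_, rfl⟩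
  rw [Measure.addHaar_ball ν 0 r.coe_nonneg, ENNReal.ofReal_pow r.coe_nonneg,
    ENNReal.ofReal_coe_nnreal, hr, ← ENNReal.rpow_natCast, ← ENNReal.rpow_mul,
    one_div_mul_cancel hk, ENNReal.rpow_one, ← ENNReal.mul_div_mul_right a 2 hb hb_top,
    ENNReal.mul_div_right_comm]

-- Among the sets of measure `ν A` the centred ball has the least moment, and half of `A` lies
-- outside the centred ball of measure `ν A / 2`.
theorem exists_rpow_measure_le_lintegral_enorm_pow (m : ℕ) :
    ∃ C ≠ ∞, ∀ A : Set V, MeasurableSet A →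
      ν A ^ (1 + m / finrank ℝ V : ℝ) ≤ C * ∫⁻ y in A, ‖y‖ₑ ^ m ∂ν := by
  set s : ℝ := m / finrank ℝ V
  have hs : 0 ≤ s := by positivity
  set c := (2 * ν (Metric.ball 0 1)) ^ s
  have hc : c ≠ ∞ := by
    have : ν (Metric.ball 0 1) ≠ ∞ := measure_ball_lt_top.ne
    finiteness
  have hc0 : c ≠ 0 := (ENNReal.rpow_pos_of_nonneg
    (by simpa using Metric.measure_ball_pos ν 0 one_pos) hs).ne'
  refine ⟨2 * c, by finiteness, fun A hA => ?_⟩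
  rcases eq_or_ne (ν A) ∞ with hA_top | hA_top
  · have hint : ∫⁻ y in A, ‖y‖ₑ ^ m ∂ν = ∞ := by
      have h := pow_mul_measure_sdiff_ball_le ν hA m 1
      rwa [NNReal.coe_one, measure_sdiff_eq_top hA_top measure_ball_lt_top.ne, ENNReal.coe_one,
        one_pow, one_mul, top_le_iff] at h
    rw [hint, ENNReal.mul_top (mul_ne_zero two_ne_zero hc0)]
    exact le_top
  obtain ⟨r, hball, hr⟩ := exists_measure_ball_eq_half ν hA_top
  have hrm : c * r ^ m = ν A ^ s := by
    rw [hr, ← ENNReal.rpow_natCast, ← ENNReal.rpow_mul, one_div_mul_eq_div,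
      ENNReal.div_rpow_of_nonneg _ _ hs, ENNReal.mul_div_cancel hc0 hc]
  calc ν A ^ (1 + s)
      = 2 * c * (r ^ m * (ν A / 2)) := by
        rw [ENNReal.rpow_add_of_nonneg _ _ zero_le_one hs, ENNReal.rpow_one, ← hrm]
        nth_rw 1 [← ENNReal.mul_div_cancel (b := ν A) two_ne_zero ofNat_ne_top]
        ring
    _ = 2 * c * (r ^ m * (ν A - ν (Metric.ball 0 r))) := by rw [hball, ENNReal.sub_half hA_top]
    _ ≤ 2 * c * ∫⁻ y in A, ‖y‖ₑ ^ m ∂ν := by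
        gcongr
        exact le_trans (by gcongr; exact le_measure_sdiff) (pow_mul_measure_sdiff_ball_le ν hA m r)

end Radial

section Invariance

variable {G : Type*} [Group G] [MeasurableSpace G] [MeasurableMul₂ G] [MeasurableInv G]
  (μ : Measure G) [μ.IsMulLeftInvariant] [IsProbabilityMeasure μ]

theorem isInvInvariant_of_isProbabilityMeasure : μ.IsInvInvariant := by
  refine ⟨Measure.ext_of_lintegral _ fun f hf => ?_⟩
  rw [Measure.inv, lintegral_map hf measurable_inv]
  simpa using lintegral_lintegral_mul_inv μ μ (fun _ y => f y) (by fun_prop)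

theorem isMulRightInvariant_of_isProbabilityMeasure : μ.IsMulRightInvariant := by
  have := isInvInvariant_of_isProbabilityMeasure μ
  rw [← μ.inv_eq_self]
  infer_instance

end Invariance

section Rotation

variable {d : ℕ}

instance : SecondCountableTopology (Matrix.orthogonalGroup (Fin d) ℝ) :=
  have : SecondCountableTopology (Matrix (Fin d) (Fin d) ℝ) :=
    inferInstanceAs (SecondCountableTopology (Fin d → Fin d → ℝ))
  TopologicalSpace.Subtype.secondCountableTopology _

/-- The action of the orthogonal group on `ℝ^d` by linear isometries. -/
def rot (d : ℕ) : Matrix.orthogonalGroup (Fin d) ℝ →* (Euc d ≃ₗᵢ[ℝ] Euc d) :=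
  Unitary.linearIsometryEquiv.toMonoidHom.comp
    (Unitary.map (.ofClass (Matrix.toEuclideanCLM (𝕜 := ℝ) (n := Fin d)))).toMonoidHom

theorem rot_apply (U : Matrix.orthogonalGroup (Fin d) ℝ) (z : Euc d) :
    rot d U z = Matrix.toEuclideanLin (U : Matrix (Fin d) (Fin d) ℝ) z := rfl

attribute [irreducible] rot

@[fun_prop]
theorem continuous_rot_apply {X : Type*} [TopologicalSpace X]
    {U : X → Matrix.orthogonalGroup (Fin d) ℝ} {z : X → Euc d} (hU : Continuous U)
    (hz : Continuous z) : Continuous fun x => rot d (U x) (z x) := by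
  simp only [rot_apply, Matrix.toLpLin_apply]
  exact (PiLp.continuous_toLp 2 _).comp (.matrix_mulVec (by fun_prop) (by fun_prop))

@[fun_prop]
theorem measurable_rot_apply {X : Type*} [MeasurableSpace X]
    {U : X → Matrix.orthogonalGroup (Fin d) ℝ} {z : X → Euc d} (hU : Measurable U)
    (hz : Measurable z) : Measurable fun x => rot d (U x) (z x) :=
  (continuous_rot_apply continuous_fst continuous_snd).measurable.comp (hU.prodMk hz)

theorem exists_rot_apply_eq {u v : Euc d} (h : ‖u‖ = ‖v‖) : ∃ U, rot d U u = v := by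
  let φ := (Submodule.span ℝ {u - v})ᗮ.reflection
  have hφ : φ u = v := Submodule.reflection_sub h
  refine ⟨⟨_, φ.toMatrix_mem_unitaryGroup (EuclideanSpace.basisFun (Fin d) ℝ)
    (EuclideanSpace.basisFun (Fin d) ℝ)⟩, ?_⟩
  rw [rot_apply, ← hφ, Matrix.toEuclideanLin_eq_toLin_orthonormal, Matrix.toLin_toMatrix]
  rfl

theorem lintegral_comp_rot (U : Matrix.orthogonalGroup (Fin d) ℝ) {g : Euc d → ℝ≥0∞}
    (hg : Measurable g) : ∫⁻ z, g (rot d U z) = ∫⁻ z, g z :=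
  (rot d U).measurePreserving.lintegral_comp hg

variable (μ : Measure (Matrix.orthogonalGroup (Fin d) ℝ)) [μ.IsMulLeftInvariant]
  [IsProbabilityMeasure μ] {g : Euc d → ℝ≥0∞}

theorem lintegral_rot_apply_eq_of_norm_eq {u v : Euc d} (h : ‖u‖ = ‖v‖) :
    ∫⁻ U, g (rot d U u) ∂μ = ∫⁻ U, g (rot d U v) ∂μ := by
  obtain ⟨W, rfl⟩ := exists_rot_apply_eq h
  have := isMulRightInvariant_of_isProbabilityMeasure μ
  rw [← lintegral_mul_right_eq_self _ W]
  simp only [map_mul, LinearIsometryEquiv.coe_mul, Function.comp_apply]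

open Module in
theorem exists_lintegral_enorm_pow_mul_rot_eq (V : Submodule ℝ (Euc d)) [Nontrivial V] :
    ∃ c ≠ ∞, ∀ g : Euc d → ℝ≥0∞, Measurable g →
      ∫⁻ U, (∫⁻ y : V, ‖y‖ₑ ^ (d - finrank ℝ V) * g (rot d U y)) ∂μ = c * ∫⁻ z, g z := by
  obtain ⟨c, hc, hpolar⟩ := exists_lintegral_enorm_pow_mul_fun_norm_eq
    (volume : Measure V) (volume : Measure (Euc d)) V.finrank_le
  rw [finrank_euclideanSpace_fin] at hpolar
  obtain ⟨e, he⟩ : ∃ e : V, ‖e‖ = 1 := exists_norm_eq V zero_le_one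
  refine ⟨c, hc, fun g hg => ?_⟩
  let h : ℝ → ℝ≥0∞ := fun t => ∫⁻ U, g (rot d U (t • e)) ∂μ
  have hh : Measurable h := Measurable.lintegral_prod_left (by fun_prop)
  have hradial (z : Euc d) : ∫⁻ U, g (rot d U z) ∂μ = h ‖z‖ :=
    lintegral_rot_apply_eq_of_norm_eq μ (by
      rw [norm_smul, Submodule.norm_coe, he, mul_one, norm_norm])
  calc ∫⁻ U, (∫⁻ y : V, ‖y‖ₑ ^ (d - finrank ℝ V) * g (rot d U y)) ∂μ
      = ∫⁻ y : V, ∫⁻ U, ‖y‖ₑ ^ (d - finrank ℝ V) * g (rot d U y) ∂μ :=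
        lintegral_lintegral_swap (by fun_prop)
    _ = ∫⁻ y : V, ‖y‖ₑ ^ (d - finrank ℝ V) * h ‖y‖ := by
        refine lintegral_congr fun y => ?_
        rw [lintegral_const_mul _ (by fun_prop), hradial, Submodule.coe_norm]
    _ = c * ∫⁻ z : Euc d, h ‖z‖ := hpolar h hh
    _ = c * ∫⁻ U, (∫⁻ z : Euc d, g (rot d U z)) ∂μ := by
        simp_rw [← hradial]
        rw [lintegral_lintegral_swap (by fun_prop)]
    _ = c * ∫⁻ z, g z := by simp [lintegral_comp_rot _ hg]

end Rotation

section Transform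

variable {d : ℕ} (V : Submodule ℝ (Euc d)) {f : Euc d → ℝ≥0∞} {R : ℝ}

theorem measurable_kplaneT_comp_rot (hf : Measurable f) :
    Measurable fun q : Matrix.orthogonalGroup (Fin d) ℝ × Euc d =>
      kplaneT d V (f ∘ rot d q.1) q.2 := by
  unfold kplaneT
  simp only [Function.comp_apply]
  exact Measurable.lintegral_prod_right (by fun_prop)

theorem kplaneT_add_left (y : V) (x : Euc d) : kplaneT d V f (y + x) = kplaneT d V f x := by
  unfold kplaneT
  rw [← lintegral_add_right_eq_self (fun y' : V => f (y' + x)) y]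
  simp only [Submodule.coe_add, add_assoc]

theorem lintegral_eq_of_eq_map {V W : Submodule ℝ (Euc d)} (e : Euc d ≃ₗᵢ[ℝ] Euc d)
    (hW : W = V.map (e.toLinearEquiv : Euc d →ₗ[ℝ] Euc d)) (g : Euc d → ℝ≥0∞) :
    ∫⁻ y : W, g y = ∫⁻ y : V, g (e y) := by
  subst hW
  let e' : V ≃ₗᵢ[ℝ] V.map (e.toLinearEquiv : Euc d →ₗ[ℝ] Euc d) :=
    ⟨e.toLinearEquiv.submoduleMap V, fun x => e.norm_map x⟩
  exact (e'.measurePreserving.lintegral_comp_emb e'.toHomeomorph.measurableEmbedding _).symm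

theorem kplaneT_apply_of_eq_map {V W : Submodule ℝ (Euc d)} (e : Euc d ≃ₗᵢ[ℝ] Euc d)
    (hW : W = V.map (e.toLinearEquiv : Euc d →ₗ[ℝ] Euc d)) (x : Euc d) :
    kplaneT d W f (e x) = kplaneT d V (f ∘ e) x := by
  unfold kplaneT
  rw [lintegral_eq_of_eq_map e hW fun y => f (y + e x)]
  simp only [Function.comp_apply, map_add]

theorem lintegral_orthogonal_kplaneT (hf : Measurable f) :
    ∫⁻ x : Vᗮ, kplaneT d V f x = ∫⁻ z, f z := by
  have hφ := (WithLp.volume_preserving_ofLp V Vᗮ).comp V.orthogonalDecomposition.measurePreserving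
  calc ∫⁻ x : Vᗮ, ∫⁻ y : V, f (y + x)
      = ∫⁻ q : V × Vᗮ, f (q.1 + q.2) := by
        rw [Measure.volume_eq_prod, lintegral_prod_symm _ (by fun_prop)]
    _ = ∫⁻ z, f z := by
        rw [← hφ.lintegral_comp (by fun_prop)]
        simp

theorem kplaneT_le_measure_closedBall (hf : ∀ z, f z ≤ 1)
    (hfR : ∀ z ∉ Metric.closedBall 0 R, f z = 0) (x : Euc d) :
    kplaneT d V f x ≤ volume (Metric.closedBall (0 : V) (2 * R)) := by
  set A : Set V := {y | (y + x : Euc d) ∈ Metric.closedBall 0 R}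
  have hA : MeasurableSet A := Metric.isClosed_closedBall.measurableSet.preimage (by fun_prop)
  have hfA (y : V) : f (y + x) ≤ A.indicator 1 y := by
    by_cases hy : y ∈ A
    · simpa [hy] using hf _
    · exact (hfR _ hy).trans_le zero_le
  refine ((lintegral_mono hfA).trans_eq (lintegral_indicator_one hA)).trans ?_
  rcases A.eq_empty_or_nonempty with hA0 | ⟨y₀, hy₀⟩
  · simp [hA0]
  · rw [← Measure.addHaar_closedBall_center volume y₀]
    refine measure_mono fun y hy => ?_
    have hy' : ‖(y + x : Euc d)‖ ≤ R := mem_closedBall_zero_iff.1 hy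
    have hy₀' : ‖(y₀ + x : Euc d)‖ ≤ R := mem_closedBall_zero_iff.1 hy₀
    rw [Metric.mem_closedBall, dist_eq_norm]
    calc ‖y - y₀‖ = ‖(y + x : Euc d) - (y₀ + x)‖ := by
          rw [add_sub_add_right_eq_sub, Submodule.coe_norm, Submodule.coe_sub]
      _ ≤ ‖(y + x : Euc d)‖ + ‖(y₀ + x : Euc d)‖ := norm_sub_le _ _
      _ ≤ 2 * R := by linarith

theorem kplaneT_eq_zero (hfR : ∀ z ∉ Metric.closedBall 0 R, f z = 0) {x : Euc d} (hx : x ∈ Vᗮ)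
    (hxR : x ∉ Metric.closedBall 0 R) : kplaneT d V f x = 0 := by
  refine (lintegral_congr fun y : V => hfR _ fun hyx => hxR ?_).trans lintegral_zero
  rw [mem_closedBall_zero_iff] at hyx ⊢
  refine le_trans ?_ hyx
  have h := norm_add_sq_eq_norm_sq_add_norm_sq_real (V.inner_right_of_mem_orthogonal y.2 hx)
  nlinarith [mul_self_nonneg ‖(y : Euc d)‖, norm_nonneg ((y : Euc d) + x)]

theorem planeOf_eq_map_rot (k : ℕ) (U : Matrix.orthogonalGroup (Fin d) ℝ) :
    planeOf d k U = (M₀ d k).map ((rot d U).toLinearEquiv : Euc d →ₗ[ℝ] Euc d) :=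
  congrArg (M₀ d k).map (LinearMap.ext fun z => (rot_apply U z).symm)

theorem mixedNorm_kplaneT_comp_rot (k : ℕ) (μ : Measure (Matrix.orthogonalGroup (Fin d) ℝ))
    (q r : ℝ) :
    mixedNorm μ volume q r (fun U (x : (M₀ d k)ᗮ) => kplaneT d (M₀ d k) (f ∘ rot d U) x) =
      (∫⁻ U, (∫⁻ x : (planeOf d k U)ᗮ, kplaneT d (planeOf d k U) f x ^ r) ^ (q / r) ∂μ) ^
        (1 / q) := by
  rw [mixedNorm_eq_lintegral]
  congr 1
  refine lintegral_congr fun U => congrArg (· ^ (q / r)) ?_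
  have hU := planeOf_eq_map_rot k U
  have hU' : (planeOf d k U)ᗮ = (M₀ d k)ᗮ.map ((rot d U).toLinearEquiv : Euc d →ₗ[ℝ] Euc d) := by
    rw [hU]
    exact ((M₀ d k).map_orthogonal_equiv (rot d U)).symm
  rw [lintegral_eq_of_eq_map _ hU' fun x => kplaneT d (planeOf d k U) f x ^ r]
  simp only [kplaneT_apply_of_eq_map _ hU]

theorem isCountablySublinear_mixedNorm_kplaneT (μ : Measure (Matrix.orthogonalGroup (Fin d) ℝ))
    {q r : ℝ} (hq : 1 ≤ q) (hr : 1 ≤ r) :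
    IsCountablySublinear fun f : Euc d → ℝ≥0∞ =>
      mixedNorm μ volume q r fun U (x : Vᗮ) => kplaneT d V (f ∘ rot d U) x where
  mono hfg := mixedNorm_mono (by linarith) (by linarith) fun U x => lintegral_mono fun y => hfg _
  smul_le c f := by
    refine le_trans (le_of_eq ?_) (mixedNorm_const_smul_le (by linarith) (by linarith) c _)
    congr 1 with U x
    exact lintegral_const_mul' _ _ ENNReal.coe_ne_top
  tsum_le {f} hf := by
    refine le_trans (le_of_eq ?_) (mixedNorm_tsum_le hq hr fun n => ?_)
    · congr 1 with U x
      exact lintegral_tsum fun n => by fun_prop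
    · exact (measurable_kplaneT_comp_rot V (hf n)).comp (f := Prod.map id Subtype.val) (by fun_prop)

end Transform

section RestrictedEstimate

variable {d : ℕ} (V : Submodule ℝ (Euc d))

theorem lintegral_orthogonal_kplaneT_rpow {f : Euc d → ℝ≥0∞} (hf : Measurable f) {ρ : ℝ}
    (hρ : 1 ≤ ρ) :
    ∫⁻ x : Vᗮ, kplaneT d V f x ^ ρ = ∫⁻ z, f z * kplaneT d V f z ^ (ρ - 1) := by
  have hT : Measurable (kplaneT d V f) := Measurable.lintegral_prod_right (by fun_prop)
  refine Eq.trans (lintegral_congr fun x : Vᗮ => ?_)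
    (lintegral_orthogonal_kplaneT V (hf.mul (hT.pow_const (ρ - 1))))
  calc kplaneT d V f x ^ ρ = kplaneT d V f x * kplaneT d V f x ^ (ρ - 1) := by
        nth_rw 2 [← ENNReal.rpow_one (kplaneT d V f x)]
        rw [← ENNReal.rpow_add_of_nonneg _ _ zero_le_one (sub_nonneg.2 hρ), add_sub_cancel]
    _ = ∫⁻ y : V, f (y + x) * kplaneT d V f x ^ (ρ - 1) :=
        (lintegral_mul_const _ (by fun_prop)).symm
    _ = ∫⁻ y : V, f (y + x) * kplaneT d V f (y + x) ^ (ρ - 1) := by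
        simp only [kplaneT_add_left]

theorem kplaneT_indicator_comp_rot {E : Set (Euc d)} (hE : MeasurableSet E)
    (U : Matrix.orthogonalGroup (Fin d) ℝ) (x : Euc d) :
    kplaneT d V (E.indicator 1 ∘ rot d U) x = volume {y : V | rot d U y + rot d U x ∈ E} := by
  have hA : MeasurableSet {y : V | rot d U y + rot d U x ∈ E} :=
    measurableSet_preimage (f := fun y : V => rot d U y + rot d U x) (by fun_prop) hE
  rw [← lintegral_indicator_one hA, kplaneT]
  simp only [Function.comp_apply, map_add]
  rfl

theorem measurable_volume_rot_add_mem {X : Type*} [MeasurableSpace X] {E : Set (Euc d)}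
    (hE : MeasurableSet E) {U : X → Matrix.orthogonalGroup (Fin d) ℝ} {w : X → Euc d}
    (hU : Measurable U) (hw : Measurable w) :
    Measurable fun x => volume {y : V | rot d (U x) y + w x ∈ E} := by
  have hS : MeasurableSet {q : X × V | rot d (U q.1) q.2 + w q.1 ∈ E} :=
    measurableSet_preimage (f := fun q : X × V => rot d (U q.1) q.2 + w q.1) (by fun_prop) hE
  exact measurable_measure_prodMk_left hS

theorem volume_rot_add_mem_le {E : Set (Euc d)} (hE : MeasurableSet E) {R : ℝ}
    (hER : E ⊆ Metric.closedBall 0 R) (U : Matrix.orthogonalGroup (Fin d) ℝ) (w : Euc d) :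
    volume {y : V | rot d U y + w ∈ E} ≤ volume (Metric.closedBall (0 : V) (2 * R)) := by
  have h := kplaneT_le_measure_closedBall V (f := E.indicator 1 ∘ rot d U) (R := R)
    (fun z => Set.indicator_le_self' (fun _ _ => zero_le) _)
    (fun z hz => Set.indicator_of_notMem (fun hzE => hz (by simpa using hER hzE)) _)
    ((rot d U).symm w)
  rwa [kplaneT_indicator_comp_rot V hE, LinearIsometryEquiv.apply_symm_apply] at h

theorem lintegral_orthogonal_kplaneT_indicator_rpow {E : Set (Euc d)} (hE : MeasurableSet E)
    {ρ : ℝ} (hρ : 1 ≤ ρ) (U : Matrix.orthogonalGroup (Fin d) ℝ) :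
    ∫⁻ x : Vᗮ, kplaneT d V (E.indicator 1 ∘ rot d U) x ^ ρ =
      ∫⁻ z in E, volume {y : V | rot d U y + z ∈ E} ^ (ρ - 1) := by
  have hEm : Measurable (E.indicator (1 : Euc d → ℝ≥0∞)) := measurable_one.indicator hE
  have hN : Measurable fun z => volume {y : V | rot d U y + z ∈ E} :=
    measurable_volume_rot_add_mem V hE measurable_const measurable_id
  have hEU : Measurable (E.indicator (1 : Euc d → ℝ≥0∞) ∘ rot d U) := hEm.comp (by fun_prop)
  rw [lintegral_orthogonal_kplaneT_rpow V hEU hρ, ← lintegral_indicator hE,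
    ← lintegral_comp_rot U ((hN.pow_const (ρ - 1)).indicator hE)]
  refine lintegral_congr fun z => ?_
  rw [kplaneT_indicator_comp_rot V hE]
  by_cases hz : rot d U z ∈ E <;> simp [hz]

theorem lintegral_orthogonal_kplaneT_indicator_rpow_le {E : Set (Euc d)} (hE : MeasurableSet E)
    {R ρ : ℝ} (hER : E ⊆ Metric.closedBall 0 R) (hρ : 1 ≤ ρ)
    (U : Matrix.orthogonalGroup (Fin d) ℝ) :
    ∫⁻ x : Vᗮ, kplaneT d V (E.indicator 1 ∘ rot d U) x ^ ρ ≤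
      volume (Metric.closedBall (0 : V) (2 * R)) ^ (ρ - 1) * volume E := by
  rw [lintegral_orthogonal_kplaneT_indicator_rpow V hE hρ, ← setLIntegral_const]
  exact lintegral_mono fun z => ENNReal.rpow_le_rpow (volume_rot_add_mem_le V hE hER U z)
    (sub_nonneg.2 hρ)

variable [Nontrivial V] (μ : Measure (Matrix.orthogonalGroup (Fin d) ℝ)) [μ.IsMulLeftInvariant]
  [IsProbabilityMeasure μ] {t ρ Q : ℝ}

-- The rearrangement bound turns the power `d / k` of the size of a slice into an integral of
-- `‖y‖ ^ (d - k)`, whose average over rotations is the volume of the whole set.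
theorem exists_lintegral_rpow_div_volume_rot_mem_le :
    ∃ C ≠ ∞, ∀ E : Set (Euc d), MeasurableSet E →
      ∫⁻ U, volume {y : V | rot d U y ∈ E} ^ (d / Module.finrank ℝ V : ℝ) ∂μ ≤ C * volume E := by
  obtain ⟨C, hC, hCA⟩ :=
    exists_rpow_measure_le_lintegral_enorm_pow (volume : Measure V) (d - Module.finrank ℝ V)
  obtain ⟨c, hc, hcg⟩ := exists_lintegral_enorm_pow_mul_rot_eq μ V
  have hk : (0 : ℝ) < Module.finrank ℝ V := by exact_mod_cast Module.finrank_pos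
  have hkd : Module.finrank ℝ V ≤ d := by simpa using Submodule.finrank_le V
  set k := Module.finrank ℝ V
  have hexp : 1 + ((d - k : ℕ) : ℝ) / k = d / k := by
    rw [Nat.cast_sub hkd]
    field_simp
    ring
  refine ⟨C * c, ENNReal.mul_ne_top hC hc, fun E hE => ?_⟩
  have hslice (U : Matrix.orthogonalGroup (Fin d) ℝ) :
      volume {y : V | rot d U y ∈ E} ^ (d / k : ℝ) ≤
        C * ∫⁻ y : V, ‖y‖ₑ ^ (d - k) * E.indicator 1 (rot d U y) := by
    have hA : MeasurableSet {y : V | rot d U y ∈ E} := hE.preimage (by fun_prop)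
    rw [← hexp]
    refine (hCA _ hA).trans_eq ?_
    rw [← lintegral_indicator hA]
    congr 2 with y
    by_cases hy : rot d U y ∈ E <;> simp [hy]
  calc ∫⁻ U, volume {y : V | rot d U y ∈ E} ^ (d / k : ℝ) ∂μ
      ≤ ∫⁻ U, C * (∫⁻ y : V, ‖y‖ₑ ^ (d - k) * E.indicator 1 (rot d U y)) ∂μ :=
        lintegral_mono hslice
    _ = C * c * volume E := by
        rw [lintegral_const_mul' _ _ hC, hcg _ (measurable_one.indicator hE),
          lintegral_indicator_one hE, mul_assoc]

theorem exists_lintegral_rpow_volume_rot_mem_le (ht : 0 < t)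
    (htd : t * Module.finrank ℝ V ≤ d) :
    ∃ C ≠ ∞, ∀ E : Set (Euc d), MeasurableSet E →
      ∫⁻ U, volume {y : V | rot d U y ∈ E} ^ t ∂μ ≤
        C * volume E ^ (t * Module.finrank ℝ V / d) := by
  obtain ⟨C, hC, hCE⟩ := exists_lintegral_rpow_div_volume_rot_mem_le V μ
  have hk : (0 : ℝ) < Module.finrank ℝ V := by exact_mod_cast Module.finrank_pos
  have hd : (0 : ℝ) < d := hk.trans_le (by exact_mod_cast by simpa using Submodule.finrank_le V)
  set k := Module.finrank ℝ V
  have hs : 0 < t * k / d := by positivity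
  refine ⟨C ^ (t * k / d), ENNReal.rpow_ne_top_of_nonneg hs.le hC, fun E hE => ?_⟩
  have hN : Measurable fun U => volume {y : V | rot d U y ∈ E} := by
    simpa only [add_zero, id_eq] using
      measurable_volume_rot_add_mem V hE measurable_id (measurable_const (a := 0))
  calc ∫⁻ U, volume {y : V | rot d U y ∈ E} ^ t ∂μ
      = ∫⁻ U, (volume {y : V | rot d U y ∈ E} ^ (d / k : ℝ)) ^ (t * k / d) ∂μ := by
        simp only [← ENNReal.rpow_mul, show (d / k : ℝ) * (t * k / d) = t by field_simp]
    _ ≤ (∫⁻ U, volume {y : V | rot d U y ∈ E} ^ (d / k : ℝ) ∂μ) ^ (t * k / d) :=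
        lintegral_rpow_le_rpow_lintegral (hN.pow_const _) hs ((div_le_one hd).2 htd)
    _ ≤ (C * volume E) ^ (t * k / d) := by
        gcongr
        exact hCE E hE
    _ = C ^ (t * k / d) * volume E ^ (t * k / d) := ENNReal.mul_rpow_of_nonneg _ _ hs.le

theorem exists_lintegral_lintegral_kplaneT_indicator_rpow_le (R : ℝ) (ht : 0 < t)
    (htd : t * Module.finrank ℝ V ≤ d) (htρ : t ≤ ρ - 1) :
    ∃ C ≠ ∞, ∀ E : Set (Euc d), MeasurableSet E → E ⊆ Metric.closedBall 0 R →
      ∫⁻ U, (∫⁻ x : Vᗮ, kplaneT d V (E.indicator 1 ∘ rot d U) x ^ ρ) ∂μ ≤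
        C * volume E ^ (1 + t * Module.finrank ℝ V / d) := by
  obtain ⟨C, hC, hslice⟩ := exists_lintegral_rpow_volume_rot_mem_le V μ ht htd
  set s : ℝ := t * Module.finrank ℝ V / d
  have hs : 0 ≤ s := by positivity
  set M := volume (Metric.closedBall (0 : V) (2 * R))
  have hM : M ≠ ∞ := measure_closedBall_lt_top.ne
  have hMC : M ^ (ρ - 1 - t) * C ≠ ∞ :=
    ENNReal.mul_ne_top (ENNReal.rpow_ne_top_of_nonneg (by linarith) hM) hC
  refine ⟨M ^ (ρ - 1 - t) * C, hMC, fun E hE hER => ?_⟩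
  have hinner (z : Euc d) : ∫⁻ U, volume {y : V | rot d U y + z ∈ E} ^ (ρ - 1) ∂μ ≤
      M ^ (ρ - 1 - t) * C * volume E ^ s :=
    calc ∫⁻ U, volume {y : V | rot d U y + z ∈ E} ^ (ρ - 1) ∂μ
        ≤ M ^ (ρ - 1 - t) * ∫⁻ U, volume {y : V | rot d U y + z ∈ E} ^ t ∂μ :=
          lintegral_rpow_le_mul_lintegral_rpow hM
            (fun U => volume_rot_add_mem_le V hE hER U z) ht.le htρ
      _ ≤ M ^ (ρ - 1 - t) * (C * volume ((· + z) ⁻¹' E) ^ s) := by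
          gcongr
          exact hslice _ (hE.preimage (by fun_prop))
      _ = M ^ (ρ - 1 - t) * C * volume E ^ s := by
          rw [measure_preimage_add_right, mul_assoc]
  simp only [lintegral_orthogonal_kplaneT_indicator_rpow V hE (show 1 ≤ ρ by linarith)]
  calc ∫⁻ U, (∫⁻ z in E, volume {y : V | rot d U y + z ∈ E} ^ (ρ - 1)) ∂μ
      = ∫⁻ z in E, (∫⁻ U, volume {y : V | rot d U y + z ∈ E} ^ (ρ - 1) ∂μ) :=
        lintegral_lintegral_swap (Measurable.aemeasurable <|
          (measurable_volume_rot_add_mem V hE measurable_fst measurable_snd).pow_const _)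
    _ ≤ ∫⁻ _ in E, M ^ (ρ - 1 - t) * C * volume E ^ s := lintegral_mono hinner
    _ = M ^ (ρ - 1 - t) * C * volume E ^ (1 + s) := by
        rw [setLIntegral_const, ENNReal.rpow_add_of_nonneg _ _ zero_le_one hs, ENNReal.rpow_one]
        ring

theorem exists_mixedNorm_kplaneT_indicator_le (R : ℝ) (ht : 0 < t)
    (htd : t * Module.finrank ℝ V ≤ d) (htρ : t ≤ ρ - 1) (hρQ : ρ ≤ Q) :
    ∃ C ≠ ∞, ∀ E : Set (Euc d), MeasurableSet E → E ⊆ Metric.closedBall 0 R →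
      mixedNorm μ volume Q ρ
          (fun U (x : Vᗮ) => kplaneT d V (E.indicator 1 ∘ rot d U) x) ≤
        C * volume E ^ (1 / ρ + t * Module.finrank ℝ V / (d * Q)) := by
  obtain ⟨C, hC, hdouble⟩ := exists_lintegral_lintegral_kplaneT_indicator_rpow_le V μ R ht htd htρ
  set M := volume (Metric.closedBall (0 : V) (2 * R))
  have hρ : 1 ≤ ρ := by linarith
  have hQ : 0 < Q := by linarith
  have hQρ : 0 ≤ Q / ρ - 1 := sub_nonneg.2 ((one_le_div (by linarith)).2 hρQ)
  have hM : M ^ (ρ - 1) ≠ ∞ :=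
    ENNReal.rpow_ne_top_of_nonneg (by linarith) measure_closedBall_lt_top.ne
  have hMC := ENNReal.mul_ne_top (ENNReal.rpow_ne_top_of_nonneg hQρ hM) hC
  refine ⟨((M ^ (ρ - 1)) ^ (Q / ρ - 1) * C) ^ (1 / Q),
    ENNReal.rpow_ne_top_of_nonneg (by positivity) hMC, fun E hE hER => ?_⟩
  have hE_fin : volume E ≠ ∞ := ((measure_mono hER).trans_lt measure_closedBall_lt_top).ne
  have hs : 0 ≤ t * Module.finrank ℝ V / d := by positivity
  set s : ℝ := t * Module.finrank ℝ V / d with hs_def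
  have hexp : 1 / ρ + t * Module.finrank ℝ V / (d * Q) = (Q / ρ - 1 + (1 + s)) * (1 / Q) := by
    rw [hs_def]
    field_simp
    ring
  rw [mixedNorm_eq_lintegral, hexp, ENNReal.rpow_mul,
    ← ENNReal.mul_rpow_of_nonneg _ _ (by positivity)]
  refine ENNReal.rpow_le_rpow ?_ (by positivity)
  calc ∫⁻ U, (∫⁻ x : Vᗮ, kplaneT d V (E.indicator 1 ∘ rot d U) x ^ ρ) ^ (Q / ρ) ∂μ
      ≤ (M ^ (ρ - 1) * volume E) ^ (Q / ρ - 1) *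
          ∫⁻ U, (∫⁻ x : Vᗮ, kplaneT d V (E.indicator 1 ∘ rot d U) x ^ ρ) ∂μ := by
        simpa only [ENNReal.rpow_one] using lintegral_rpow_le_mul_lintegral_rpow (μ := μ)
          (ENNReal.mul_ne_top hM hE_fin)
          (lintegral_orthogonal_kplaneT_indicator_rpow_le V hE hER hρ) zero_le_one
          (sub_nonneg.1 hQρ)
    _ ≤ (M ^ (ρ - 1) * volume E) ^ (Q / ρ - 1) * (C * volume E ^ (1 + s)) := by
        gcongr
        exact hdouble E hE hER
    _ = (M ^ (ρ - 1)) ^ (Q / ρ - 1) * C * volume E ^ (Q / ρ - 1 + (1 + s)) := by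
        rw [ENNReal.mul_rpow_of_nonneg _ _ hQρ,
          ENNReal.rpow_add_of_nonneg (Q / ρ - 1) (1 + s) hQρ (by positivity)]
        ring

end RestrictedEstimate

section StrongEstimate

variable {d : ℕ} (V : Submodule ℝ (Euc d)) [Nontrivial V]
  (μ : Measure (Matrix.orthogonalGroup (Fin d) ℝ)) [μ.IsMulLeftInvariant] [IsProbabilityMeasure μ]
  (R : ℝ) {p q r t ρ Q : ℝ}

theorem exists_mixedNorm_kplaneT_le (ht : 0 < t) (htd : t * Module.finrank ℝ V ≤ d)
    (htρ : t ≤ ρ - 1) (hρQ : ρ ≤ Q) (hp : 0 < p)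
    (hpQ : 1 < p * (1 / ρ + t * Module.finrank ℝ V / (d * Q)))
    (hq : 0 < q) (hqQ : q ≤ Q) (hr : 0 < r) (hrρ : r ≤ ρ) :
    ∃ A ≠ ∞, ∀ f : Euc d → ℝ≥0∞, Measurable f → (∀ z ∉ Metric.closedBall 0 R, f z = 0) →
      mixedNorm μ volume q r (fun U (x : Vᗮ) => kplaneT d V (f ∘ rot d U) x) ≤
        A * (∫⁻ z, f z ^ p) ^ (1 / p) := by
  obtain ⟨C, hC, hCE⟩ := exists_mixedNorm_kplaneT_indicator_le V μ R ht htd htρ hρQ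
  obtain ⟨A, hA, hAf⟩ := (isCountablySublinear_mixedNorm_kplaneT V μ (q := Q) (r := ρ)
    (by linarith) (by linarith)).exists_le_mul_rpow_lintegral hp hpQ
    Metric.isClosed_closedBall.measurableSet measure_closedBall_lt_top.ne hC hCE
  set B := Metric.closedBall (0 : Vᗮ) R
  have hB : volume B ≠ ∞ := measure_closedBall_lt_top.ne
  have hexp : 0 ≤ 1 / r - 1 / ρ := sub_nonneg.2 (one_div_le_one_div_of_le hr hrρ)
  refine ⟨volume B ^ (1 / r - 1 / ρ) * A,
    ENNReal.mul_ne_top (ENNReal.rpow_ne_top_of_nonneg hexp hB) hA, fun f hf hfR => ?_⟩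
  have hT : Measurable (Function.uncurry
      fun U (x : Vᗮ) => kplaneT d V (f ∘ rot d U) x) :=
    (measurable_kplaneT_comp_rot V hf).comp (f := Prod.map id Subtype.val) (by fun_prop)
  have hT0 (U : Matrix.orthogonalGroup (Fin d) ℝ) (x : Vᗮ) (hx : x ∉ B) :
      kplaneT d V (f ∘ rot d U) x = 0 := by
    refine kplaneT_eq_zero V (R := R) (fun z hz => hfR _ ?_) x.2 ?_
    · simpa using hz
    · simpa [B] using hx
  calc mixedNorm μ volume q r (fun U (x : Vᗮ) => kplaneT d V (f ∘ rot d U) x)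
      ≤ volume B ^ (1 / r - 1 / ρ) *
          mixedNorm μ volume Q ρ (fun U (x : Vᗮ) => kplaneT d V (f ∘ rot d U) x) :=
        mixedNorm_le_mul_mixedNorm hq hr hqQ hrρ hB hT hT0
    _ ≤ volume B ^ (1 / r - 1 / ρ) * A * (∫⁻ z, f z ^ p) ^ (1 / p) := by
        rw [mul_assoc]
        gcongr
        exact hAf f hf hfR

end StrongEstimate

theorem finrank_M₀ {d k : ℕ} (hkd : k ≤ d) : Module.finrank ℝ (M₀ d k) = k := by
  have hM₀ : M₀ d k = Submodule.span ℝ (Set.range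
      (EuclideanSpace.basisFun (Fin d) ℝ ∘ Fin.castLE hkd)) := by
    refine congrArg (Submodule.span ℝ) (Set.ext fun x => ⟨?_, ?_⟩)
    · rintro ⟨i, hi, rfl⟩
      exact ⟨⟨i, hi⟩, EuclideanSpace.basisFun_apply _ _ _⟩
    · rintro ⟨i, rfl⟩
      exact ⟨Fin.castLE hkd i, i.2, EuclideanSpace.basisFun_apply _ _ _⟩
  rw [hM₀, finrank_span_eq_card, Fintype.card_fin]
  exact (EuclideanSpace.basisFun (Fin d) ℝ).orthonormal.linearIndependent.comp _
    (Fin.castLE_injective hkd)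

-- After clearing denominators this is `(d - k) (3/2 + 5k/4 - k²) < 7/4 (k² - k/4)`, whose left
-- side is nonpositive exactly from `k = 2` on.
theorem one_lt_mul_exponent {d k : ℝ} (hk : 2 ≤ k) (hkd : 2 * k - 1 / 4 < d) :
    1 < d / (k + 3 / 4) *
      (1 / ((d - k) / (k - 1 / 4)) + (d - 2 * k + 1 / 4) / (d * (d - k + 7 / 4))) := by
  have hd : 0 < d := by linarith
  have hD : 0 < d - k := by linarith
  have hQ : 0 < d - k + 7 / 4 := by linarith
  have hk' : 0 < k - 1 / 4 := by linarith
  have hkey : (d - k) * (3 / 2 + 5 / 4 * k - k ^ 2) < 7 / 4 * (k ^ 2 - k / 4) := by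
    have hcoeff : 3 / 2 + 5 / 4 * k - k ^ 2 ≤ 0 := by nlinarith
    nlinarith [mul_nonneg hD.le (neg_nonneg.2 hcoeff)]
  have hgap : d / (k + 3 / 4) *
      (1 / ((d - k) / (k - 1 / 4)) + (d - 2 * k + 1 / 4) / (d * (d - k + 7 / 4))) - 1 =
      (7 / 4 * (k ^ 2 - k / 4) - (d - k) * (3 / 2 + 5 / 4 * k - k ^ 2)) /
        ((k + 3 / 4) * (d - k) * (d - k + 7 / 4)) := by
    field_simp
    ring
  exact sub_pos.1 (hgap ▸ div_pos (sub_pos.2 hkey) (by positivity))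

theorem exists_mixedNorm_kplaneT_M₀_le {d k : ℕ} (hk : 2 ≤ k) (hkd : 2 * (k : ℝ) - 1 / 4 < d)
    (μ : Measure (Matrix.orthogonalGroup (Fin d) ℝ)) [μ.IsMulLeftInvariant]
    [IsProbabilityMeasure μ] (R : ℝ) {q r : ℝ} (hq : 0 < q) (hqQ : q ≤ d - k + 7 / 4)
    (hr : 0 < r) (hrρ : r ≤ (d - k) / (k - 1 / 4)) :
    ∃ A ≠ ∞, ∀ f : Euc d → ℝ≥0∞, Measurable f → (∀ z ∉ Metric.closedBall 0 R, f z = 0) →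
      mixedNorm μ volume q r
          (fun U (x : (M₀ d k)ᗮ) => kplaneT d (M₀ d k) (f ∘ rot d U) x) ≤
        A * (∫⁻ z, f z ^ ((d : ℝ) / (k + 3 / 4))) ^ (1 / ((d : ℝ) / (k + 3 / 4))) := by
  have hk' : (2 : ℝ) ≤ k := by exact_mod_cast hk
  have hfin : Module.finrank ℝ (M₀ d k) = k :=
    finrank_M₀ (by exact_mod_cast (by linarith : (k : ℝ) ≤ d))
  have : Nontrivial (M₀ d k) := Module.nontrivial_of_finrank_pos (R := ℝ) (by omega)
  have htk : ((d : ℝ) - 2 * k + 1 / 4) / k * k = d - 2 * k + 1 / 4 :=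
    div_mul_cancel₀ _ (by positivity)
  have hd : (0 : ℝ) < d := by linarith
  have hp : 0 < (d : ℝ) / (k + 3 / 4) := by positivity
  have ht : 0 < ((d : ℝ) - 2 * k + 1 / 4) / k := div_pos (by linarith) (by linarith)
  have htρ : ((d : ℝ) - 2 * k + 1 / 4) / k ≤ (d - k) / (k - 1 / 4) - 1 := by
    rw [div_sub_one (by linarith), show (d : ℝ) - k - (k - 1 / 4) = d - 2 * k + 1 / 4 by ring]
    exact div_le_div_of_nonneg_left (by linarith) (by linarith) (by linarith)
  have hρQ : ((d : ℝ) - k) / (k - 1 / 4) ≤ d - k + 7 / 4 :=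
    (div_le_self (by linarith) (by linarith)).trans (by linarith)
  refine exists_mixedNorm_kplaneT_le (M₀ d k) μ R ht ?_ htρ hρQ hp ?_ hq hqQ hr hrρ
  · rw [hfin, htk]
    linarith
  · rw [hfin, htk]
    exact one_lt_mul_exponent hk' hkd

end KPlane

open KPlane in
theorem statement2_general (d k : ℕ) (hk : 2 ≤ k) (p q r : ℝ)
    (hp : p = (d : ℝ) / ((k : ℝ) + 3 / 4))
    (hq1 : 0 < q) (hq2 : q < (4 * ((d : ℝ) - ((k : ℝ) - 1)) + 3) / 4)
    (hr1 : 1 ≤ r) (hr2 : 1 + ((d : ℝ) - (k : ℝ)) / r > (d : ℝ) / p)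
    (μ : Measure (Matrix.orthogonalGroup (Fin d) ℝ)) [μ.IsMulLeftInvariant]
    [IsProbabilityMeasure μ] (R : ℝ) :
    ∃ A : ℝ, 0 < A ∧ ∀ f : Euc d → ℝ≥0∞, Measurable f →
      (∀ z, z ∉ Metric.closedBall (0 : Euc d) R → f z = 0) →
      (∫⁻ U, (∫⁻ x : ↥((planeOf d k U)ᗮ),
          (kplaneT d (planeOf d k U) f (x : Euc d)) ^ r) ^ (q / r) ∂μ) ^ (1 / q)
        ≤ ENNReal.ofReal A * (∫⁻ z, f z ^ p) ^ (1 / p) := by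
  subst hp
  have hk' : (2 : ℝ) ≤ k := by exact_mod_cast hk
  have hd : (d : ℝ) ≠ 0 := by linarith
  rw [div_div_cancel₀ hd] at hr2
  have hrD : (k - 1 / 4) * r < (d : ℝ) - k := by
    rw [← lt_div_iff₀ (by linarith)]
    linarith
  have hkd : 2 * (k : ℝ) - 1 / 4 < d := by nlinarith
  have hrρ : r ≤ ((d : ℝ) - k) / (k - 1 / 4) := by
    rw [le_div_iff₀ (by linarith)]
    linarith
  obtain ⟨A, hA, hAf⟩ :=
    exists_mixedNorm_kplaneT_M₀_le hk hkd μ R hq1 (by linarith) (by linarith) hrρ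
  refine ⟨A.toReal + 1, by positivity, fun f hf hfR => ?_⟩
  have hA' : A ≤ ENNReal.ofReal (A.toReal + 1) :=
    (ENNReal.le_ofReal_iff_toReal_le hA (by positivity)).2 (by linarith)
  rw [← mixedNorm_kplaneT_comp_rot]
  exact (hAf f hf hfR).trans (mul_le_mul_left hA' _)

/-- Corollary (k-plane estimate): for `k ≥ 2`, `d ≥ 5 + k`, `p = d/(k + 3/4)`,
`1 + (d-k)/r > d/p`, `q < (4(d-(k-1))+3)/4`, the mixed-norm `k`-plane transform
bound holds for functions supported on a ball.  The rotation invariant probability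
measure `γ` on `G(d,k)` is realized as the pushforward, under `A ↦ A(M₀)`, of the
normalized Haar measure `μ` on `O(d)` (i.e. the unique left-invariant Borel
probability measure on `O(d)`); the `γ`-integral over `G(d,k)` is thus written as
a `μ`-integral over `O(d)`. -/
theorem statement2 (d k : ℕ) (hk : 2 ≤ k) (hd : 5 + k ≤ d) (p q r : ℝ)
    (hp : p = (d:ℝ) / ((k:ℝ) + 3 / 4))
    (hq1 : 1 ≤ q) (hq2 : q < (4 * ((d:ℝ) - ((k:ℝ) - 1)) + 3) / 4)
    (hr1 : 1 ≤ r) (hr2 : 1 + ((d:ℝ) - (k:ℝ)) / r > (d:ℝ) / p)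
    (μ : Measure (Matrix.orthogonalGroup (Fin d) ℝ))
    (hμ1 : μ.IsMulLeftInvariant) (hμ2 : IsProbabilityMeasure μ)
    (R : ℝ) (hR : 0 < R) :
    ∃ A : ℝ, 0 < A ∧ ∀ f : Euc d → ℝ≥0∞, Measurable f →
      (∀ z, z ∉ Metric.closedBall (0 : Euc d) R → f z = 0) →
      (∫⁻ U, (∫⁻ x : ↥((planeOf d k U)ᗮ),
          (kplaneT d (planeOf d k U) f (x : Euc d)) ^ r) ^ (q / r) ∂μ) ^ (1 / q)
        ≤ ENNReal.ofReal A * (∫⁻ z, f z ^ p) ^ (1 / p) :=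
  statement2_general d k hk p q r hp (by linarith) hq2 hr1 hr2 μ R

end
end
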